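/- arXiv:2212.08644 — 4 statements merged into one kernel-verified Lean document; each statement's English description precedes it below -/
import Mathlib

section
/- Let (A, I) be a Henselian pair and let B be an A-algebra such that (B, I·B) is a Henselian pair. Then the following are equivalent: (i) B is hfp over A with respect to I, the map A → B is h-formally smooth, and B is flat as an A-module; (ii) B is h-smooth over A, i.e. there exist a smooth A-algebra R and an A-algebra homomorphism R → B exhibiting B as a Henselization of the pair (R, I·R). -/
universe u

/-- A ring homomorphism `ρ : R →+* H` exhibits `H` as a Henselization of the pair `(R, K)`:
`(H, K·H)` is a Henselian pair, and every map from `(R, K)` to a Henselian pair factors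
uniquely through `ρ`. -/
def IsHenselization {R H : Type u} [CommRing R] [CommRing H]
    (K : Ideal R) (ρ : R →+* H) : Prop :=
  HenselianRing H (K.map ρ) ∧
    ∀ (C : Type u) [CommRing C] (J : Ideal C), HenselianRing C J →
      ∀ f : R →+* C, K.map f ≤ J → ∃! g : H →+* C, g.comp ρ = f

/-- `φ : A →+* B` is Henselian finitely presented (hfp) with respect to `I`:
`B` is a Henselization of `(R, I·R)` for some finitely presented `A`-algebra `R`. -/
def IsHfp {A B : Type u} [CommRing A] [CommRing B] (φ : A →+* B) (I : Ideal A) : Prop :=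
  ∃ (R : Type u) (_ : CommRing R) (ψ : A →+* R) (ρ : R →+* B),
    ψ.FinitePresentation ∧ ρ.comp ψ = φ ∧ IsHenselization (I.map ψ) ρ

/-- `φ : A →+* B` is h-formally étale with respect to `I`. -/
def IsHFormallyEtale {A B : Type u} [CommRing A] [CommRing B] (φ : A →+* B) (I : Ideal A) :
    Prop :=
  ∀ (E C : Type u) [CommRing E] [CommRing C] (e : A →+* E) (c : A →+* C)
    (p : E →+* C) (u : B →+* C),
    p.comp e = c → u.comp φ = c →
    (∃ N : ℕ, 1 ≤ N ∧ Ideal.map e (I ^ N) = ⊥ ∧ Ideal.map c (I ^ N) = ⊥) →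
    Function.Surjective p →
    (∃ M : ℕ, 1 ≤ M ∧ RingHom.ker p ^ M = ⊥) →
    ∃! v : B →+* E, v.comp φ = e ∧ p.comp v = u

/-- `φ : A →+* B` is h-formally smooth with respect to `I`. -/
def IsHFormallySmooth {A B : Type u} [CommRing A] [CommRing B] (φ : A →+* B) (I : Ideal A) :
    Prop :=
  ∀ (E C : Type u) [CommRing E] [CommRing C] (e : A →+* E) (c : A →+* C)
    (p : E →+* C) (u : B →+* C),
    p.comp e = c → u.comp φ = c →
    (∃ N : ℕ, 1 ≤ N ∧ Ideal.map e (I ^ N) = ⊥ ∧ Ideal.map c (I ^ N) = ⊥) →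
    Function.Surjective p →
    (∃ M : ℕ, 1 ≤ M ∧ RingHom.ker p ^ M = ⊥) →
    ∃ v : B →+* E, v.comp φ = e ∧ p.comp v = u

/-- `φ : A →+* B` is h-étale with respect to `I`: `B` is a Henselization of `(R, I·R)`
for some étale `A`-algebra `R`. -/
def IsHEtale {A B : Type u} [CommRing A] [CommRing B] (φ : A →+* B) (I : Ideal A) : Prop :=
  ∃ (R : Type u) (_ : CommRing R) (_ : Algebra A R) (ρ : R →+* B),
    Algebra.Etale A R ∧ ρ.comp (algebraMap A R) = φ ∧
      IsHenselization (I.map (algebraMap A R)) ρ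

/-- `φ : A →+* B` is h-smooth with respect to `I`: `B` is a Henselization of `(R, I·R)`
for some smooth `A`-algebra `R`. -/
def IsHSmooth {A B : Type u} [CommRing A] [CommRing B] (φ : A →+* B) (I : Ideal A) : Prop :=
  ∃ (R : Type u) (_ : CommRing R) (_ : Algebra A R) (ρ : R →+* B),
    Algebra.Smooth A R ∧ ρ.comp (algebraMap A R) = φ ∧
      IsHenselization (I.map (algebraMap A R)) ρ

/-- A ring homomorphism is flat if it makes the target into a flat module over the source. -/
def RingHomFlat {A C : Type u} [CommRing A] [CommRing C] (f : A →+* C) : Prop :=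
  letI := f.toAlgebra
  Module.Flat A C

/-- A ring homomorphism is smooth if it makes the target into a smooth algebra over the
source (smooth = formally smooth + finitely presented). -/
def RingHomSmooth {A C : Type u} [CommRing A] [CommRing C] (f : A →+* C) : Prop :=
  letI := f.toAlgebra
  Algebra.Smooth A C

/-- A ring homomorphism is étale if it makes the target into an étale algebra over the
source (étale = formally étale + finitely presented). -/
def RingHomEtale {A C : Type u} [CommRing A] [CommRing C] (f : A →+* C) : Prop :=
  letI := f.toAlgebra
  Algebra.Etale A C

/-!
Let `B` be a Henselization of `(R, K)`. The filtered colimit `H` of all étale `R`-algebras over `B`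
is flat over `R`, and it is Henselian along `K·H` because simple roots live in standard étale
algebras. The universal property makes `B` a retract of `H`, so `B` is flat over `R`. A ring is
Henselian along any nilpotent ideal, so lifting problems over nilpotent thickenings can be moved
between `R` and `B`; this makes h-smooth maps h-formally smooth.

Conversely, let `R` be finitely presented over `A`, `K = I·R`, and let `B` be flat and h-formally
smooth over `A`. Every prime `q ⊇ K` is the contraction of a prime `Q` of `B`, so flatness over `A`
descends along `R_q → B_Q`, while lifting through `B` shows that the closed fibre of `R_q` is
formally smooth. Hence `R` is smooth over `A` at `q`. The smooth locus is open and contains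
`V(K)`, so it contains `D(j)` for some `j ∈ 1 + K`, and inverting `j` does not change the
Henselization.
-/

open CategoryTheory Polynomial TensorProduct

section HenselianPairs

lemma isUnit_of_sub_mem_of_le_jacobson {A : Type*} [CommRing A] {I : Ideal A}
    (hI : I ≤ Ideal.jacobson ⊥) {a b : A} (ha : IsUnit a) (hba : b - a ∈ I) : IsUnit b := by
  have := isLocalHom_of_le_jacobson_bot I hI
  rw [← isUnit_map_iff (Ideal.Quotient.mk I), Ideal.Quotient.eq.mpr hba]
  exact ha.map _

lemma henselianRing_of_isNilpotent {C : Type*} [CommRing C] {J : Ideal C} (hJ : IsNilpotent J) :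
    HenselianRing C J := by
  obtain ⟨N, hN⟩ := hJ
  have hbot {n : ℕ} (hn : N ≤ n) : J ^ n = ⊥ :=
    le_bot_iff.mp ((Ideal.pow_le_pow_right hn).trans hN.le)
  have : IsAdicComplete J C :=
    { haus' := fun x hx ↦ by simpa [hbot le_rfl, SModEq.bot] using hx N
      prec' := fun f hf ↦ ⟨f N, fun n ↦ by
        rcases le_total n N with h | h
        · exact hf h
        · have := hf h
          simp only [hbot le_rfl, hbot h, smul_eq_mul, Ideal.bot_mul, SModEq.bot] at this ⊢
          exact this.symm⟩ }
  infer_instance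

lemma henselianRing_of_isLocalHom {H B : Type*} [CommRing H] [CommRing B] (π : H →+* B)
    [IsLocalHom π] {K : Ideal H} {J : Ideal B} [HenselianRing B J] (hKJ : K.map π ≤ J)
    (lift_root : ∀ f : H[X], f.Monic → ∀ b : B, (f.map π).IsRoot b →
      IsUnit ((f.map π).derivative.eval b) → ∃ x, f.IsRoot x ∧ π x = b) :
    HenselianRing H K := by
  have hπ {x : H} (hx : x ∈ K) : π x ∈ J := hKJ (Ideal.mem_map_of_mem π hx)
  have isUnit_of_sub_mem {x : H} {u : B} (hu : IsUnit u) (h : π x - u ∈ J) : IsUnit x :=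
    isUnit_of_map_unit π x (isUnit_of_sub_mem_of_le_jacobson HenselianRing.jac hu h)
  have hK : K ≤ Ideal.jacobson ⊥ := fun x hx ↦ Ideal.mem_jacobson_bot.mpr fun y ↦
    isUnit_of_sub_mem isUnit_one (by simpa using J.mul_mem_right (π y) (hπ hx))
  refine ⟨hK, fun f hf a hfa hf'a ↦ ?_⟩
  have := isLocalHom_of_le_jacobson_bot K hK
  have hu : IsUnit (π (f.derivative.eval a)) := (isUnit_of_map_unit _ _ hf'a).map π
  obtain ⟨b, hb, hba⟩ := HenselianRing.is_henselian (I := J) (f.map π) (hf.map π) (π a)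
    (by simpa [eval_map_apply] using hπ hfa)
    (by simpa [derivative_map, eval_map_apply] using hu.map (Ideal.Quotient.mk J))
  have hb' : IsUnit ((f.map π).derivative.eval b) := by
    refine isUnit_of_sub_mem_of_le_jacobson HenselianRing.jac hu (Ideal.mem_of_dvd J ?_ hba)
    simpa only [derivative_map, eval_map_apply] using
      sub_dvd_eval_sub b (π a) (f.derivative.map π)
  obtain ⟨x, hx, rfl⟩ := lift_root f hf b hb hb'
  refine ⟨x, hx, ?_⟩
  -- Taylor expansion at `a` exhibits `f a` as a unit multiple of `x - a`.
  obtain ⟨k, hk⟩ := f.binomExpansion a (x - a)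
  have hunit : IsUnit (f.derivative.eval a + k * (x - a)) :=
    isUnit_of_sub_mem hu (by simpa using J.mul_mem_left (π k) hba)
  rw [add_sub_cancel, hx.eq_zero] at hk
  rw [← K.mul_unit_mem_iff_mem hunit]
  convert K.neg_mem hfa using 1
  linear_combination -hk

end HenselianPairs

section Coequalizers

variable {R S S' : Type*} [CommRing R] [CommRing S] [CommRing S'] [Algebra R S] [Algebra R S']

/-- The ideal of `S'` whose quotient is the coequalizer of `f, g : S →ₐ[R] S'`. -/
def coeqIdeal (f g : S →ₐ[R] S') : Ideal S' :=
  Ideal.span (Set.range fun x ↦ f x - g x)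

lemma forall_mem_coeqIdeal_map_eq_zero_iff {T : Type*} [CommRing T] [Algebra R T]
    {f g : S →ₐ[R] S'} {h : S' →ₐ[R] T} :
    (∀ x ∈ coeqIdeal f g, h x = 0) ↔ h.comp f = h.comp g := by
  change coeqIdeal f g ≤ RingHom.ker h ↔ _
  simp [coeqIdeal, Ideal.span_le, Set.range_subset_iff, sub_eq_zero, DFunLike.ext_iff]

lemma mkₐ_coeqIdeal_comp (f g : S →ₐ[R] S') :
    (Ideal.Quotient.mkₐ R (coeqIdeal f g)).comp f = (Ideal.Quotient.mkₐ R (coeqIdeal f g)).comp g :=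
  forall_mem_coeqIdeal_map_eq_zero_iff.mp fun _ ↦ Ideal.Quotient.eq_zero_iff_mem.mpr

lemma coeqIdeal_fg [Algebra.FiniteType R S] (f g : S →ₐ[R] S') : (coeqIdeal f g).FG := by
  classical
  obtain ⟨s, hs⟩ := Algebra.FiniteType.out (R := R) (A := S)
  let d (x : S) : S' := f x - g x
  refine ⟨s.image d, le_antisymm (Ideal.span_mono (by simp [d])) fun y hy ↦ ?_⟩
  refine Ideal.Quotient.eq_zero_iff_mem.mp
    (forall_mem_coeqIdeal_map_eq_zero_iff (h := Ideal.Quotient.mkₐ R (Ideal.span _)).mpr ?_ y hy)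
  refine AlgHom.ext_of_adjoin_eq_top hs fun x hx ↦ Ideal.Quotient.eq.mpr ?_
  exact Ideal.subset_span (Finset.mem_coe.mpr (Finset.mem_image_of_mem d hx))

lemma formallySmooth_quotient_coeqIdeal [Algebra.FormallyUnramified R S]
    [Algebra.FormallySmooth R S'] (f g : S →ₐ[R] S') :
    Algebra.FormallySmooth R (S' ⧸ coeqIdeal f g) := by
  refine .of_comp_surjective fun E _ _ J hJ u ↦ ?_
  let q := Ideal.Quotient.mkₐ R (coeqIdeal f g)
  obtain ⟨v, hv⟩ := Algebra.FormallySmooth.exists_lift J ⟨2, hJ⟩ (u.comp q)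
  have hvfg : v.comp f = v.comp g := by
    refine Algebra.FormallyUnramified.lift_unique J ⟨2, hJ⟩ _ _ ?_
    rw [← AlgHom.comp_assoc, ← AlgHom.comp_assoc, hv, AlgHom.comp_assoc, mkₐ_coeqIdeal_comp,
      AlgHom.comp_assoc]
  refine ⟨Ideal.Quotient.liftₐ _ v (forall_mem_coeqIdeal_map_eq_zero_iff.mpr hvfg), ?_⟩
  refine Ideal.Quotient.algHom_ext _ ?_
  rw [AlgHom.comp_assoc, Ideal.Quotient.liftₐ_comp, hv]

lemma etale_quotient_coeqIdeal [Algebra.Etale R S] [Algebra.Etale R S'] (f g : S →ₐ[R] S') :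
    Algebra.Etale R (S' ⧸ coeqIdeal f g) := by
  have : Algebra.FormallyUnramified R (S' ⧸ coeqIdeal f g) :=
    .of_surjective (Ideal.Quotient.mkₐ R _) (Ideal.Quotient.mkₐ_surjective R _)
  have := formallySmooth_quotient_coeqIdeal f g
  exact ⟨.of_formallyUnramified_and_formallySmooth, .quotient (coeqIdeal_fg f g)⟩

end Coequalizers

/-- An étale `R`-algebra with an `R`-algebra map to `B`. The algebra is given by generators and
relations, so that these objects form a small category. -/
structure EtaleOver (R B : Type u) [CommRing R] [CommRing B] [Algebra R B] : Type u where
  /-- The number of generators of the algebra. -/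
  numGens : ℕ
  /-- The ideal of relations between the generators. -/
  relations : Ideal (MvPolynomial (Fin numGens) R)
  etale : Algebra.Etale R (MvPolynomial (Fin numGens) R ⧸ relations)
  /-- The structure map to `B`. -/
  toBase : (MvPolynomial (Fin numGens) R ⧸ relations) →ₐ[R] B

namespace EtaleOver

section Category

variable {R B : Type u} [CommRing R] [CommRing B] [Algebra R B]

/-- The étale `R`-algebra underlying an object of `EtaleOver R B`. -/
abbrev Ring (X : EtaleOver R B) : Type u := MvPolynomial (Fin X.numGens) R ⧸ X.relations

instance (X : EtaleOver R B) : Algebra.Etale R X.Ring := X.etale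

noncomputable instance : SmallCategory (EtaleOver R B) where
  Hom X Y := {f : X.Ring →ₐ[R] Y.Ring // Y.toBase.comp f = X.toBase}
  id X := ⟨AlgHom.id R _, X.toBase.comp_id⟩
  comp f g := ⟨g.1.comp f.1, by rw [← AlgHom.comp_assoc, g.2, f.2]⟩

/-- The algebra map underlying a morphism of `EtaleOver R B`. -/
def map {X Y : EtaleOver R B} (f : X ⟶ Y) : X.Ring →ₐ[R] Y.Ring := f.1

lemma toBase_comp_map {X Y : EtaleOver R B} (f : X ⟶ Y) : Y.toBase.comp (map f) = X.toBase := f.2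

lemma exists_algEquiv (S : Type u) [CommRing S] [Algebra R S] [Algebra.Etale R S]
    (φ : S →ₐ[R] B) :
    ∃ (X : EtaleOver R B) (e : S ≃ₐ[R] X.Ring), X.toBase.comp (e : S →ₐ[R] X.Ring) = φ := by
  obtain ⟨n, I, e, -⟩ :=
    Algebra.FinitePresentation.iff.mp (inferInstance : Algebra.FinitePresentation R S)
  refine ⟨⟨n, I, .of_equiv e.symm, φ.comp (e : _ →ₐ[R] S)⟩, e.symm, ?_⟩
  ext x
  simp

lemma exists_hom (X : EtaleOver R B) {S : Type u} [CommRing S] [Algebra R S] [Algebra.Etale R S]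
    (i : X.Ring →ₐ[R] S) (φ : S →ₐ[R] B) (h : φ.comp i = X.toBase) :
    ∃ (Y : EtaleOver R B) (e : S ≃ₐ[R] Y.Ring) (f : X ⟶ Y),
      Y.toBase.comp (e : S →ₐ[R] Y.Ring) = φ ∧ map f = (e : S →ₐ[R] Y.Ring).comp i := by
  obtain ⟨Y, e, he⟩ := exists_algEquiv S φ
  exact ⟨Y, e, ⟨(e : S →ₐ[R] Y.Ring).comp i, by rw [← AlgHom.comp_assoc, he, h]⟩, he, rfl⟩

instance : Nonempty (EtaleOver R B) :=
  ⟨(exists_algEquiv R (Algebra.ofId R B)).choose⟩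

instance : IsFiltered (EtaleOver R B) where
  cocone_objs X Y := by
    have : Algebra.Etale R (X.Ring ⊗[R] Y.Ring) := .comp R X.Ring _
    obtain ⟨Z, e, he⟩ := exists_algEquiv (X.Ring ⊗[R] Y.Ring)
      (Algebra.TensorProduct.lift X.toBase Y.toBase fun _ _ ↦ .all _ _)
    refine ⟨Z, ⟨(e : X.Ring ⊗[R] Y.Ring →ₐ[R] Z.Ring).comp Algebra.TensorProduct.includeLeft, ?_⟩,
      ⟨(e : X.Ring ⊗[R] Y.Ring →ₐ[R] Z.Ring).comp Algebra.TensorProduct.includeRight, ?_⟩, trivial⟩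
    · rw [← AlgHom.comp_assoc, he, Algebra.TensorProduct.lift_comp_includeLeft]
    · rw [← AlgHom.comp_assoc, he]
      exact Algebra.TensorProduct.lift_comp_includeRight _ _ fun _ _ ↦ .all _ _
  cocone_maps X Y f g := by
    have := etale_quotient_coeqIdeal (map f) (map g)
    obtain ⟨Z, e, k, -, hk⟩ := Y.exists_hom (Ideal.Quotient.mkₐ R (coeqIdeal (map f) (map g)))
      (Ideal.Quotient.liftₐ _ Y.toBase
        (forall_mem_coeqIdeal_map_eq_zero_iff.mpr (by simp only [toBase_comp_map])))
      (Ideal.Quotient.liftₐ_comp _ _ _)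
    refine ⟨Z, k, Subtype.ext ?_⟩
    change (map k).comp (map f) = (map k).comp (map g)
    rw [hk, AlgHom.comp_assoc, mkₐ_coeqIdeal_comp, AlgHom.comp_assoc]

end Category

section Colimit

variable (R B : Type u) [CommRing R] [CommRing B] [Algebra R B]

/-- The diagram of all étale `R`-algebras over `B`. -/
noncomputable def diagram : EtaleOver R B ⥤ CommRingCat.{u} where
  obj X := CommRingCat.of X.Ring
  map f := CommRingCat.ofHom (map f : _ →+* _)

/-- The cocone with apex `B` given by the structure maps. -/
noncomputable def baseCocone : Limits.Cocone (diagram R B) where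
  pt := CommRingCat.of B
  ι :=
    { app X := CommRingCat.ofHom (X.toBase : _ →+* B)
      naturality _ _ f :=
        CommRingCat.hom_ext (RingHom.ext fun x ↦ DFunLike.congr_fun (toBase_comp_map f) x) }

/-- The filtered colimit of all étale `R`-algebras over `B`. If `B` is a Henselization of a pair
`(R, K)`, then `B` is a retract of this ring. -/
def Colimit : Type u := (Limits.colimit (diagram R B) : CommRingCat.{u})

namespace Colimit

noncomputable instance : CommRing (Colimit R B) :=
  inferInstanceAs (CommRing (Limits.colimit (diagram R B) : CommRingCat.{u}))

/-- The coprojection to `Colimit R B` as a ring homomorphism. It is used to define the `R`-algebra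
structure on `Colimit R B`, for which it becomes the algebra homomorphism `Colimit.ι`. -/
noncomputable def ιRingHom {R B : Type u} [CommRing R] [CommRing B] [Algebra R B]
    (X : EtaleOver R B) : X.Ring →+* Colimit R B :=
  (Limits.colimit.ι (diagram R B) X).hom

noncomputable instance : Algebra R (Colimit R B) :=
  ((ιRingHom (Classical.arbitrary (EtaleOver R B))).comp (algebraMap R _)).toAlgebra

variable {R B}

lemma ιRingHom_map {X Y : EtaleOver R B} (f : X ⟶ Y) (x : X.Ring) :
    ιRingHom Y (map f x) = ιRingHom X x :=
  ConcreteCategory.congr_hom (Limits.colimit.w (diagram R B) f) x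

lemma ιRingHom_algebraMap (X : EtaleOver R B) (r : R) :
    ιRingHom X (algebraMap R X.Ring r) = algebraMap R (Colimit R B) r := by
  let Y := Classical.arbitrary (EtaleOver R B)
  change _ = ιRingHom Y (algebraMap R _ r)
  rw [← ιRingHom_map (IsFiltered.leftToMax X Y), AlgHom.commutes,
    ← ιRingHom_map (IsFiltered.rightToMax X Y), AlgHom.commutes]

/-- The coprojections to the colimit. -/
noncomputable def ι (X : EtaleOver R B) : X.Ring →ₐ[R] Colimit R B :=
  { ιRingHom X with commutes' := ιRingHom_algebraMap X }

lemma ι_map {X Y : EtaleOver R B} (f : X ⟶ Y) (x : X.Ring) : ι Y (map f x) = ι X x :=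
  ιRingHom_map f x

lemma exists_ι_eq (h : Colimit R B) : ∃ (X : EtaleOver R B) (x : X.Ring), ι X x = h :=
  Limits.Concrete.colimit_exists_rep (diagram R B) h

lemma exists_map_eq_zero {X : EtaleOver R B} {x : X.Ring} (hx : ι X x = 0) :
    ∃ (Y : EtaleOver R B) (f : X ⟶ Y), map f x = 0 := by
  obtain ⟨Y, f, hf⟩ := ((Limits.colimit.isColimit (diagram R B)).eq_iff' x (0 : X.Ring)).mp
    (hx.trans (map_zero (ι X)).symm)
  exact ⟨Y, f, hf.trans (map_zero (map f))⟩

variable (R B) in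
/-- The map from the colimit to `B` induced by the structure maps. -/
noncomputable def toBase : Colimit R B →ₐ[R] B :=
  { (Limits.colimit.desc (diagram R B) (baseCocone R B)).hom with
    commutes' r := (ConcreteCategory.congr_hom (Limits.colimit.ι_desc (baseCocone R B) _) _).trans
      ((Classical.arbitrary (EtaleOver R B)).toBase.commutes r) }

lemma toBase_ι (X : EtaleOver R B) (x : X.Ring) : toBase R B (ι X x) = X.toBase x :=
  ConcreteCategory.congr_hom (Limits.colimit.ι_desc (baseCocone R B) X) x

lemma exists_forall_ι_eq {α : Type*} [Finite α] (h : α → Colimit R B) :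
    ∃ (X : EtaleOver R B) (x : α → X.Ring), ∀ a, ι X (x a) = h a := by
  classical
  have := Fintype.ofFinite α
  choose X x hx using fun a ↦ exists_ι_eq (h a)
  obtain ⟨Y, hY⟩ := IsFiltered.sup_objs_exists (Finset.univ.image X)
  have f (a) : X a ⟶ Y := (hY (Finset.mem_image_of_mem X (Finset.mem_univ a))).some
  exact ⟨Y, fun a ↦ map (f a) (x a), fun a ↦ (ι_map _ _).trans (hx a)⟩

lemma exists_monic_map_ι_eq {f : (Colimit R B)[X]} (hf : f.Monic) :
    ∃ (X : EtaleOver R B) (g : X.Ring[X]), g.Monic ∧ g.map (ι X : X.Ring →+* _) = f := by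
  obtain ⟨X, x, hx⟩ := exists_forall_ι_eq fun i : Fin (f.natDegree + 1) ↦ f.coeff i
  have hlifts : f ∈ lifts (ι X : X.Ring →+* _) := by
    refine (lifts_iff_coeff_lifts _).mpr fun n ↦ ?_
    rcases lt_or_ge f.natDegree n with hn | hn
    · exact ⟨0, by rw [map_zero, coeff_eq_zero_of_natDegree_lt hn]⟩
    · exact ⟨x ⟨n, Nat.lt_succ_of_le hn⟩, hx _⟩
  obtain ⟨g, hg, -, hgm⟩ := lifts_and_natDegree_eq_and_monic hlifts hf
  exact ⟨X, g, hgm, hg⟩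

instance flat : Module.Flat R (Colimit R B) := by
  refine .of_forall_isTrivialRelation fun {l r x} hrx ↦ ?_
  obtain ⟨X, y, hy⟩ := exists_forall_ι_eq x
  obtain ⟨Y, f, hf⟩ := exists_map_eq_zero (X := X) (x := ∑ i, r i • y i) (by simpa [hy] using hrx)
  obtain ⟨k, a, z, hz, ha⟩ :=
    Module.Flat.isTrivialRelation_of_sum_smul_eq_zero (f := r) (x := fun i ↦ map f (y i))
      (by simpa using hf)
  refine ⟨k, a, fun j ↦ ι Y (z j), fun i ↦ ?_, ha⟩
  rw [← hy, ← ι_map f]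
  simpa using congrArg (ι Y) (hz i)

lemma exists_extend (X : EtaleOver R B) {S : Type u} [CommRing S] [Algebra X.Ring S]
    [Algebra.Etale X.Ring S] (χ : S →+* B) (hχ : ∀ x, χ (algebraMap X.Ring S x) = X.toBase x) :
    ∃ θ : S →+* Colimit R B,
      (∀ x, θ (algebraMap X.Ring S x) = ι X x) ∧ ∀ y, toBase R B (θ y) = χ y := by
  let _ : Algebra R S := ((algebraMap X.Ring S).comp (algebraMap R X.Ring)).toAlgebra
  have : IsScalarTower R X.Ring S := IsScalarTower.of_algebraMap_eq' (S := X.Ring) rfl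
  have : Algebra.Etale R S := .comp R X.Ring S
  obtain ⟨Y, e, f, he, hf⟩ := X.exists_hom (IsScalarTower.toAlgHom R X.Ring S)
    { χ with commutes' r := (hχ _).trans (X.toBase.commutes r) } (AlgHom.ext hχ)
  refine ⟨(ι Y : Y.Ring →+* _).comp (e : S →+* Y.Ring), fun x ↦ ?_, fun y ↦ ?_⟩
  · exact (congrArg (ι Y) (DFunLike.congr_fun hf x)).symm.trans (ι_map f x)
  · exact (toBase_ι Y (e y)).trans (DFunLike.congr_fun he y)

instance isLocalHom_toBase : IsLocalHom (toBase R B).toRingHom where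
  map_nonunit h hh := by
    obtain ⟨X, x, rfl⟩ := exists_ι_eq h
    replace hh : IsUnit (X.toBase.toRingHom x) := toBase_ι X x ▸ hh
    have : Algebra.Etale X.Ring (Localization.Away x) := .of_isLocalizationAway x
    obtain ⟨θ, hθ, -⟩ := exists_extend X (IsLocalization.Away.lift x hh)
      (IsLocalization.Away.lift_eq (S := Localization.Away x) x hh)
    exact hθ x ▸ (IsLocalization.Away.algebraMap_isUnit x).map θ

lemma exists_isRoot_of_isRoot_map {f : (Colimit R B)[X]} (hf : f.Monic) {b : B}
    (hb : (f.map (toBase R B).toRingHom).IsRoot b)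
    (hb' : IsUnit ((f.map (toBase R B).toRingHom).derivative.eval b)) :
    ∃ x, f.IsRoot x ∧ toBase R B x = b := by
  obtain ⟨X, g, hg, rfl⟩ := exists_monic_map_ι_eq hf
  -- The standard étale algebra `P.Ring` classifies the simple roots of `g`.
  let P : StandardEtalePair X.Ring := ⟨g, hg, g.derivative, 1, 0, 1, by simp⟩
  let _ : Algebra X.Ring B := X.toBase.toRingHom.toAlgebra
  have hmap : (g.map (ι X : X.Ring →+* _)).map (toBase R B).toRingHom =
      g.map (algebraMap X.Ring B) :=
    (Polynomial.map_map _ _ _).trans (congrArg (g.map ·) (RingHom.ext (toBase_ι X)))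
  rw [hmap] at hb hb'
  have hP : P.HasMap b :=
    ⟨by simpa [P, aeval_def, Polynomial.eval_map] using hb,
      by simpa [P, aeval_def, Polynomial.eval_map, derivative_map] using hb'⟩
  obtain ⟨θ, hθ, hθb⟩ := exists_extend X (P.lift b hP).toRingHom (P.lift b hP).commutes
  refine ⟨θ P.X, ?_, (hθb P.X).trans (P.lift_X b hP)⟩
  have hroot := congrArg θ P.hasMap_X.1
  rw [map_zero, aeval_def, hom_eval₂, RingHom.ext (f := θ.comp _) hθ] at hroot
  exact (Polynomial.eval_map _ _).trans hroot

lemma henselianRing (K : Ideal R) [HenselianRing B (K.map (algebraMap R B))] :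
    HenselianRing (Colimit R B) (K.map (algebraMap R (Colimit R B))) := by
  refine henselianRing_of_isLocalHom (toBase R B).toRingHom
    (J := K.map (algebraMap R B)) ?_ fun f hf b ↦ exists_isRoot_of_isRoot_map hf
  rw [Ideal.map_map, AlgHom.toRingHom_eq_coe, AlgHom.comp_algebraMap]

end Colimit

end Colimit

end EtaleOver

namespace IsHenselization

lemma flat {R B : Type u} [CommRing R] [CommRing B] [Algebra R B] {K : Ideal R}
    (h : IsHenselization K (algebraMap R B)) : Module.Flat R B := by
  have := h.1
  let H := EtaleOver.Colimit R B
  obtain ⟨s, hs, -⟩ := h.2 H (K.map (algebraMap R H)) (EtaleOver.Colimit.henselianRing K)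
    (algebraMap R H) le_rfl
  let s' : B →ₐ[R] H := { s with commutes' := DFunLike.congr_fun hs }
  let π : H →ₐ[R] B := EtaleOver.Colimit.toBase R B
  have hπs : (π.comp s' : B →+* B) = .id B :=
    (h.2 B _ h.1 (algebraMap R B) le_rfl).unique (π.comp s').comp_algebraMap rfl
  exact .of_retract s'.toLinearMap π.toLinearMap
    (LinearMap.ext fun x ↦ DFunLike.congr_fun hπs x)

end IsHenselization

section FlatDescent

lemma flat_of_faithfullyFlat_of_flat (A S T : Type*) [CommRing A] [CommRing S] [CommRing T]
    [Algebra A S] [Algebra A T] [Algebra S T] [IsScalarTower A S T] [Module.FaithfullyFlat S T]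
    [Module.Flat A T] : Module.Flat A S := by
  rw [Module.Flat.iff_lTensor_preserves_injective_linearMap]
  intro N P _ _ _ _ f hf
  let F : S ⊗[A] N →ₗ[S] S ⊗[A] P := TensorProduct.AlgebraTensorModule.lTensor S S f
  suffices Function.Injective (F.lTensor T) from
    (Module.FaithfullyFlat.lTensor_injective_iff_injective S T F).mp this
  refine .of_comp (f := TensorProduct.AlgebraTensorModule.cancelBaseChange A S T T P) ?_
  have hcomm := TensorProduct.AlgebraTensorModule.lTensor_comp_cancelBaseChange A S T (M := T) f
  convert (Module.Flat.lTensor_preserves_injective_linearMap (M := T) f hf).comp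
    (TensorProduct.AlgebraTensorModule.cancelBaseChange A S T T N).injective using 1
  exact congrArg DFunLike.coe hcomm.symm

end FlatDescent

namespace IsHenselization

variable {R H : Type u} [CommRing R] [CommRing H] {K : Ideal R} {ρ : R →+* H}

lemma existsUnique_comp_eq_of_isNilpotent_map (h : IsHenselization K ρ) {C : Type u} [CommRing C]
    (f : R →+* C) (hf : IsNilpotent (K.map f)) : ∃! g : H →+* C, g.comp ρ = f :=
  h.2 C (K.map f) (henselianRing_of_isNilpotent hf) f le_rfl

lemma exists_isPrime_comap_eq (h : IsHenselization K ρ) {q : Ideal R} [q.IsPrime] (hq : K ≤ q) :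
    ∃ Q : Ideal H, Q.IsPrime ∧ Q.comap ρ = q := by
  have hKq : K.map (Ideal.Quotient.mk q) = ⊥ := Ideal.map_mk_eq_bot_of_le hq
  obtain ⟨σ, hσ, -⟩ := h.existsUnique_comp_eq_of_isNilpotent_map (Ideal.Quotient.mk q)
    (hKq ▸ .zero)
  exact ⟨RingHom.ker σ, RingHom.ker_isPrime σ, by rw [RingHom.comap_ker, hσ, Ideal.mk_ker]⟩

lemma away (h : IsHenselization K ρ) {j : R} (hj : j - 1 ∈ K) (R' : Type u) [CommRing R']
    [Algebra R R'] [IsLocalization.Away j R'] :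
    ∃ ρ' : R' →+* H, ρ'.comp (algebraMap R R') = ρ ∧
      IsHenselization (K.map (algebraMap R R')) ρ' := by
  have hunit : IsUnit (ρ j) := isUnit_of_sub_mem_of_le_jacobson h.1.jac isUnit_one
    (by simpa using Ideal.mem_map_of_mem ρ hj)
  have hρ' := IsLocalization.Away.lift_comp (S := R') j hunit
  refine ⟨IsLocalization.Away.lift j hunit, hρ', ?_, fun C _ J hJ f hf ↦ ?_⟩
  · rw [Ideal.map_map, hρ']
    exact h.1
  · obtain ⟨g, hg, hg'⟩ := h.2 C J hJ (f.comp (algebraMap R R')) (by rwa [← Ideal.map_map])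
    refine ⟨g, IsLocalization.ringHom_ext (Submonoid.powers j) ?_, fun g₁ hg₁ ↦ hg' _ ?_⟩
    · rw [RingHom.comp_assoc, hρ', hg]
    · rw [← hg₁, RingHom.comp_assoc, hρ']

end IsHenselization

namespace IsHSmooth

variable {A B : Type u} [CommRing A] [CommRing B] {φ : A →+* B} {I : Ideal A}

lemma isHfp (h : IsHSmooth φ I) : IsHfp φ I := by
  obtain ⟨R, _, _, ρ, _, hρ, hH⟩ := h
  exact ⟨R, inferInstance, algebraMap A R, ρ,
    RingHom.finitePresentation_algebraMap.mpr inferInstance, hρ, hH⟩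

lemma isHFormallySmooth (h : IsHSmooth φ I) : IsHFormallySmooth φ I := by
  obtain ⟨R, _, _, ρ, _, rfl, hH⟩ := h
  intro E C _ _ e c p u hp hu ⟨N, _, hNe, hNc⟩ hsurj ⟨M, _, hM⟩
  algebraize [e, c]
  let p' : E →ₐ[A] C := { p with commutes' := DFunLike.congr_fun hp }
  let uρ : R →ₐ[A] C := { u.comp ρ with commutes' := DFunLike.congr_fun hu }
  have hker : IsNilpotent (RingHom.ker (p' : E →+* C)) := ⟨M, hM⟩
  let w : R →ₐ[A] E := Algebra.FormallySmooth.liftOfSurjective uρ p' hsurj hker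
  have hw : p.comp w = u.comp ρ :=
    RingHom.ext (Algebra.FormallySmooth.liftOfSurjective_apply uρ p' hsurj hker)
  have hE : IsNilpotent ((I.map (algebraMap A R)).map (w : R →+* E)) :=
    ⟨N, by rw [Ideal.map_map, w.comp_algebraMap, ← Ideal.map_pow]; exact hNe⟩
  have hC : IsNilpotent ((I.map (algebraMap A R)).map (u.comp ρ)) :=
    ⟨N, by rw [Ideal.map_map, RingHom.comp_assoc, hu, ← Ideal.map_pow]; exact hNc⟩
  obtain ⟨v, hv, -⟩ := hH.existsUnique_comp_eq_of_isNilpotent_map (w : R →+* E) hE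
  refine ⟨v, ?_, (hH.existsUnique_comp_eq_of_isNilpotent_map _ hC).unique ?_ rfl⟩
  · rw [← RingHom.comp_assoc, hv]
    exact w.comp_algebraMap
  · rw [RingHom.comp_assoc, hv, hw]

lemma flat [Algebra A B] (h : IsHSmooth (algebraMap A B) I) : Module.Flat A B := by
  obtain ⟨R, _, _, ρ, _, hρ, hH⟩ := h
  algebraize [ρ]
  have : IsScalarTower A R B := .of_algebraMap_eq' hρ.symm
  have : Module.Flat R B := IsHenselization.flat hH
  exact Module.Flat.trans A R B

end IsHSmooth

section SmoothAtPrimes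

variable {A R : Type*} [CommRing A] [CommRing R] [Algebra A R]

lemma finitePresentation_localization_algebraMapSubmonoid [Algebra.FinitePresentation A R]
    (M : Submonoid A) : Algebra.FinitePresentation (Localization M)
      (Localization (Algebra.algebraMapSubmonoid R M)) := by
  have : Algebra.IsPushout A R (Localization M) (Localization (Algebra.algebraMapSubmonoid R M)) :=
    Algebra.isPushout_of_isLocalization M _ _ _
  have := this.symm
  exact .equiv (Algebra.IsPushout.equiv A (Localization M) R _)

lemma isSmoothAt_of_formallySmooth_residueField_tensor [Algebra.FinitePresentation A R]
    (p : Ideal A) [p.IsPrime] (q : Ideal R) [q.IsPrime] [q.LiesOver p]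
    [Module.Flat A (Localization.AtPrime q)]
    [Algebra.FormallySmooth p.ResidueField (p.ResidueField ⊗[A] Localization.AtPrime q)] :
    Algebra.IsSmoothAt A q := by
  let Ap := Localization.AtPrime p
  let M := Algebra.algebraMapSubmonoid R p.primeCompl
  let Rp := Localization M
  let Rq := Localization.AtPrime q
  have hM : M ≤ q.primeCompl := by
    rintro _ ⟨x, hx, rfl⟩
    exact mt (Ideal.mem_of_liesOver q p x).mpr hx
  let _ := Localization.AtPrime.algebraOfLiesOver p q
  let _ := IsLocalization.localizationAlgebraOfSubmonoidLe Rp Rq M q.primeCompl hM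
  have : IsScalarTower R Rp Rq :=
    IsLocalization.localization_isScalarTower_of_submonoid_le Rp Rq M q.primeCompl hM
  have : IsLocalization (q.primeCompl.map (algebraMap R Rp)) Rq :=
    IsLocalization.isLocalization_of_submonoid_le Rp Rq M q.primeCompl hM
  have : IsScalarTower Ap Rp Rq := by
    have : IsScalarTower A Rp Rq := .to₁₃₄ _ R _ _
    refine .of_algebraMap_eq' (IsLocalization.ringHom_ext p.primeCompl ?_)
    rw [RingHom.comp_assoc, ← IsScalarTower.algebraMap_eq A Ap Rp,
      ← IsScalarTower.algebraMap_eq A Ap Rq, ← IsScalarTower.algebraMap_eq A Rp Rq]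
  have : Algebra.FinitePresentation Ap Rp :=
    finitePresentation_localization_algebraMapSubmonoid p.primeCompl
  have : Module.Flat Ap Rq :=
    (Module.flat_iff_of_isLocalization Ap p.primeCompl Rq).mpr inferInstance
  have : Algebra.FormallySmooth (IsLocalRing.ResidueField Ap)
      (IsLocalRing.ResidueField Ap ⊗[Ap] Rq) :=
    .of_equiv
      (Algebra.TensorProduct.equivOfCompatibleSMul A Ap p.ResidueField p.ResidueField Rq).symm
  have : Algebra.FormallySmooth Ap Rq :=
    .of_formallySmooth_residueField_tensor (P := Rp) (q.primeCompl.map (algebraMap R Rp))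
  exact .comp A Ap Rq

lemma exists_sub_one_mem_basicOpen_subset {K : Ideal R} {U : Set (PrimeSpectrum R)}
    (hU : IsOpen U) (hKU : PrimeSpectrum.zeroLocus K ⊆ U) :
    ∃ j : R, j - 1 ∈ K ∧ (PrimeSpectrum.basicOpen j : Set (PrimeSpectrum R)) ⊆ U := by
  obtain ⟨J, hJ⟩ := (PrimeSpectrum.isClosed_iff_zeroLocus_ideal _).mp hU.isClosed_compl
  have hJK : J ⊔ K = ⊤ := by
    rw [← PrimeSpectrum.zeroLocus_empty_iff_eq_top, PrimeSpectrum.zeroLocus_sup, ← hJ]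
    exact Set.disjoint_iff_inter_eq_empty.mp (Set.disjoint_compl_left_iff_subset.mpr hKU)
  obtain ⟨j, hj, k, hk, hjk⟩ := Submodule.mem_sup.mp ((Ideal.eq_top_iff_one _).mp hJK)
  refine ⟨j, by simpa [← hjk] using hk, ?_⟩
  rw [PrimeSpectrum.basicOpen_eq_zeroLocus_compl, Set.compl_subset_comm, hJ]
  exact PrimeSpectrum.zeroLocus_anti_mono (Set.singleton_subset_iff.mpr hj)

end SmoothAtPrimes

section Converse

variable {A R B : Type u} [CommRing A] [CommRing R] [CommRing B] [Algebra A R] [Algebra R B]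
  [Algebra A B] [IsScalarTower A R B]

lemma IsHenselization.flat_localization_atPrime [Module.Flat A B] {K : Ideal R}
    (h : IsHenselization K (algebraMap R B)) (q : Ideal R) [q.IsPrime] (hq : K ≤ q) :
    Module.Flat A (Localization.AtPrime q) := by
  have := h.flat
  obtain ⟨Q, _, hQ⟩ := h.exists_isPrime_comap_eq hq
  have : Q.LiesOver q := ⟨hQ.symm⟩
  let Rq := Localization.AtPrime q
  let BQ := Localization.AtPrime Q
  let _ := Localization.AtPrime.algebraOfLiesOver q Q
  have : IsScalarTower A R BQ := .to₁₂₄ _ _ B _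
  have : IsScalarTower A Rq BQ := .to₁₃₄ _ R _ _
  have : Module.Flat A BQ := .trans A B BQ
  have : Module.FaithfullyFlat Rq BQ := .of_flat_of_isLocalHom
  exact flat_of_faithfullyFlat_of_flat A Rq BQ

variable {I : Ideal A}

lemma IsHFormallySmooth.exists_algHom_comp_eq (hs : IsHFormallySmooth (algebraMap A B) I)
    (h : IsHenselization (I.map (algebraMap A R)) (algebraMap R B)) {E : Type u} [CommRing E]
    [Algebra A E] (hE : IsNilpotent (I.map (algebraMap A E))) {J : Ideal E} (hJ : IsNilpotent J)
    (g : R →ₐ[A] E ⧸ J) : ∃ v : R →ₐ[A] E, (Ideal.Quotient.mkₐ A J).comp v = g := by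
  obtain ⟨N, hN⟩ := hE
  obtain ⟨M, hM⟩ := hJ
  have hIE : (I ^ (N + 1)).map (algebraMap A E) = ⊥ := by
    rw [Ideal.map_pow, pow_succ, hN, zero_mul, Ideal.zero_eq_bot]
  have hIC : (I ^ (N + 1)).map (algebraMap A (E ⧸ J)) = ⊥ := by
    rw [IsScalarTower.algebraMap_eq A E, ← Ideal.map_map, hIE, Ideal.map_bot]
  obtain ⟨u, hu, -⟩ := h.existsUnique_comp_eq_of_isNilpotent_map (g : R →+* E ⧸ J)
    ⟨N + 1, by rw [Ideal.map_map, g.comp_algebraMap, ← Ideal.map_pow, hIC, Ideal.zero_eq_bot]⟩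
  have huA : u.comp (algebraMap A B) = algebraMap A (E ⧸ J) := by
    rw [IsScalarTower.algebraMap_eq A R B, ← RingHom.comp_assoc, hu, g.comp_algebraMap]
  obtain ⟨v, hv, hvu⟩ := hs E (E ⧸ J) (algebraMap A E) _ (Ideal.Quotient.mk J) u rfl huA
    ⟨N + 1, N.succ_pos, hIE, hIC⟩ Ideal.Quotient.mk_surjective
    ⟨M + 1, M.succ_pos, by rw [Ideal.mk_ker, pow_succ, hM, zero_mul, Ideal.zero_eq_bot]⟩
  let v' : B →ₐ[A] E := { v with commutes' := DFunLike.congr_fun hv }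
  refine ⟨v'.comp (IsScalarTower.toAlgHom A R B), AlgHom.coe_ringHom_injective ?_⟩
  rw [← hu, ← hvu]
  rfl

lemma IsHFormallySmooth.formallySmooth_tensorProduct
    (hs : IsHFormallySmooth (algebraMap A B) I)
    (h : IsHenselization (I.map (algebraMap A R)) (algebraMap R B))
    (k T : Type u) [CommRing k] [Algebra A k] [CommRing T] [Algebra A T] [Algebra R T]
    [IsScalarTower A R T] [Algebra.FormallySmooth R T]
    (hk : IsNilpotent (I.map (algebraMap A k))) :
    Algebra.FormallySmooth k (k ⊗[A] T) := by
  refine .of_comp_surjective fun E _ _ J hJ u ↦ ?_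
  have hJ' : IsNilpotent J := ⟨2, hJ⟩
  let _ : Algebra A E := ((algebraMap k E).comp (algebraMap A k)).toAlgebra
  have : IsScalarTower A k E := .of_algebraMap_eq' rfl
  have hE : IsNilpotent (I.map (algebraMap A E)) := by
    obtain ⟨N, hN⟩ := hk
    refine ⟨N, ?_⟩
    rw [IsScalarTower.algebraMap_eq A k E, ← Ideal.map_map, ← Ideal.map_pow, hN,
      Ideal.zero_eq_bot, Ideal.map_bot, Ideal.zero_eq_bot]
  let uT : T →ₐ[A] E ⧸ J := (u.restrictScalars A).comp Algebra.TensorProduct.includeRight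
  obtain ⟨v, hv⟩ := hs.exists_algHom_comp_eq h hE hJ' (uT.comp (IsScalarTower.toAlgHom A R T))
  let _ : Algebra R E := v.toRingHom.toAlgebra
  have : IsScalarTower A R E := .of_algebraMap_eq' v.comp_algebraMap.symm
  let uT' : T →ₐ[R] E ⧸ J := { uT with commutes' := fun x ↦ (DFunLike.congr_fun hv x).symm }
  obtain ⟨w, hw⟩ := Algebra.FormallySmooth.exists_lift J hJ' uT'
  refine ⟨Algebra.TensorProduct.lift (Algebra.ofId k E) (w.restrictScalars A)
    fun _ _ ↦ .all _ _, Algebra.TensorProduct.ext (by ext) (AlgHom.ext fun x ↦ ?_)⟩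
  simpa using! DFunLike.congr_fun hw x

lemma IsHFormallySmooth.zeroLocus_subset_smoothLocus [Algebra.FinitePresentation A R]
    [Module.Flat A B] (hs : IsHFormallySmooth (algebraMap A B) I)
    (h : IsHenselization (I.map (algebraMap A R)) (algebraMap R B)) :
    PrimeSpectrum.zeroLocus (I.map (algebraMap A R)) ⊆ Algebra.smoothLocus A R := by
  intro q hq
  let p := q.asIdeal.under A
  have hIp : I.map (algebraMap A p.ResidueField) = ⊥ := by
    rw [Ideal.map_eq_bot_iff_le_ker, Ideal.ker_algebraMap_residueField]
    exact Ideal.map_le_iff_le_comap.mp hq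
  have : Module.Flat A (Localization.AtPrime q.asIdeal) := h.flat_localization_atPrime _ hq
  have : Algebra.FormallySmooth p.ResidueField
      (p.ResidueField ⊗[A] Localization.AtPrime q.asIdeal) :=
    hs.formallySmooth_tensorProduct h _ _ (hIp ▸ .zero)
  exact isSmoothAt_of_formallySmooth_residueField_tensor p q.asIdeal

end Converse

lemma IsHfp.isHSmooth {A B : Type u} [CommRing A] [CommRing B] [Algebra A B] [Module.Flat A B]
    {I : Ideal A} (h : IsHfp (algebraMap A B) I) (hs : IsHFormallySmooth (algebraMap A B) I) :
    IsHSmooth (algebraMap A B) I := by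
  obtain ⟨R, _, ψ, ρ, hψ, hρ, hH⟩ := h
  algebraize [ψ, ρ]
  have : IsScalarTower A R B := .of_algebraMap_eq' hρ.symm
  obtain ⟨j, hj, hjU⟩ := exists_sub_one_mem_basicOpen_subset
    (Algebra.isOpen_smoothLocus (R := A) (A := R)) (hs.zeroLocus_subset_smoothLocus hH)
  obtain ⟨ρ', hρ', hH'⟩ := hH.away hj (Localization.Away j)
  refine ⟨Localization.Away j, inferInstance, inferInstance, ρ',
    Algebra.basicOpen_subset_smoothLocus_iff_smooth.mp hjU, ?_, ?_⟩
  · rw [IsScalarTower.algebraMap_eq A R, ← RingHom.comp_assoc, hρ']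
    exact hρ
  · rw [IsScalarTower.algebraMap_eq A R, ← Ideal.map_map]
    exact hH'

theorem isHSmooth_iff_isHfp_isHFormallySmooth_flat_general
    {A B : Type u} [CommRing A] [CommRing B] [Algebra A B] (I : Ideal A) :
    (IsHfp (algebraMap A B) I ∧ IsHFormallySmooth (algebraMap A B) I ∧ Module.Flat A B) ↔
      IsHSmooth (algebraMap A B) I :=
  ⟨fun ⟨hfp, hsmooth, _⟩ ↦ hfp.isHSmooth hsmooth,
    fun h ↦ ⟨h.isHfp, h.isHFormallySmooth, h.flat⟩⟩

/-- `B` is hfp, h-formally smooth and flat over the Henselian pair `(A, I)` iff `B` is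
h-smooth over `A`. -/
theorem isHSmooth_iff_isHfp_isHFormallySmooth_flat
    {A B : Type u} [CommRing A] [CommRing B] [Algebra A B]
    (I : Ideal A) [HenselianRing A I]
    [HenselianRing B (I.map (algebraMap A B))] :
    (IsHfp (algebraMap A B) I ∧ IsHFormallySmooth (algebraMap A B) I ∧ Module.Flat A B) ↔
      IsHSmooth (algebraMap A B) I := by
  exact isHSmooth_iff_isHfp_isHFormallySmooth_flat_general I
end

section
/- Let (A, I) be a Henselian pair and let B be an A-algebra which is hfp over A with respect to I and which is flat as an A-module. Then there exist a finitely presented A-algebra S which is flat as an A-module and an A-algebra homomorphism S → B exhibiting B as a Henselization of the pair (S, I·S). -/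
universe u

/-!
Flatness of `B` passes to the localization of the given model `R` at `1 + I R`: the Henselization
of the square-zero extension `R ⊕ M` detects `M` up to the action of `1 + I R`, because `R ⊕ M`
modulo `(1 + I R)`-torsion embeds into a Henselian pair, a reduced product of the nilpotent pairs
obtained by truncating its finitely generated subrings.

To flatten after inverting a single element of `1 + I R`, descend `R` to a finite type algebra `S`
over a noetherian ring `A₀` mapping to `A`. By noetherian induction on an ideal `J` of `A₀`,
flatness over `V(J)` is achieved by enlarging `A₀` inside `A` and inverting an element of `1 + I R`.
Generic flatness provides `c ∉ J` with `S` flat over `V(J) ∩ D(c)`, and the induction hypothesis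
makes `S` flat over `V(J, c)`. The remaining obstruction is the failure of `(J S : c) = (J : c) S`.
It is finitely generated, and flatness of `R` localized at `1 + I R` makes it vanish after a step of
the same kind. The case `J = 0` is the theorem.
-/

open Polynomial TensorProduct

section HenselianPairs

lemma henselianRing_of_pow_eq_bot {Q : Type*} [CommRing Q] (K : Ideal Q) (n : ℕ)
    (h : K ^ n = ⊥) : HenselianRing Q K := by
  have hle : ∀ m, n ≤ m → K ^ m = ⊥ := fun m hm =>
    eq_bot_iff.2 (h ▸ Ideal.pow_le_pow_right hm)
  have : IsHausdorff K Q := ⟨fun x hx => by simpa [h, SModEq.zero] using hx n⟩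
  have : IsPrecomplete K Q := ⟨fun f hf => ⟨f n, fun m => by
    rcases le_total m n with hmn | hmn
    · exact hf hmn
    · simpa only [h, hle m hmn] using (hf hmn).symm⟩⟩
  have : IsAdicComplete K Q := ⟨⟩
  infer_instance

lemma exists_eval_eq_zero_of_mem {D : Type*} [CommRing D] {J : Ideal D} [HenselianRing D J]
    {p : D[X]} (hp : p.Monic) {a v : D} (ha : p.eval a ∈ J)
    (hv : p.derivative.eval a * v - 1 ∈ J) : ∃ b, p.eval b = 0 ∧ b - a ∈ J := by
  refine HenselianRing.is_henselian p hp a ha (IsUnit.of_mul_eq_one (Ideal.Quotient.mk J v) ?_)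
  rw [← map_mul, ← map_one (Ideal.Quotient.mk J), Ideal.Quotient.eq]
  exact hv

variable {ι : Type*} (F : Filter ι) {C : ι → Type*} [∀ i, CommRing (C i)]

/-- The ideal of the product `∏ i, C i` formed by the families that lie in `J i` for
`F`-almost all `i`. -/
def eventualIdeal (J : ∀ i, Ideal (C i)) : Ideal (∀ i, C i) where
  carrier := {x | ∀ᶠ i in F, x i ∈ J i}
  add_mem' ha hb := by filter_upwards [ha, hb] with i h h' using (J i).add_mem h h'
  zero_mem' := .of_forall fun i => (J i).zero_mem
  smul_mem' c x hx := by filter_upwards [hx] with i h using (J i).mul_mem_left _ h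

variable (C) in
/-- The product of the rings `C i` reduced by the filter `F`: families are identified when they
agree for `F`-almost all indices. -/
abbrev ReducedProduct : Type _ :=
  (∀ i, C i) ⧸ eventualIdeal F fun i => (⊥ : Ideal (C i))

namespace ReducedProduct

/-- The class of a family in the reduced product. -/
abbrev mk : (∀ i, C i) →+* ReducedProduct F C :=
  Ideal.Quotient.mk _

variable {F}

lemma mk_eq_mk_iff {x y : ∀ i, C i} : mk F x = mk F y ↔ ∀ᶠ i in F, x i = y i := by
  simp_rw [← sub_eq_zero (a := x _)]
  exact Ideal.Quotient.eq

lemma mk_mem_map_iff {J : ∀ i, Ideal (C i)} {x : ∀ i, C i} :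
    mk F x ∈ (eventualIdeal F J).map (mk F) ↔ ∀ᶠ i in F, x i ∈ J i := by
  refine ⟨fun hx => ?_, fun hx => Ideal.mem_map_of_mem _ hx⟩
  obtain ⟨y, hy, hyx⟩ := (Ideal.mem_map_iff_of_surjective _ Ideal.Quotient.mk_surjective).1 hx
  filter_upwards [show ∀ᶠ i in F, y i ∈ J i from hy, mk_eq_mk_iff.1 hyx] with i hi hi'
  rwa [← hi']

lemma map_le_jacobson {J : ∀ i, Ideal (C i)} (hJ : ∀ i, J i ≤ Ideal.jacobson ⊥) :
    (eventualIdeal F J).map (mk F) ≤ Ideal.jacobson ⊥ := by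
  intro x hx
  obtain ⟨x, rfl⟩ := Ideal.Quotient.mk_surjective x
  rw [Ideal.mem_jacobson_bot]
  intro y
  obtain ⟨y, rfl⟩ := Ideal.Quotient.mk_surjective y
  have inverse : ∀ i, ∃ v : C i, x i ∈ J i → (x i * y i + 1) * v = 1 := fun i => by
    by_cases h : x i ∈ J i
    · obtain ⟨v, hv⟩ := (Ideal.mem_jacobson_bot.1 (hJ i h) (y i)).exists_right_inv
      exact ⟨v, fun _ => hv⟩
    · exact ⟨0, fun h' => (h h').elim⟩
  choose v hv using inverse
  refine IsUnit.of_mul_eq_one (mk F v) ?_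
  rw [← map_mul, ← map_one (mk F), ← map_add, ← map_mul, mk_eq_mk_iff]
  filter_upwards [mk_mem_map_iff.1 hx] with i hi using hv i hi

lemma eval_apply (p : (∀ i, C i)[X]) (a : ∀ i, C i) (i : ι) :
    p.eval a i = (p.map (Pi.evalRingHom C i)).eval (a i) := by
  rw [eval_map]
  exact hom_eval₂ p (RingHom.id _) (Pi.evalRingHom C i) a

lemma exists_eval_eq_zero {J : ∀ i, Ideal (C i)} (hJ : ∀ i, HenselianRing (C i) (J i))
    {p : (∀ i, C i)[X]} (hp : p.Monic) {a v : ∀ i, C i}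
    (ha : ∀ᶠ i in F, p.eval a i ∈ J i)
    (hv : ∀ᶠ i in F, (p.derivative.eval a * v - 1) i ∈ J i) :
    ∃ b : ∀ i, C i, ∀ᶠ i in F, p.eval b i = 0 ∧ b i - a i ∈ J i := by
  have root : ∀ i, ∃ b : C i, p.eval a i ∈ J i → (p.derivative.eval a * v - 1) i ∈ J i →
      (p.map (Pi.evalRingHom C i)).eval b = 0 ∧ b - a i ∈ J i := fun i => by
    by_cases h : p.eval a i ∈ J i ∧ (p.derivative.eval a * v - 1) i ∈ J i
    · obtain ⟨b, hb⟩ := exists_eval_eq_zero_of_mem (hp.map (Pi.evalRingHom C i)) (a := a i)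
        (v := v i) (by rw [← eval_apply]; exact h.1)
        (by rw [derivative_map, ← eval_apply]; exact h.2)
      exact ⟨b, fun _ _ => hb⟩
    · exact ⟨0, fun h₁ h₂ => (h ⟨h₁, h₂⟩).elim⟩
  choose b hb using root
  refine ⟨b, ?_⟩
  filter_upwards [ha, hv] with i h₁ h₂
  rw [eval_apply]
  exact hb i h₁ h₂

lemma henselianRing {J : ∀ i, Ideal (C i)} (hJ : ∀ i, HenselianRing (C i) (J i)) :
    HenselianRing (ReducedProduct F C) ((eventualIdeal F J).map (mk F)) where
  jac := map_le_jacobson fun i => (hJ i).jac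
  is_henselian f hf a₀ hroot hsimple := by
    obtain ⟨p, rfl, -, hp⟩ := lifts_and_natDegree_eq_and_monic (f := mk F)
      ((mem_lifts f).2 (map_surjective _ Ideal.Quotient.mk_surjective f)) hf
    obtain ⟨a, rfl⟩ := Ideal.Quotient.mk_surjective a₀
    obtain ⟨v, hv⟩ := hsimple.exists_right_inv
    obtain ⟨v, rfl⟩ := Ideal.Quotient.mk_surjective v
    obtain ⟨v, rfl⟩ := Ideal.Quotient.mk_surjective v
    rw [derivative_map, eval_map, eval₂_hom, ← map_mul, ← map_mul,
      ← map_one (Ideal.Quotient.mk _), Ideal.Quotient.eq, ← map_one (mk F), ← map_sub,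
      mk_mem_map_iff] at hv
    rw [eval_map, eval₂_hom, mk_mem_map_iff] at hroot
    obtain ⟨b, hb⟩ := exists_eval_eq_zero hJ hp hroot hv
    refine ⟨mk F b, ?_, ?_⟩
    · rw [IsRoot, eval_map, eval₂_hom, ← map_zero (mk F), mk_eq_mk_iff]
      exact hb.mono fun i h => h.1
    · rw [← map_sub, mk_mem_map_iff]
      exact hb.mono fun i h => h.2

end ReducedProduct

end HenselianPairs

section Detection

variable {Q : Type u} [CommRing Q]

lemma exists_one_sub_mul_eq_zero_of_forall_mem_pow {T : Type*} [CommRing T] [IsNoetherianRing T]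
    (L : Ideal T) {x : T} (n : ℕ) (hx : ∀ m, n ≤ m → x ∈ L ^ m) :
    ∃ k ∈ L, (1 - k) * x = 0 := by
  have hmem : x ∈ (⨅ i : ℕ, L ^ i • ⊤ : Submodule T T) := by
    rw [Submodule.mem_iInf]
    intro m
    simpa using Ideal.pow_le_pow_right (le_max_right n m) (hx _ (le_max_left n m))
  obtain ⟨r, hr⟩ := (Ideal.mem_iInf_smul_pow_eq_bot_iff L x).1 hmem
  exact ⟨r, r.2, by rw [sub_mul, one_mul, sub_eq_zero]; exact hr.symm⟩

/-- The ring `ℤ[s] / (K ∩ ℤ[s]) ^ n`, a truncation at the ideal `K` of a finitely generated subring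
of `Q`. -/
abbrev Truncation (K : Ideal Q) (i : Finset Q × ℕ) : Type u :=
  Algebra.adjoin ℤ (i.1 : Set Q) ⧸ K.comap (Algebra.adjoin ℤ (i.1 : Set Q)).val ^ i.2

namespace Truncation

variable (K : Ideal Q)

/-- The ideal of a truncation generated by the truncating ideal. -/
abbrev ideal (i : Finset Q × ℕ) : Ideal (Truncation K i) :=
  (K.comap (Algebra.adjoin ℤ (i.1 : Set Q)).val).map (Ideal.Quotient.mk _)

lemma henselianRing_ideal (i : Finset Q × ℕ) : HenselianRing (Truncation K i) (ideal K i) :=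
  henselianRing_of_pow_eq_bot _ i.2 (by rw [← Ideal.map_pow, Ideal.map_quotient_self])

lemma eventually_mem_adjoin (x : Q) :
    ∀ᶠ i : Finset Q × ℕ in Filter.atTop, x ∈ Algebra.adjoin ℤ (i.1 : Set Q) := by
  filter_upwards [Filter.eventually_ge_atTop (({x}, 0) : Finset Q × ℕ)] with i hi
  exact Algebra.subset_adjoin (hi.1 (Finset.mem_singleton_self x))

open Classical in
/-- The truncation of an element of `Q`, set to `0` where the element is not in the subring. -/
noncomputable def ofElement (x : Q) (i : Finset Q × ℕ) : Truncation K i :=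
  if h : x ∈ Algebra.adjoin ℤ (i.1 : Set Q) then Ideal.Quotient.mk _ ⟨x, h⟩ else 0

variable {K} in
lemma ofElement_of_mem {x : Q} {i : Finset Q × ℕ} (h : x ∈ Algebra.adjoin ℤ (i.1 : Set Q)) :
    ofElement K x i = Ideal.Quotient.mk _ ⟨x, h⟩ :=
  dif_pos h

variable {K} in
lemma mem_pow_of_ofElement_eq_zero {x : Q} {i : Finset Q × ℕ}
    (h : x ∈ Algebra.adjoin ℤ (i.1 : Set Q)) (hx : ofElement K x i = 0) :
    ⟨x, h⟩ ∈ K.comap (Algebra.adjoin ℤ (i.1 : Set Q)).val ^ i.2 :=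
  Ideal.Quotient.eq_zero_iff_mem.1 ((ofElement_of_mem h).symm.trans hx)

/-- The ring homomorphism from `Q` to the reduced product of its truncations. -/
noncomputable def toReducedProduct :
    Q →+* ReducedProduct (.atTop : Filter (Finset Q × ℕ)) (Truncation K) where
  toFun x := ReducedProduct.mk _ (ofElement K x)
  map_one' := by
    rw [← map_one (ReducedProduct.mk _), ReducedProduct.mk_eq_mk_iff]
    filter_upwards [eventually_mem_adjoin 1] with i h
    exact ofElement_of_mem h
  map_zero' := by
    rw [← map_zero (ReducedProduct.mk _), ReducedProduct.mk_eq_mk_iff]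
    filter_upwards [eventually_mem_adjoin 0] with i h
    exact (ofElement_of_mem h).trans (map_zero _)
  map_add' x y := by
    rw [← map_add, ReducedProduct.mk_eq_mk_iff]
    filter_upwards [eventually_mem_adjoin x, eventually_mem_adjoin y] with i hx hy
    rw [Pi.add_apply, ofElement_of_mem hx, ofElement_of_mem hy, ofElement_of_mem (add_mem hx hy),
      ← map_add]
    rfl
  map_mul' x y := by
    rw [← map_mul, ReducedProduct.mk_eq_mk_iff]
    filter_upwards [eventually_mem_adjoin x, eventually_mem_adjoin y] with i hx hy
    rw [Pi.mul_apply, ofElement_of_mem hx, ofElement_of_mem hy, ofElement_of_mem (mul_mem hx hy),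
      ← map_mul]
    rfl

lemma toReducedProduct_apply (x : Q) :
    toReducedProduct K x = ReducedProduct.mk _ (ofElement K x) :=
  rfl

lemma map_toReducedProduct_le : K.map (toReducedProduct K) ≤
    (eventualIdeal .atTop (ideal K)).map (ReducedProduct.mk _) := by
  refine Ideal.map_le_iff_le_comap.2 fun x hx => ReducedProduct.mk_mem_map_iff.2 ?_
  filter_upwards [eventually_mem_adjoin x] with i h
  rw [ofElement_of_mem h]
  exact Ideal.mem_map_of_mem _ hx

variable {K} in
lemma exists_one_sub_mul_eq_zero {x : Q} (hx : toReducedProduct K x = 0) :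
    ∃ k ∈ K, (1 - k) * x = 0 := by
  classical
  rw [toReducedProduct_apply, ← map_zero (ReducedProduct.mk _), ReducedProduct.mk_eq_mk_iff] at hx
  obtain ⟨⟨s, n⟩, hsn⟩ := Filter.eventually_atTop.1 (hx.and (eventually_mem_adjoin x))
  have hxs : x ∈ Algebra.adjoin ℤ (s : Set Q) := (hsn (s, n) le_rfl).2
  have hpow : ∀ m, n ≤ m →
      (⟨x, hxs⟩ : Algebra.adjoin ℤ (s : Set Q)) ∈ K.comap (Algebra.adjoin ℤ (s : Set Q)).val ^ m :=
    fun m hm => mem_pow_of_ofElement_eq_zero (i := (s, m)) hxs (hsn (s, m) ⟨le_rfl, hm⟩).1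
  have : Algebra.FiniteType ℤ (Algebra.adjoin ℤ (s : Set Q)) :=
    (Subalgebra.fg_iff_finiteType _).1 ⟨s, rfl⟩
  have : IsNoetherianRing (Algebra.adjoin ℤ (s : Set Q)) :=
    Algebra.FiniteType.isNoetherianRing ℤ _
  obtain ⟨k, hk, hkx⟩ := exists_one_sub_mul_eq_zero_of_forall_mem_pow _ n hpow
  exact ⟨k, hk, congrArg Subtype.val hkx⟩

end Truncation

lemma exists_henselianRing_forall_exists_one_sub_mul_eq_zero (K : Ideal Q) :
    ∃ (C : Type u) (_ : CommRing C) (J : Ideal C) (h : Q →+* C), HenselianRing C J ∧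
      K.map h ≤ J ∧ ∀ x, h x = 0 → ∃ k ∈ K, (1 - k) * x = 0 :=
  ⟨ReducedProduct .atTop (Truncation K), inferInstance,
    (eventualIdeal .atTop (Truncation.ideal K)).map (ReducedProduct.mk _),
    Truncation.toReducedProduct K,
    ReducedProduct.henselianRing (Truncation.henselianRing_ideal K),
    Truncation.map_toReducedProduct_le K, fun _ => Truncation.exists_one_sub_mul_eq_zero⟩

/-- If `1 ⊗ m` vanishes over a Henselization, apply its universal property to a Henselian pair
detecting the square-zero extension `R ⊕ M`. -/
lemma exists_one_sub_smul_eq_zero_of_isHenselization {R B M : Type u} [CommRing R] [CommRing B]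
    [Algebra R B] [AddCommGroup M] [Module R M] {K : Ideal R}
    (hB : IsHenselization K (algebraMap R B)) {m : M} (hm : (1 : B) ⊗ₜ[R] m = 0) :
    ∃ k ∈ K, (1 - k) • m = 0 := by
  let _ : Module Rᵐᵒᵖ M := Module.compHom M ((RingHom.id R).fromOpposite mul_comm)
  have : IsCentralScalar R M := ⟨fun _ _ => rfl⟩
  let inl : R →+* TrivSqZeroExt R M := TrivSqZeroExt.inlHom R M
  obtain ⟨C, _, J, h, hC, hKJ, hker⟩ :=
    exists_henselianRing_forall_exists_one_sub_mul_eq_zero (K.map inl)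
  obtain ⟨g, hg, -⟩ := hB.2 C J hC (h.comp inl) (by rwa [← Ideal.map_map])
  let _ : Algebra R C := (h.comp inl).toAlgebra
  let gₗ : B →ₗ[R] C := (⟨g, fun r => DFunLike.congr_fun hg r⟩ : B →ₐ[R] C).toLinearMap
  let hₗ : M →ₗ[R] C :=
    { toFun := fun m => h (TrivSqZeroExt.inr m)
      map_add' := fun x y => by rw [TrivSqZeroExt.inr_add, map_add]
      map_smul' := fun r x => by
        rw [← TrivSqZeroExt.inl_mul_inr, map_mul]
        rfl }
  have hm' : h (TrivSqZeroExt.inr m) = 0 := by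
    simpa [gₗ, hₗ] using congrArg (TensorProduct.lift ((LinearMap.mul R C).compl₁₂ gₗ hₗ)) hm
  obtain ⟨k, hk, hkm⟩ := hker _ hm'
  refine ⟨k.fst, ?_, ?_⟩
  · have := Ideal.mem_map_of_mem (TrivSqZeroExt.fstHom R R M).toRingHom hk
    rw [Ideal.map_map] at this
    exact (Ideal.map_id K).le this
  · simpa using congrArg TrivSqZeroExt.snd hkm

end Detection

universe v

section Torsion

variable {A R M : Type*} {N N' : Type v} [CommRing A] [CommRing R] [Algebra A R]
  [AddCommGroup M] [Module A M] [Module R M] [IsScalarTower A R M]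
  [AddCommGroup N] [Module A N] [AddCommGroup N'] [Module A N']

lemma one_tmul_eq_zero_of_flat_baseChange (B : Type*) [CommRing B] [Algebra R B] [Algebra A B]
    [IsScalarTower A R B] [Module.Flat A (B ⊗[R] M)] {f : N →ₗ[A] N'}
    (hf : Function.Injective f) {x : M ⊗[A] N} (hx : f.lTensor M x = 0) :
    (1 : B) ⊗ₜ[R] x = 0 := by
  let assoc (P : Type v) [AddCommGroup P] [Module A P] :=
    AlgebraTensorModule.assoc A R B B M P
  let fM : M ⊗[A] N →ₗ[R] M ⊗[A] N' := AlgebraTensorModule.lTensor R M f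
  have natural : ∀ z, assoc N' (f.lTensor (B ⊗[R] M) z) = fM.lTensor B (assoc N z) := fun z => by
    induction z with
    | zero => simp only [map_zero]
    | add y z hy hz => simp only [map_add, hy, hz]
    | tmul y n =>
      induction y with
      | zero => simp only [zero_tmul, map_zero]
      | add y z hy hz => simp only [add_tmul, map_add, hy, hz]
      | tmul b m => rfl
  obtain ⟨z, hz⟩ := (assoc N).surjective ((1 : B) ⊗ₜ[R] x)
  have hz0 : z = 0 := by
    apply Module.Flat.lTensor_preserves_injective_linearMap (M := B ⊗[R] M) f hf
    apply (assoc N').injective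
    rw [natural, hz, map_zero, map_zero, LinearMap.lTensor_tmul]
    exact (congrArg ((1 : B) ⊗ₜ[R] ·) hx).trans (tmul_zero _ _)
  rw [← hz, hz0, map_zero]

lemma flat_of_isLocalizedModule_of_forall_exists_smul_eq_zero {A : Type u} [CommRing A]
    [Algebra A R] [Module A M] [IsScalarTower A R M] (T : Submonoid R)
    {M' : Type*} [AddCommGroup M'] [Module R M'] [Module A M'] [IsScalarTower A R M']
    (g : M →ₗ[R] M') [IsLocalizedModule T g]
    (torsion : ∀ (I : Ideal A) (x : M ⊗[A] I), I.subtype.lTensor M x = 0 → ∃ w ∈ T, w • x = 0) :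
    Module.Flat A M' := by
  refine Module.Flat.iff_lTensor_injective'.2 fun I =>
    (injective_iff_map_eq_zero _).2 fun z hz => ?_
  let gI := AlgebraTensorModule.rTensor A I g
  let gA := AlgebraTensorModule.rTensor A A g
  obtain ⟨⟨x, s⟩, hx⟩ := IsLocalizedModule.surj T gI z
  have natural : ∀ y, I.subtype.lTensor M' (gI y) = gA (I.subtype.lTensor M y) := fun y =>
    LinearMap.congr_fun (LinearMap.lTensor_comp_rTensor (f := g.restrictScalars A) ..) y |>.trans
    <| (LinearMap.congr_fun (LinearMap.rTensor_comp_lTensor (f := g.restrictScalars A) ..) y).symm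
  have hx0 : gA (I.subtype.lTensor M x) = 0 := by
    rw [← natural, ← hx]
    exact ((AlgebraTensorModule.lTensor R M' I.subtype).map_smul (s : R) z).trans
      ((congrArg ((s : R) • ·) hz).trans (smul_zero _))
  obtain ⟨t, ht⟩ := (IsLocalizedModule.eq_zero_iff T gA).1 hx0
  obtain ⟨w, hwT, hw⟩ := torsion I ((t : R) • x)
    (((AlgebraTensorModule.lTensor R M I.subtype).map_smul (t : R) x).trans ht)
  have hsx : s • z = 0 := by
    rw [hx]
    exact (IsLocalizedModule.eq_zero_iff T gI).2 ⟨⟨w, hwT⟩ * t, by rw [mul_smul]; exact hw⟩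
  exact IsLocalizedModule.smul_injective gI s (hsx.trans (smul_zero s).symm)

end Torsion

section FlatLocalization

variable {A R B : Type u} [CommRing A] [CommRing R] [CommRing B] [Algebra A R] [Algebra R B]
  [Algebra A B] [IsScalarTower A R B]

/-- The multiplicative set `1 + K` of an ideal `K`. -/
def oneAddSubmonoid (K : Ideal R) : Submonoid R :=
  (⊥ : Submonoid (R ⧸ K)).comap (Ideal.Quotient.mk K)

lemma mem_oneAddSubmonoid {K : Ideal R} {w : R} : w ∈ oneAddSubmonoid K ↔ 1 - w ∈ K := by
  rw [oneAddSubmonoid, Submonoid.mem_comap, Submonoid.mem_bot, ← map_one (Ideal.Quotient.mk K),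
    eq_comm, Ideal.Quotient.eq]

variable (A) in
lemma flat_localization_oneAddSubmonoid_of_isHenselization {K : Ideal R}
    (hB : IsHenselization K (algebraMap R B)) [Module.Flat A B] :
    Module.Flat A (Localization (oneAddSubmonoid K)) := by
  have : Module.Flat A (B ⊗[R] R) :=
    Module.Flat.of_linearEquiv ((AlgebraTensorModule.rid R R B).restrictScalars A)
  refine flat_of_isLocalizedModule_of_forall_exists_smul_eq_zero (oneAddSubmonoid K)
    (Algebra.linearMap R (Localization (oneAddSubmonoid K))) fun I x hx => ?_
  obtain ⟨k, hk, hkx⟩ := exists_one_sub_smul_eq_zero_of_isHenselization hB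
    (one_tmul_eq_zero_of_flat_baseChange B I.subtype_injective hx)
  exact ⟨1 - k, mem_oneAddSubmonoid.2 (by rwa [sub_sub_cancel]), hkx⟩

lemma isHenselization_of_isLocalization {K : Ideal R} (hB : IsHenselization K (algebraMap R B))
    (T : Submonoid R) (S : Type u) [CommRing S] [Algebra R S] [IsLocalization T S] [Algebra S B]
    [IsScalarTower R S B] : IsHenselization (K.map (algebraMap R S)) (algebraMap S B) := by
  refine ⟨?_, fun C _ J hC f hf => ?_⟩
  · rw [Ideal.map_map, ← IsScalarTower.algebraMap_eq]
    exact hB.1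
  · rw [Ideal.map_map] at hf
    obtain ⟨g, hg, unique⟩ := hB.2 C J hC _ hf
    refine ⟨g, IsLocalization.ringHom_ext T ?_, fun g' hg' => unique g' ?_⟩
    · rw [RingHom.comp_assoc, ← IsScalarTower.algebraMap_eq, hg]
    · rw [← hg', RingHom.comp_assoc, ← IsScalarTower.algebraMap_eq]

lemma isUnit_algebraMap_of_mem_oneAddSubmonoid {K : Ideal R}
    [HenselianRing B (K.map (algebraMap R B))] {w : R} (hw : w ∈ oneAddSubmonoid K) :
    IsUnit (algebraMap R B w) := by
  have hmem := Ideal.mem_map_of_mem (algebraMap R B) (mem_oneAddSubmonoid.1 hw)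
  have hunit := Ideal.mem_jacobson_bot.1 (HenselianRing.jac hmem) (-1)
  rwa [map_sub, map_one, mul_neg_one, neg_sub, sub_add_cancel] at hunit

end FlatLocalization

section FlatBaseChange

variable {A C M P P' : Type*} [CommRing A] [CommRing C] [Algebra A C] [AddCommGroup M] [Module A M]
  [AddCommGroup P] [Module A P] [Module C P] [IsScalarTower A C P]
  [AddCommGroup P'] [Module A P'] [Module C P'] [IsScalarTower A C P']

lemma rTensor_injective_iff_baseChange (f : P →ₗ[C] P') :
    Function.Injective (f.rTensor (C ⊗[A] M)) ↔
      Function.Injective ((f.restrictScalars A).rTensor M) := by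
  have natural : AlgebraTensorModule.cancelBaseChange A C C P' M ∘ₗ f.rTensor (C ⊗[A] M) =
      AlgebraTensorModule.rTensor A M f ∘ₗ AlgebraTensorModule.cancelBaseChange A C C P M := by
    ext; simp
  rw [← (AlgebraTensorModule.cancelBaseChange A C C P' M).injective.of_comp_iff,
    ← EquivLike.injective_comp (AlgebraTensorModule.cancelBaseChange A C C P M)]
  exact iff_of_eq (congrArg Function.Injective (congrArg DFunLike.coe natural))

end FlatBaseChange

section FlatOn

lemma exists_smul_eq_zero_of_flat_localization {A : Type*} [CommRing A] {M : Type*} [AddCommGroup M]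
    [Module A M] (T : Submonoid A) (C : Type*) [CommRing C] [Algebra A C] [IsLocalization T C]
    [Module.Flat C (C ⊗[A] M)] {P P' : Type v} [AddCommGroup P] [Module A P] [AddCommGroup P']
    [Module A P'] {f : P →ₗ[A] P'} (hf : Function.Injective f) {x : M ⊗[A] P}
    (hx : f.lTensor M x = 0) : ∃ t : T, t • x = 0 := by
  have : Module.Flat A C := IsLocalization.flat C T
  have : Module.Flat A (C ⊗[A] M) := Module.Flat.trans A C _
  exact (IsLocalizedModule.eq_zero_iff T (TensorProduct.mk A C (M ⊗[A] P) 1)).1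
    (one_tmul_eq_zero_of_flat_baseChange C hf hx)

lemma lTensor_injective_of_flat_algebra {A S S' P P' : Type*} [CommRing A] [CommRing S]
    [CommRing S'] [Algebra A S] [Algebra S S'] [Algebra A S'] [IsScalarTower A S S']
    [Module.Flat S S'] [AddCommGroup P] [Module A P] [AddCommGroup P'] [Module A P']
    (f : P →ₗ[A] P') (hf : Function.Injective (f.lTensor S)) :
    Function.Injective (f.lTensor S') := by
  let fS : S ⊗[A] P →ₗ[S] S ⊗[A] P' := AlgebraTensorModule.lTensor S S f
  have natural := congrArg DFunLike.coe
    (AlgebraTensorModule.lTensor_comp_cancelBaseChange A S S (M := S') f)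
  refine (EquivLike.injective_comp (AlgebraTensorModule.cancelBaseChange A S S S' P) _).1 ?_
  refine (congrArg Function.Injective natural).mpr ?_
  exact (AlgebraTensorModule.cancelBaseChange A S S S' P').injective.comp
    (Module.Flat.lTensor_preserves_injective_linearMap (M := S') fS hf)

/-- The `A`-module `M` is flat over the locally closed subset `V(J) ∩ D(c)` of `Spec A`: its base
change to every `A`-algebra in which `J` vanishes and `c` is invertible is flat. -/
def IsFlatOn {A : Type u} [CommRing A] (J : Ideal A) (c : A) (M : Type*) [AddCommGroup M]
    [Module A M] : Prop :=
  ∀ (C : Type u) [CommRing C] [Algebra A C], J.map (algebraMap A C) = ⊥ →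
    IsUnit (algebraMap A C c) → Module.Flat C (C ⊗[A] M)

namespace IsFlatOn

variable {A : Type u} [CommRing A] {J : Ideal A} {c : A} {M : Type*} [AddCommGroup M] [Module A M]

lemma mono {J' : Ideal A} {c' : A} (h : IsFlatOn J c M) (hJ : J ≤ J') (hc : c ∣ c') :
    IsFlatOn J' c' M := fun C _ _ hJC hcC =>
  h C (eq_bot_iff.2 ((Ideal.map_mono hJ).trans hJC.le))
    (isUnit_of_dvd_unit (map_dvd (algebraMap A C) hc) hcC)

variable (M c) in
protected lemma top : IsFlatOn ⊤ c M := fun C _ _ hJC _ => by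
  have : Subsingleton C := (Submodule.subsingleton_iff C).1 <|
    subsingleton_of_bot_eq_top (hJC.symm.trans (Ideal.map_top _))
  infer_instance

lemma flat (h : IsFlatOn (⊥ : Ideal A) 1 M) : Module.Flat A M :=
  have := h A Ideal.map_bot (isUnit_one.map _)
  Module.Flat.of_linearEquiv (TensorProduct.lid A M).symm

lemma of_colon {P : Ideal A} {a b : A} (h : IsFlatOn P b M) (hP : ∀ p ∈ P, a * p ∈ J) :
    IsFlatOn J (a * b) M := fun C _ _ hJC hab => by
  rw [map_mul] at hab
  refine h C (eq_bot_iff.2 (Ideal.map_le_iff_le_comap.2 fun p hp => ?_))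
    (isUnit_of_mul_isUnit_right hab)
  rw [Ideal.mem_comap, Ideal.mem_bot, ← (isUnit_of_mul_isUnit_left hab).mul_right_eq_zero,
    ← map_mul, ← Ideal.mem_bot, ← hJC]
  exact Ideal.mem_map_of_mem _ (hP p hp)

lemma of_linearEquiv {M' : Type*} [AddCommGroup M'] [Module A M'] (h : IsFlatOn J c M)
    (e : M ≃ₗ[A] M') : IsFlatOn J c M' := fun C _ _ hJC hcC =>
  have := h C hJC hcC
  Module.Flat.of_linearEquiv (e.symm.baseChange A C M' M)

lemma baseChange (h : IsFlatOn J c M) (A' : Type u) [CommRing A'] [Algebra A A'] :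
    IsFlatOn (J.map (algebraMap A A')) (algebraMap A A' c) (A' ⊗[A] M) := fun C _ _ hJC hcC => by
  let _ : Algebra A C := ((algebraMap A' C).comp (algebraMap A A')).toAlgebra
  have : IsScalarTower A A' C := .of_algebraMap_eq fun _ => rfl
  have := h C (by rwa [Ideal.map_map] at hJC) hcC
  exact Module.Flat.of_linearEquiv (AlgebraTensorModule.cancelBaseChange A A' C C M)

lemma of_flat {S S' : Type*} [CommRing S] [CommRing S'] [Algebra A S] [Algebra S S'] [Algebra A S']
    [IsScalarTower A S S'] [Module.Flat S S'] (h : IsFlatOn J c S) : IsFlatOn J c S' :=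
  fun C _ _ hJC hcC => by
    have := h C hJC hcC
    refine Module.Flat.iff_rTensor_injective'.2 fun I => ?_
    have inj : Function.Injective ((I.subtype.restrictScalars A).lTensor S) :=
      (LinearMap.lTensor_inj_iff_rTensor_inj _ _).2 <| (rTensor_injective_iff_baseChange _).1 <|
        Module.Flat.rTensor_preserves_injective_linearMap _ I.subtype_injective
    rw [rTensor_injective_iff_baseChange, ← LinearMap.lTensor_inj_iff_rTensor_inj]
    exact (lTensor_injective_of_flat_algebra (S' := S') _ inj)

lemma rTensor_injective (h : IsFlatOn J 1 M) {P P' : Type*} [AddCommGroup P] [Module A P]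
    [AddCommGroup P'] [Module A P'] {f : P →ₗ[A] P'} (hf : Function.Injective f)
    (hJ : ∀ j ∈ J, ∀ p : P', j • p = 0) : Function.Injective (f.rTensor M) := by
  have torsion' : Module.IsTorsionBySet A P' J := fun p j => hJ j j.2 p
  have torsion : Module.IsTorsionBySet A P J := fun p j =>
    hf ((map_smul f _ p).trans ((hJ j j.2 (f p)).trans (map_zero f).symm))
  let _ := torsion'.module
  let _ := torsion.module
  have : IsScalarTower A (A ⧸ J) P' := torsion'.isScalarTower
  have : IsScalarTower A (A ⧸ J) P := torsion.isScalarTower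
  have := h (A ⧸ J) (Ideal.map_quotient_self J) (isUnit_one.map _)
  let f' : P →ₗ[A ⧸ J] P' := f.extendScalarsOfSurjective Ideal.Quotient.mk_surjective
  exact (rTensor_injective_iff_baseChange f').1
    (Module.Flat.rTensor_preserves_injective_linearMap f' hf)

lemma exists_pow_smul_eq_zero (h : IsFlatOn ⊥ c M) {P P' : Type v} [AddCommGroup P] [Module A P]
    [AddCommGroup P'] [Module A P'] {f : P →ₗ[A] P'} (hf : Function.Injective f)
    {x : M ⊗[A] P} (hx : f.lTensor M x = 0) : ∃ n, c ^ n • x = 0 := by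
  have := h (Localization.Away c) Ideal.map_bot (IsLocalization.Away.algebraMap_isUnit c)
  obtain ⟨⟨_, n, rfl⟩, hn⟩ := exists_smul_eq_zero_of_flat_localization (Submonoid.powers c)
    (Localization.Away c) hf hx
  exact ⟨n, hn⟩

end IsFlatOn

end FlatOn

section GenericFlatness

lemma lTensor_rTensor_comm {A L L' N N' : Type*} [CommRing A] [AddCommGroup L] [Module A L]
    [AddCommGroup L'] [Module A L'] [AddCommGroup N] [Module A N] [AddCommGroup N'] [Module A N']
    (f : N →ₗ[A] N') (g : L →ₗ[A] L') (x : L ⊗[A] N) :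
    f.lTensor L' (g.rTensor N x) = g.rTensor N' (f.lTensor L x) := by
  rw [← LinearMap.comp_apply, ← LinearMap.comp_apply, LinearMap.lTensor_comp_rTensor,
    LinearMap.rTensor_comp_lTensor]

namespace IsFlatOn

section Devissage

variable {A : Type u} [CommRing A] {b : A} {M : Type*} [AddCommGroup M] [Module A M]

lemma of_moduleFlat [Module.Flat A M] (J : Ideal A) (c : A) : IsFlatOn J c M :=
  fun _ _ _ _ _ => inferInstance

lemma bot_iff_forall_exists_pow_smul_eq_zero : IsFlatOn ⊥ b M ↔
    ∀ (I : Ideal A) (x : M ⊗[A] I), I.subtype.lTensor M x = 0 → ∃ n, b ^ n • x = 0 := by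
  refine ⟨fun h I x hx => h.exists_pow_smul_eq_zero I.subtype_injective hx, fun h C _ _ _ hb => ?_⟩
  let T := Submonoid.powers b
  have : Module.Flat A (Localization.Away b ⊗[A] M) :=
    flat_of_isLocalizedModule_of_forall_exists_smul_eq_zero T
      (TensorProduct.mk A (Localization.Away b) M 1) fun I x hx =>
        let ⟨n, hn⟩ := h I x hx
        ⟨b ^ n, ⟨n, rfl⟩, hn⟩
  have : Module.Flat (Localization.Away b) (Localization.Away b ⊗[A] M) :=
    (Module.flat_iff_of_isLocalization (Localization.Away b) T _).2 this
  let _ : Algebra (Localization.Away b) C := (IsLocalization.Away.lift b hb).toAlgebra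
  have : IsScalarTower A (Localization.Away b) C :=
    .of_algebraMap_eq fun a => (IsLocalization.Away.lift_eq b hb a).symm
  exact Module.Flat.of_linearEquiv
    (AlgebraTensorModule.cancelBaseChange A (Localization.Away b) C C M).symm

lemma bot_of_forall_smul_eq_zero (hb : ∀ m : M, b • m = 0) : IsFlatOn ⊥ b M :=
  bot_iff_forall_exists_pow_smul_eq_zero.2 fun I x hx => ⟨1, by
    clear hx
    induction x with
    | zero => exact smul_zero _
    | add x y hx hy => rw [smul_add, hx, hy, add_zero]
    | tmul m i => rw [pow_one, smul_tmul', hb, zero_tmul]⟩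

lemma bot_of_exact {M' M'' : Type*} [AddCommGroup M'] [Module A M'] [AddCommGroup M'']
    [Module A M''] {i : M' →ₗ[A] M} {p : M →ₗ[A] M''} (hi : Function.Injective i)
    (hip : Function.Exact i p) (hp : Function.Surjective p) (h' : IsFlatOn ⊥ b M')
    (h'' : IsFlatOn ⊥ b M'') : IsFlatOn ⊥ b M := by
  rw [bot_iff_forall_exists_pow_smul_eq_zero] at h' h'' ⊢
  intro I x hx
  obtain ⟨n, hn⟩ := h'' I (p.rTensor I x) (by
    rw [lTensor_rTensor_comm, hx, map_zero])
  obtain ⟨y, hy⟩ := (rTensor_exact I hip hp (b ^ n • x)).1 (by rw [map_smul, hn])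
  obtain ⟨m, hm⟩ := h' I y <| Module.Flat.rTensor_preserves_injective_linearMap i hi <| by
    exact (lTensor_rTensor_comm I.subtype i y).symm.trans
      (by rw [hy, map_smul, hx, smul_zero, map_zero])
  exact ⟨m + n, by rw [pow_add, mul_smul, ← hy, ← map_smul, hm, map_zero]⟩

lemma bot_of_iSup_eq_top {P : ℕ → Submodule A M} (hP : Monotone P) (htop : ⨆ k, P k = ⊤)
    (h : ∀ k, IsFlatOn ⊥ b (P k)) : IsFlatOn ⊥ b M := by
  rw [bot_iff_forall_exists_pow_smul_eq_zero]
  intro I x hx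
  obtain ⟨L, hL, y, rfl⟩ := TensorProduct.exists_of_fg x
  obtain ⟨k, hk⟩ : ∃ k, L ≤ P k := by
    obtain ⟨_, ⟨k, rfl⟩, hk⟩ := (Submodule.fg_iff_compact L).1 hL (Set.range P) ⊤
      (Set.range_nonempty P) (directedOn_range.2 hP.directed_le) (htop ▸ isLUB_iSup) le_top
    exact ⟨k, hk⟩
  obtain ⟨n, hn⟩ := (bot_iff_forall_exists_pow_smul_eq_zero.1 (h k)) I
    ((Submodule.inclusion hk).rTensor I y) <|
      Module.Flat.rTensor_preserves_injective_linearMap (P k).subtype (P k).subtype_injective <| by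
        rw [← lTensor_rTensor_comm, ← LinearMap.rTensor_comp_apply,
          Submodule.subtype_comp_inclusion, hx, map_zero]
  refine ⟨n, ?_⟩
  rw [← Submodule.subtype_comp_inclusion _ _ hk, LinearMap.rTensor_comp_apply, ← map_smul, hn,
    map_zero]

lemma bot_of_filtration {P : ℕ → Submodule A M} (hP : Monotone P) (hbot : P 0 = ⊥)
    (htop : ⨆ k, P k = ⊤)
    (h : ∀ k, IsFlatOn ⊥ b (P (k + 1) ⧸ (P k).submoduleOf (P (k + 1)))) : IsFlatOn ⊥ b M := by
  refine bot_of_iSup_eq_top hP htop fun k => ?_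
  induction k with
  | zero =>
    have : Subsingleton (P 0) := Submodule.subsingleton_iff_eq_bot.2 hbot
    exact bot_of_forall_smul_eq_zero fun m => Subsingleton.elim _ _
  | succ k ih =>
    have ih' := ih.of_linearEquiv
      (Submodule.submoduleOfEquivOfLe (hP (Nat.le_succ k))).symm
    exact bot_of_exact (Submodule.subtype_injective _)
      (LinearMap.exact_subtype_mkQ _) (Submodule.mkQ_surjective _) ih' (h k)

end Devissage

end IsFlatOn

section PolynomialDevissage

variable {Q M : Type*} [CommRing Q] [AddCommGroup M] [Module Q M] (φ : Module.End Q M)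
  (N : Submodule Q M)

/-- The submodule `N + φ N + ⋯ + φ ^ (k - 1) N`. -/
def powFiltration (k : ℕ) : Submodule Q M := ⨆ i < k, N.map (φ ^ i)

lemma powFiltration_zero : powFiltration φ N 0 = ⊥ := by simp [powFiltration]

lemma powFiltration_succ (k : ℕ) :
    powFiltration φ N (k + 1) = powFiltration φ N k ⊔ N.map (φ ^ k) :=
  Nat.iSup_lt_succ _ k

lemma powFiltration_mono : Monotone (powFiltration φ N) :=
  fun _ _ h => biSup_mono fun _ hi => hi.trans_le h

lemma apply_mem_powFiltration_succ {k : ℕ} {m : M} (hm : m ∈ powFiltration φ N k) :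
    φ m ∈ powFiltration φ N (k + 1) := by
  suffices powFiltration φ N k ≤ (powFiltration φ N (k + 1)).comap φ from this hm
  refine iSup₂_le fun i hi => Submodule.map_le_iff_le_comap.1 ?_
  rw [← Submodule.map_comp, ← Module.End.mul_eq_comp, ← pow_succ']
  exact le_iSup₂_of_le (i + 1) (Nat.succ_lt_succ hi) le_rfl

lemma pow_apply_mem_powFiltration_succ (k : ℕ) (n : N) :
    (φ ^ k) n ∈ powFiltration φ N (k + 1) := by
  rw [powFiltration_succ]
  exact Submodule.mem_sup_right (Submodule.mem_map_of_mem n.2)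

/-- Multiplication by `φ ^ k` from `N` to the `k`-th graded piece of the filtration
`powFiltration`. -/
def toGradedPiece (k : ℕ) : N →ₗ[Q]
    powFiltration φ N (k + 1) ⧸ (powFiltration φ N k).submoduleOf (powFiltration φ N (k + 1)) :=
  (Submodule.mkQ _).comp
    (((φ ^ k).comp N.subtype).codRestrict _ (pow_apply_mem_powFiltration_succ φ N k))

lemma toGradedPiece_eq_zero_iff {k : ℕ} {n : N} :
    toGradedPiece φ N k n = 0 ↔ (φ ^ k) n ∈ powFiltration φ N k :=
  Submodule.Quotient.mk_eq_zero _

lemma toGradedPiece_surjective (k : ℕ) : Function.Surjective (toGradedPiece φ N k) := fun x => by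
  obtain ⟨⟨m, hm⟩, rfl⟩ := Submodule.mkQ_surjective _ x
  have hm' : m ∈ powFiltration φ N k ⊔ N.map (φ ^ k) := by rwa [← powFiltration_succ]
  obtain ⟨l, hl, _, ⟨n, hn, rfl⟩, h⟩ := Submodule.mem_sup.1 hm'
  refine ⟨⟨n, hn⟩, (Submodule.Quotient.eq _).2 ?_⟩
  change (φ ^ k) n - m ∈ powFiltration φ N k
  rw [← h, sub_add_cancel_right]
  exact neg_mem hl

lemma ker_toGradedPiece_mono : Monotone fun k => LinearMap.ker (toGradedPiece φ N k) :=
  monotone_nat_of_le_succ fun k n hn => by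
    rw [LinearMap.mem_ker, toGradedPiece_eq_zero_iff] at hn ⊢
    rw [pow_succ']
    exact apply_mem_powFiltration_succ φ N hn

lemma iSup_powFiltration_X_eq_top [Module Q[X] M] [IsScalarTower Q Q[X] M]
    (hN : Submodule.span Q[X] (N : Set M) = ⊤) :
    ⨆ k, powFiltration (Algebra.lsmul Q Q M (X : Q[X])) N k = ⊤ := by
  set W := ⨆ k, powFiltration (Algebra.lsmul Q Q M (X : Q[X])) N k
  have X_smul_mem {m : M} (hm : m ∈ W) : (X : Q[X]) • m ∈ W := by
    obtain ⟨k, hk⟩ := (Submodule.mem_iSup_of_directed _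
      (powFiltration_mono (Algebra.lsmul Q Q M (X : Q[X])) N).directed_le).1 hm
    exact Submodule.mem_iSup_of_mem (k + 1) (apply_mem_powFiltration_succ _ _ hk)
  let W' : Submodule Q[X] M :=
    { W.toAddSubmonoid with
      smul_mem' := fun p m hm => by
        induction p using Polynomial.induction_on with
        | C a =>
          rw [C_eq_algebraMap, algebraMap_smul]
          exact W.smul_mem a hm
        | add p q hp hq =>
          rw [add_smul]
          exact W.add_mem hp hq
        | monomial n a ih =>
          rw [pow_succ', ← mul_assoc, mul_comm _ X, mul_assoc, mul_smul]
          exact X_smul_mem ih }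
  have hNW : N ≤ W := fun n hn =>
    Submodule.mem_iSup_of_mem 1 (by simpa using pow_apply_mem_powFiltration_succ _ N 0 ⟨n, hn⟩)
  have hW' : W' = ⊤ := eq_top_iff.2 (hN ▸ Submodule.span_le.2 hNW)
  exact eq_top_iff.2 fun m _ => (hW' ▸ Submodule.mem_top : m ∈ W')

end PolynomialDevissage

section Domain

variable {D : Type u} [CommRing D]

variable (D) in
/-- Every finite `Q`-module is flat over `D` after inverting a nonzero element of `D`. -/
def HasGenericFlatness (Q : Type u) [CommRing Q] [Algebra D Q] : Prop :=
  ∀ (M : Type u) [AddCommGroup M] [Module D M] [Module Q M] [IsScalarTower D Q M]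
    [Module.Finite Q M], ∃ b : D, b ≠ 0 ∧ IsFlatOn ⊥ b M

lemma HasGenericFlatness.of_surjective {Q Q' : Type u} [CommRing Q] [CommRing Q'] [Algebra D Q]
    [Algebra D Q'] (h : HasGenericFlatness D Q) (π : Q →ₐ[D] Q') (hπ : Function.Surjective π) :
    HasGenericFlatness D Q' := fun M _ _ _ _ _ => by
  let _ : Algebra Q Q' := π.toRingHom.toAlgebra
  let _ : Module Q M := Module.compHom M π.toRingHom
  have : IsScalarTower Q Q' M := ⟨fun a b n => mul_smul (π a) b n⟩
  have : IsScalarTower D Q M := ⟨fun a b n => by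
    change π (a • b) • n = a • (π b • n)
    rw [map_smul, smul_assoc]⟩
  have : Module.Finite Q Q' := Module.Finite.of_surjective (Algebra.linearMap Q Q') hπ
  have : Module.Finite Q M := Module.Finite.trans Q' M
  exact h M

variable [IsDomain D]

lemma exists_isFlatOn_of_finite [IsNoetherianRing D] (M : Type u) [AddCommGroup M] [Module D M]
    [hM : Module.Finite D M] : ∃ b : D, b ≠ 0 ∧ IsFlatOn ⊥ b M := by
  induction hM using IsNoetherianRing.induction_on_isQuotientEquivQuotientPrime D with
  | subsingleton N =>
    exact ⟨1, one_ne_zero, .bot_of_forall_smul_eq_zero fun _ => Subsingleton.elim _ _⟩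
  | quotient N p e =>
    by_cases hp : p.1 = ⊥
    · have : Module.Flat D (D ⧸ p.1) :=
        Module.Flat.of_linearEquiv (Submodule.quotEquivOfEqBot p.1 hp)
      exact ⟨1, one_ne_zero, (IsFlatOn.of_moduleFlat ⊥ 1).of_linearEquiv e.symm⟩
    · obtain ⟨b, hb, hb0⟩ := Submodule.exists_mem_ne_zero_of_ne_bot hp
      refine ⟨b, hb0, .of_linearEquiv (.bot_of_forall_smul_eq_zero fun m => ?_) e.symm⟩
      obtain ⟨m, rfl⟩ := Submodule.mkQ_surjective _ m
      exact (Submodule.Quotient.mk_eq_zero _).2 (Ideal.mul_mem_right m _ hb)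
  | exact N₁ N₂ N₃ f g hf hg hfg h₁ h₃ =>
    obtain ⟨b₁, hb₁, h₁⟩ := h₁
    obtain ⟨b₃, hb₃, h₃⟩ := h₃
    exact ⟨b₁ * b₃, mul_ne_zero hb₁ hb₃, .bot_of_exact hf hfg hg
      (h₁.mono le_rfl (dvd_mul_right _ _)) (h₃.mono le_rfl (dvd_mul_left _ _))⟩

namespace HasGenericFlatness

lemma of_algebraMap_surjective [IsNoetherianRing D] {Q : Type u} [CommRing Q] [Algebra D Q]
    (h : Function.Surjective (algebraMap D Q)) : HasGenericFlatness D Q := fun M _ _ _ _ _ => by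
  have : Module.Finite D Q := Module.Finite.of_surjective (Algebra.linearMap D Q) h
  have : Module.Finite D M := Module.Finite.trans Q M
  exact exists_isFlatOn_of_finite M

lemma exists_forall_isFlatOn_quotient {Q N : Type u} [CommRing Q] [Algebra D Q]
    [AddCommGroup N] [Module D N] [Module Q N] [IsScalarTower D Q N] [IsNoetherian Q N]
    (h : HasGenericFlatness D Q) {K : ℕ → Submodule Q N} (hK : Monotone K) :
    ∃ c : D, c ≠ 0 ∧ ∀ k, IsFlatOn ⊥ c (N ⧸ K k) := by
  obtain ⟨k₀, stable⟩ := WellFoundedGT.monotone_chain_condition ⟨K, hK⟩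
  choose b hb0 hb using fun k => h (N ⧸ K k)
  let c := ∏ k ∈ Finset.range (k₀ + 1), b k
  have flat_of_le {k} (hk : k ≤ k₀) : IsFlatOn ⊥ c (N ⧸ K k) :=
    (hb k).mono le_rfl (Finset.dvd_prod_of_mem b (Finset.mem_range_succ_iff.2 hk))
  refine ⟨c, Finset.prod_ne_zero_iff.2 fun k _ => hb0 k, fun k => ?_⟩
  rcases le_total k k₀ with hk | hk
  · exact flat_of_le hk
  · rw [← show K k₀ = K k from stable k hk]
    exact flat_of_le le_rfl

lemma polynomial {Q : Type u} [CommRing Q] [IsNoetherianRing Q] [Algebra D Q]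
    (h : HasGenericFlatness D Q) : HasGenericFlatness D Q[X] := fun M _ _ _ _ hM => by
  let _ : Module Q M := Module.compHom M (C : Q →+* Q[X])
  have : IsScalarTower Q Q[X] M := ⟨fun a p m => by rw [smul_eq_C_mul, mul_smul]; rfl⟩
  have : IsScalarTower D Q M := ⟨fun d a m => by
    change C (d • a) • m = d • (C a • m)
    rw [← smul_C, smul_assoc]⟩
  obtain ⟨s, hs⟩ := hM.fg_top
  let N : Submodule Q M := Submodule.span Q s
  have : Module.Finite Q N := Module.Finite.iff_fg.2 ⟨s, rfl⟩
  have : IsNoetherian Q N := isNoetherian_of_isNoetherianRing_of_finite Q N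
  have hN : Submodule.span Q[X] (N : Set M) = ⊤ :=
    eq_top_iff.2 (hs ▸ Submodule.span_mono Submodule.subset_span)
  let φ : Module.End Q M := Algebra.lsmul Q Q M (X : Q[X])
  obtain ⟨c, hc, flat_quotient⟩ := h.exists_forall_isFlatOn_quotient (ker_toGradedPiece_mono φ N)
  refine ⟨c, hc, .bot_of_filtration (P := fun k => (powFiltration φ N k).restrictScalars D)
    (powFiltration_mono φ N) ?_ ?_ fun k => (flat_quotient k).of_linearEquiv ?_⟩
  · rw [powFiltration_zero, Submodule.restrictScalars_bot]
  · rw [← Submodule.restrictScalars_iSup, iSup_powFiltration_X_eq_top N hN,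
      Submodule.restrictScalars_top]
  · exact ((toGradedPiece φ N k).quotKerEquivOfSurjective
      (toGradedPiece_surjective φ N k)).restrictScalars D

lemma mvPolynomial [IsNoetherianRing D] (n : ℕ) :
    HasGenericFlatness D (MvPolynomial (Fin n) D) := by
  induction n with
  | zero => exact of_algebraMap_surjective (MvPolynomial.C_surjective (Fin 0))
  | succ n ih =>
    exact ih.polynomial.of_surjective (MvPolynomial.finSuccEquiv D n).symm.toAlgHom
      (MvPolynomial.finSuccEquiv D n).symm.surjective

end HasGenericFlatness

lemma exists_isFlatOn_of_finiteType [IsNoetherianRing D] (R : Type u) [CommRing R] [Algebra D R]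
    [hR : Algebra.FiniteType D R] : ∃ b : D, b ≠ 0 ∧ IsFlatOn ⊥ b R := by
  obtain ⟨n, f, hf⟩ := Algebra.FiniteType.iff_quotient_mvPolynomial''.1 hR
  exact (HasGenericFlatness.mvPolynomial n).of_surjective f hf R

end Domain

section Noetherian

variable {A R : Type u} [CommRing A] [IsNoetherianRing A] [CommRing R] [Algebra A R]
  [Algebra.FiniteType A R]

lemma exists_notMem_isFlatOn_of_isPrime (p : Ideal A) [p.IsPrime] :
    ∃ b ∉ p, IsFlatOn p b R := by
  obtain ⟨b, hb0, hb⟩ := exists_isFlatOn_of_finiteType (D := A ⧸ p) ((A ⧸ p) ⊗[A] R)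
  obtain ⟨b, rfl⟩ := Ideal.Quotient.mk_surjective b
  refine ⟨b, fun h => hb0 (Ideal.Quotient.eq_zero_iff_mem.2 h), fun C _ _ hpC hbC => ?_⟩
  let _ : Algebra (A ⧸ p) C := (Ideal.Quotient.lift p (algebraMap A C) fun a ha =>
    Ideal.mem_bot.1 (hpC ▸ Ideal.mem_map_of_mem _ ha)).toAlgebra
  have : IsScalarTower A (A ⧸ p) C := .of_algebraMap_eq fun _ => rfl
  have := hb C Ideal.map_bot hbC
  exact Module.Flat.of_linearEquiv
    (AlgebraTensorModule.cancelBaseChange A (A ⧸ p) C C R).symm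

lemma exists_notMem_isFlatOn {J : Ideal A} (hJ : J ≠ ⊤) : ∃ c ∉ J, IsFlatOn J c R := by
  have one_ne_zero : (Submodule.Quotient.mk 1 : A ⧸ J) ≠ 0 := fun h =>
    hJ ((Ideal.eq_top_iff_one J).2 ((Submodule.Quotient.mk_eq_zero J).1 h))
  obtain ⟨p, hp, -⟩ := exists_le_isAssociatedPrime_of_isNoetherianRing A _ one_ne_zero
  obtain ⟨hp, x, hx⟩ := isAssociatedPrime_iff.1 hp
  obtain ⟨a, rfl⟩ := Submodule.mkQ_surjective _ x
  have mem_p {q : A} : q ∈ p ↔ a * q ∈ J := by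
    rw [hx, Submodule.mem_colon_singleton, Submodule.mem_bot, ← map_smul, Submodule.mkQ_apply,
      Submodule.Quotient.mk_eq_zero, smul_eq_mul, mul_comm]
  obtain ⟨b, hbp, hb⟩ := exists_notMem_isFlatOn_of_isPrime (R := R) p
  exact ⟨a * b, fun h => hbp (mem_p.2 h), hb.of_colon fun q hq => mem_p.1 hq⟩

end Noetherian

end GenericFlatness

section ColonSubmodule

variable {A : Type*} [CommRing A] {M P : Type*} [AddCommGroup M] [Module A M] [AddCommGroup P]
  [Module A P]

/-- The colon submodule `(N : c)` of all `p` with `c • p ∈ N`; thus `colonBy ⊥ c` is the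
`c`-torsion. -/
def colonBy (N : Submodule A P) (c : A) : Submodule A P :=
  N.comap (LinearMap.lsmul A P c)

lemma mem_colonBy {N : Submodule A P} {c : A} {p : P} : p ∈ colonBy N c ↔ c • p ∈ N := Iff.rfl

lemma le_colonBy (N : Submodule A P) (c : A) : N ≤ colonBy N c := fun _ => N.smul_mem c

lemma colonBy_mono {N N' : Submodule A P} (h : N ≤ N') (c : A) : colonBy N c ≤ colonBy N' c :=
  Submodule.comap_mono h

/-- Multiplication by `c` from `(N : c)` to `N`. -/
def colonMul (N : Submodule A P) (c : A) : colonBy N c →ₗ[A] N :=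
  (LinearMap.lsmul A P c).restrict fun _ h => h

lemma subtype_comp_colonMul (N : Submodule A P) (c : A) :
    N.subtype ∘ₗ colonMul N c = c • (colonBy N c).subtype := rfl

lemma mem_smul_top_iff_exists_lTensor_subtype {I : Ideal A} {m : M} :
    m ∈ I • (⊤ : Submodule A M) ↔ ∃ x, TensorProduct.rid A M (I.subtype.lTensor M x) = m := by
  rw [← Ideal.subtype_rTensor_range, LinearMap.mem_range,
    (TensorProduct.comm A I M).surjective.exists]
  refine exists_congr fun x => Eq.congr_left ?_
  rw [LinearMap.lTensor_comm, TensorProduct.rid_comm, LinearMap.comp_apply, LinearEquiv.coe_coe]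

lemma exists_rTensor_torsion_eq (F : Type*) [AddCommGroup F] [Module A F] [Module.Flat A F] {c : A}
    {q : M ⊗[A] F} (hq : c • q = 0) :
    ∃ b, (colonBy (⊥ : Submodule A M) c).subtype.rTensor F b = q :=
  (Module.Flat.rTensor_exact F (LinearMap.exact_subtype_ker_map (LinearMap.lsmul A M c)) q).1 <|
    (DFunLike.congr_fun (LinearMap.rTensor_smul_action F M c) q).trans hq

end ColonSubmodule

section LocalCriterion

variable {A : Type u} [CommRing A] {c : A}

section Modules

variable {M P : Type*} [AddCommGroup M] [Module A M] [AddCommGroup P] [Module A P]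

lemma exists_lTensor_colonMul_eq (hM : IsFlatOn (Ideal.span {c}) 1 M) {N : Submodule A P}
    {x : M ⊗[A] N} {y : M ⊗[A] P} (hxy : N.subtype.lTensor M x = c • y) :
    ∃ x', (colonMul N c).lTensor M x' = x := by
  let cP := LinearMap.range (LinearMap.lsmul A P c)
  have hle : LinearMap.range (colonMul N c) ≤ cP.comap N.subtype := by
    rintro _ ⟨p, rfl⟩
    exact ⟨p, rfl⟩
  let f := (LinearMap.range (colonMul N c)).mapQ cP N.subtype hle
  have hf : Function.Injective f := by
    refine LinearMap.ker_eq_bot.1 (Submodule.ker_liftQ_eq_bot _ _ _ fun n hn => ?_)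
    obtain ⟨p, hp⟩ := (Submodule.Quotient.mk_eq_zero cP).1 hn
    exact ⟨⟨p, mem_colonBy.2 (hp.symm ▸ n.2 : LinearMap.lsmul A P c p ∈ N)⟩, Subtype.ext hp⟩
  have torsion : ∀ a ∈ Ideal.span {c}, ∀ p : P ⧸ cP, a • p = 0 := by
    intro a ha p
    obtain ⟨b, rfl⟩ := Ideal.mem_span_singleton'.1 ha
    obtain ⟨p, rfl⟩ := cP.mkQ_surjective p
    rw [← map_smul, Submodule.mkQ_apply, Submodule.Quotient.mk_eq_zero, mul_comm, mul_smul]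
    exact ⟨b • p, rfl⟩
  refine (lTensor_exact M (LinearMap.exact_map_mkQ_range (colonMul N c))
    (Submodule.mkQ_surjective _) x).1 ?_
  refine (LinearMap.lTensor_inj_iff_rTensor_inj M f).2 (hM.rTensor_injective hf torsion) ?_
  have hzero : c • cP.mkQ = 0 := LinearMap.range_mkQ_comp (LinearMap.lsmul A P c)
  rw [map_zero, ← LinearMap.lTensor_comp_apply, Submodule.mapQ_mkQ, LinearMap.lTensor_comp_apply,
    hxy, map_smul, ← LinearMap.smul_apply, ← LinearMap.lTensor_smul, hzero, LinearMap.lTensor_zero,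
    LinearMap.zero_apply]

lemma exists_lTensor_add_rTensor_eq_of_surjective {F : Type*} [AddCommGroup F] [Module A F]
    [Module.Flat A F] {π : F →ₗ[A] P} (hπ : Function.Surjective π)
    (hM : IsFlatOn (Ideal.span {c}) 1 M) {x : M ⊗[A] P} (hx : c • x = 0) :
    ∃ a b, (colonBy (⊥ : Submodule A P) c).subtype.lTensor M a +
      (colonBy (⊥ : Submodule A M) c).subtype.rTensor P b = x := by
  obtain ⟨q, rfl⟩ := LinearMap.lTensor_surjective M hπ x
  obtain ⟨y, hy⟩ := (lTensor_exact M (LinearMap.exact_subtype_ker_map π) hπ (c • q)).1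
    ((map_smul _ c q).trans hx)
  obtain ⟨y', rfl⟩ := exists_lTensor_colonMul_eq hM hy
  let L := colonBy (LinearMap.ker π) c
  obtain ⟨b, hb⟩ := exists_rTensor_torsion_eq F (c := c) (q := q - L.subtype.lTensor M y') <| by
    rw [smul_sub, ← hy, ← LinearMap.lTensor_comp_apply, subtype_comp_colonMul,
      LinearMap.lTensor_smul, LinearMap.smul_apply, sub_self]
  let πL : L →ₗ[A] colonBy (⊥ : Submodule A P) c := π.restrict fun l hl =>
    (map_smul π c l).symm.trans hl
  have restrict : (colonBy (⊥ : Submodule A P) c).subtype ∘ₗ πL = π ∘ₗ L.subtype := rfl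
  refine ⟨πL.lTensor M y', π.lTensor _ b, ?_⟩
  rw [← lTensor_rTensor_comm, hb, ← LinearMap.lTensor_comp_apply, restrict,
    LinearMap.lTensor_comp_apply, ← map_add, add_sub_cancel]

lemma exists_lTensor_add_rTensor_eq (hM : IsFlatOn (Ideal.span {c}) 1 M) {x : M ⊗[A] P}
    (hx : c • x = 0) :
    ∃ a b, (colonBy (⊥ : Submodule A P) c).subtype.lTensor M a +
      (colonBy (⊥ : Submodule A M) c).subtype.rTensor P b = x :=
  exists_lTensor_add_rTensor_eq_of_surjective (Finsupp.linearCombination_id_surjective A P) hM hx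

lemma exists_lTensor_colonMul_eq_and_lTensor_subtype_eq_zero (hM : IsFlatOn (Ideal.span {c}) 1 M)
    (torsion : colonBy (⊥ : Submodule A M) c ≤ colonBy (⊥ : Ideal A) c • ⊤)
    {I : Ideal A} {x : M ⊗[A] I} (hx : I.subtype.lTensor M x = 0) :
    ∃ x', (colonMul I c).lTensor M x' = x ∧ (colonBy I c).subtype.lTensor M x' = 0 := by
  obtain ⟨y, rfl⟩ := exists_lTensor_colonMul_eq hM (hx.trans (smul_zero c).symm)
  rw [← LinearMap.lTensor_comp_apply, subtype_comp_colonMul, LinearMap.lTensor_smul,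
    LinearMap.smul_apply] at hx
  obtain ⟨z, hz⟩ := mem_smul_top_iff_exists_lTensor_subtype.1 <|
    torsion (x := TensorProduct.rid A M ((colonBy I c).subtype.lTensor M y)) <| by
      rw [mem_colonBy, ← map_smul, hx, map_zero]
      exact zero_mem _
  let incl := Submodule.inclusion (colonBy_mono (bot_le : ⊥ ≤ I) c)
  have colonMul_incl : colonMul I c ∘ₗ incl = 0 := LinearMap.ext fun a => Subtype.ext a.2
  refine ⟨y - incl.lTensor M z, ?_, ?_⟩
  · rw [map_sub, ← LinearMap.lTensor_comp_apply, colonMul_incl, LinearMap.lTensor_zero,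
      LinearMap.zero_apply, sub_zero]
  · rw [map_sub, ← LinearMap.lTensor_comp_apply, Submodule.subtype_comp_inclusion,
      (TensorProduct.rid A M).injective hz, sub_self]

end Modules

/-- If `A` is Noetherian and `(I : c) = I`, then multiplication by `c` is surjective, hence
injective, on the kernel of `S ⊗ I → S`. -/
theorem flat_of_isFlatOn_span [IsNoetherianRing A] {S : Type*} [CommRing S] [IsNoetherianRing S]
    [Algebra A S] (hc : IsFlatOn (Ideal.span {c}) 1 S) (hc' : IsFlatOn ⊥ c S)
    (torsion : colonBy (⊥ : Submodule A S) c ≤ colonBy (⊥ : Ideal A) c • ⊤) :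
    Module.Flat A S := by
  refine Module.Flat.iff_lTensor_injective'.2 fun I => ?_
  induction I using WellFoundedGT.induction with | ind I ih
  have lift (x : S ⊗[A] I) (hx : I.subtype.lTensor S x = 0) :=
    exists_lTensor_colonMul_eq_and_lTensor_subtype_eq_zero hc torsion hx
  refine (injective_iff_map_eq_zero _).2 fun x hx => ?_
  obtain hI | hI := (le_colonBy I c).lt_or_eq
  · obtain ⟨x', rfl, hx'⟩ := lift x hx
    rw [(injective_iff_map_eq_zero _).1 (ih _ hI) x' hx', map_zero]
  let Z := LinearMap.ker (AlgebraTensorModule.lTensor S S I.subtype)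
  let mulc : Module.End S Z := algebraMap A (Module.End S Z) c
  have surj : Function.Surjective mulc := fun ⟨z, hz⟩ => by
    obtain ⟨z', rfl, hz'⟩ := lift z hz
    let incl := Submodule.inclusion hI.ge
    refine ⟨⟨incl.lTensor S z', ?_⟩, Subtype.ext ?_⟩
    · change I.subtype.lTensor S _ = 0
      rw [← LinearMap.lTensor_comp_apply, Submodule.subtype_comp_inclusion, hz']
    · change c • incl.lTensor S z' = _
      rw [← LinearMap.smul_apply, ← LinearMap.lTensor_smul]
      rfl
  have : IsNoetherian S (S ⊗[A] I) := isNoetherian_of_isNoetherianRing_of_finite S _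
  have inj := IsNoetherian.injective_of_surjective_endomorphism (M := Z) mulc surj
  obtain ⟨n, hn⟩ := hc'.exists_pow_smul_eq_zero I.subtype_injective hx
  have mulc_pow : (mulc ^ n) ⟨x, hx⟩ = 0 := by
    rw [← map_pow]
    exact Subtype.ext hn
  rw [Module.End.coe_pow] at mulc_pow
  exact congrArg Subtype.val (inj.iterate n (mulc_pow.trans (iterate_map_zero mulc n).symm))

end LocalCriterion

section Quotient

variable {A : Type*} [CommRing A] {J : Ideal A} {M : Type*} [AddCommGroup M] [Module A M]

lemma quotient_one_tmul_eq_zero_iff {m : M} :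
    (1 : A ⧸ J) ⊗ₜ[A] m = 0 ↔ m ∈ J • (⊤ : Submodule A M) := by
  rw [← (TensorProduct.quotTensorEquivQuotSMul M J).map_eq_zero_iff,
    ← map_one (Ideal.Quotient.mk J), TensorProduct.quotTensorEquivQuotSMul_mk_tmul, one_smul,
    Submodule.Quotient.mk_eq_zero]

lemma quotient_one_tmul_mem_map_smul_top_iff {K : Ideal A} (hJK : J ≤ K) {m : M} :
    (1 : A ⧸ J) ⊗ₜ[A] m ∈ K.map (algebraMap A (A ⧸ J)) • (⊤ : Submodule (A ⧸ J) ((A ⧸ J) ⊗[A] M)) ↔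
      m ∈ K • (⊤ : Submodule A M) := by
  let μ := TensorProduct.mk A (A ⧸ J) M 1
  have hμ : LinearMap.range μ = ⊤ :=
    LinearMap.range_eq_top.2 (TensorProduct.mk_surjective A M (A ⧸ J) Ideal.Quotient.mk_surjective)
  rw [← Submodule.restrictScalars_mem A, Ideal.smul_restrictScalars, Submodule.restrictScalars_top,
    ← hμ, ← Submodule.map_top, ← Submodule.map_smul'', Submodule.mem_map]
  refine ⟨fun ⟨m', hm', h⟩ => ?_, fun hm => ⟨m, hm, rfl⟩⟩
  have : m - m' ∈ J • (⊤ : Submodule A M) := by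
    rw [← quotient_one_tmul_eq_zero_iff, TensorProduct.tmul_sub, sub_eq_zero]
    exact h.symm
  rw [← sub_add_cancel m m']
  exact add_mem (Submodule.smul_mono_left hJK this) hm'

lemma colonBy_bot_quotient (c : A) : colonBy (⊥ : Ideal (A ⧸ J)) (algebraMap A (A ⧸ J) c) =
    Ideal.map (algebraMap A (A ⧸ J)) (colonBy J c) := by
  ext a
  obtain ⟨a, rfl⟩ := Ideal.Quotient.mk_surjective a
  rw [Ideal.Quotient.algebraMap_eq, Ideal.mem_quotient_iff_mem (le_colonBy J c), mem_colonBy,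
    mem_colonBy, smul_eq_mul, smul_eq_mul, ← map_mul, Ideal.mem_bot, Ideal.Quotient.eq_zero_iff_mem]

lemma smul_one_tmul_quotient {c : A} {m : M} : algebraMap A (A ⧸ J) c • (1 : A ⧸ J) ⊗ₜ[A] m =
    (1 : A ⧸ J) ⊗ₜ[A] (c • m) := by
  rw [algebraMap_smul, TensorProduct.tmul_smul]

end Quotient

lemma IsFlatOn.quotient {A : Type u} [CommRing A] {J : Ideal A} {c : A} {M : Type*} [AddCommGroup M]
    [Module A M] (hM : IsFlatOn (J ⊔ Ideal.span {c}) 1 M) :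
    IsFlatOn (Ideal.span {algebraMap A (A ⧸ J) c}) 1 ((A ⧸ J) ⊗[A] M) := by
  simpa only [Ideal.map_sup, Ideal.Quotient.algebraMap_eq, Ideal.map_quotient_self, bot_sup_eq,
    Ideal.map_span, Set.image_singleton, map_one] using hM.baseChange (A ⧸ J)

theorem IsFlatOn.one_of_colonBy_le {A : Type u} [CommRing A] [IsNoetherianRing A] {S : Type*}
    [CommRing S] [IsNoetherianRing S] [Algebra A S] {J : Ideal A} {c : A}
    (hc : IsFlatOn (J ⊔ Ideal.span {c}) 1 S) (hc' : IsFlatOn J c S)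
    (colon : colonBy (J • ⊤ : Submodule A S) c ≤ colonBy J c • ⊤) : IsFlatOn J 1 S := by
  have hS : IsNoetherianRing ((A ⧸ J) ⊗[A] S) := isNoetherianRing_of_surjective S _
    (Algebra.TensorProduct.includeRight (R := A) (A := A ⧸ J)).toRingHom
    (TensorProduct.mk_surjective A S (A ⧸ J) Ideal.Quotient.mk_surjective)
  have flat : Module.Flat (A ⧸ J) ((A ⧸ J) ⊗[A] S) := by
    refine flat_of_isFlatOn_span hc.quotient ?_ fun x hx => ?_
    · simpa only [Ideal.Quotient.algebraMap_eq, Ideal.map_quotient_self]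
        using hc'.baseChange (A ⧸ J)
    · obtain ⟨s, rfl⟩ :=
        TensorProduct.mk_surjective A S (A ⧸ J) Ideal.Quotient.mk_surjective x
      rw [TensorProduct.mk_apply] at hx ⊢
      rw [mem_colonBy, smul_one_tmul_quotient, Submodule.mem_bot,
        quotient_one_tmul_eq_zero_iff] at hx
      rw [colonBy_bot_quotient, quotient_one_tmul_mem_map_smul_top_iff (le_colonBy J c)]
      exact colon hx
  intro C _ _ hJ _
  let _ : Algebra (A ⧸ J) C := (Ideal.Quotient.liftₐ J (Algebra.ofId A C) fun a ha =>
    Ideal.mem_bot.1 (hJ ▸ Ideal.mem_map_of_mem _ ha)).toAlgebra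
  have : IsScalarTower A (A ⧸ J) C := .of_algebraMap_eq fun _ => rfl
  exact Module.Flat.of_linearEquiv (AlgebraTensorModule.cancelBaseChange A (A ⧸ J) C C S).symm

section BaseChangeOfTorsion

variable {A A' : Type u} [CommRing A] [CommRing A'] [Algebra A A'] {c : A} {M Q : Type*}
  [AddCommGroup M] [Module A M] [AddCommGroup Q] [Module A' Q]

lemma apply_mem_of_colonBy_bot (hM : IsFlatOn (Ideal.span {c}) 1 M) (φ : A' ⊗[A] M →ₗ[A'] Q)
    (hφ : ∀ m ∈ colonBy (⊥ : Submodule A M) c,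
      φ (1 ⊗ₜ m) ∈ colonBy (⊥ : Ideal A') (algebraMap A A' c) • (⊤ : Submodule A' Q))
    {x : A' ⊗[A] M} (hx : c • x = 0) :
    φ x ∈ colonBy (⊥ : Ideal A') (algebraMap A A' c) • (⊤ : Submodule A' Q) := by
  have hφ_tmul (a : A') (m : M) : φ (a ⊗ₜ m) = a • φ (1 ⊗ₜ m) := by
    rw [← map_smul, TensorProduct.smul_tmul', smul_eq_mul, mul_one]
  obtain ⟨x, rfl⟩ := (TensorProduct.comm A M A').surjective x
  rw [← map_smul, LinearEquiv.map_eq_zero_iff] at hx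
  obtain ⟨y, z, rfl⟩ := exists_lTensor_add_rTensor_eq hM hx
  clear hx
  rw [map_add, map_add]
  refine add_mem ?_ ?_
  · induction y with
    | zero => simp
    | add x y hx hy =>
      rw [map_add, map_add, map_add]
      exact add_mem hx hy
    | tmul m a =>
      rw [LinearMap.lTensor_tmul, TensorProduct.comm_tmul, hφ_tmul]
      refine Submodule.smul_mem_smul ?_ Submodule.mem_top
      rw [mem_colonBy, smul_eq_mul, ← Algebra.smul_def]
      exact a.2
  · induction z with
    | zero => simp
    | add x y hx hy =>
      rw [map_add, map_add, map_add]
      exact add_mem hx hy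
    | tmul m a =>
      rw [LinearMap.rTensor_tmul, TensorProduct.comm_tmul, hφ_tmul]
      exact Submodule.smul_mem _ _ (hφ m m.2)

lemma apply_mem_of_colonBy {J : Ideal A} (hM : IsFlatOn (J ⊔ Ideal.span {c}) 1 M)
    (φ : A' ⊗[A] M →ₗ[A'] Q)
    (hφ : ∀ m ∈ colonBy (J • ⊤ : Submodule A M) c,
      φ (1 ⊗ₜ m) ∈ colonBy (J.map (algebraMap A A')) (algebraMap A A' c) • (⊤ : Submodule A' Q))
    {x : A' ⊗[A] M} (hx : x ∈ colonBy
      (J.map (algebraMap A A') • ⊤ : Submodule A' (A' ⊗[A] M)) (algebraMap A A' c)) :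
    φ x ∈ colonBy (J.map (algebraMap A A')) (algebraMap A A' c) • (⊤ : Submodule A' Q) := by
  let J' := J.map (algebraMap A A')
  let _ : Algebra (A ⧸ J) (A' ⧸ J') :=
    (Ideal.quotientMap J' (algebraMap A A') Ideal.le_comap_map).toAlgebra
  have : IsScalarTower A (A ⧸ J) (A' ⧸ J') := .of_algebraMap_eq fun _ => rfl
  let e : (A' ⧸ J') ⊗[A ⧸ J] ((A ⧸ J) ⊗[A] M) ≃ₗ[A' ⧸ J'] (A' ⧸ J') ⊗[A'] (A' ⊗[A] M) :=
    AlgebraTensorModule.cancelBaseChange A (A ⧸ J) (A' ⧸ J') (A' ⧸ J') M ≪≫ₗ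
      (AlgebraTensorModule.cancelBaseChange A A' (A' ⧸ J') (A' ⧸ J') M).symm
  have he (m : M) : e (1 ⊗ₜ (1 ⊗ₜ m)) = 1 ⊗ₜ (1 ⊗ₜ m) := by simp [e]
  have hcc : algebraMap (A ⧸ J) (A' ⧸ J') (algebraMap A (A ⧸ J) c) =
      algebraMap A' (A' ⧸ J') (algebraMap A A' c) := rfl
  have hmem := apply_mem_of_colonBy_bot (x := e.symm (1 ⊗ₜ x)) hM.quotient
    (φ.baseChange (A' ⧸ J') ∘ₗ e)
  rw [hcc, colonBy_bot_quotient, LinearMap.comp_apply, LinearEquiv.coe_coe, e.apply_symm_apply,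
    LinearMap.baseChange_tmul, quotient_one_tmul_mem_map_smul_top_iff (le_colonBy _ _)] at hmem
  refine hmem (fun m hm => ?_) ?_
  · obtain ⟨m, rfl⟩ := TensorProduct.mk_surjective A M (A ⧸ J) Ideal.Quotient.mk_surjective m
    rw [TensorProduct.mk_apply] at hm ⊢
    rw [mem_colonBy, smul_one_tmul_quotient, Submodule.mem_bot, quotient_one_tmul_eq_zero_iff] at hm
    rw [LinearMap.comp_apply, LinearEquiv.coe_coe, he, LinearMap.baseChange_tmul,
      quotient_one_tmul_mem_map_smul_top_iff (le_colonBy _ _)]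
    exact hφ m hm
  · rw [← algebraMap_smul (A' ⧸ J') (algebraMap A (A ⧸ J) c), ← map_smul, hcc,
      smul_one_tmul_quotient, quotient_one_tmul_eq_zero_iff.2 (mem_colonBy.1 hx), map_zero]

end BaseChangeOfTorsion

section Away

lemma colonBy_le_of_isLocalization_away {A Q S : Type*} [CommRing A] [CommRing Q] [CommRing S]
    [Algebra A Q] [Algebra Q S] [Algebra A S] [IsScalarTower A Q S] (w : Q)
    [IsLocalization.Away w S] {J : Ideal A} {c : A}
    (hw : ∀ q ∈ colonBy (J • ⊤ : Submodule A Q) c, w * q ∈ colonBy J c • (⊤ : Submodule A Q)) :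
    colonBy (J • ⊤ : Submodule A S) c ≤ colonBy J c • ⊤ := by
  simp only [Ideal.smul_top_eq_map, mem_colonBy, Submodule.restrictScalars_mem] at hw
  intro s hs
  rw [mem_colonBy, Ideal.smul_top_eq_map, Submodule.restrictScalars_mem,
    IsScalarTower.algebraMap_eq A Q S, ← Ideal.map_map] at hs
  rw [Ideal.smul_top_eq_map, Submodule.restrictScalars_mem, IsScalarTower.algebraMap_eq A Q S,
    ← Ideal.map_map]
  obtain ⟨q, d, rfl⟩ := IsLocalization.exists_mk'_eq (Submonoid.powers w) s
  rw [← algebraMap_smul Q, IsLocalization.smul_mk'] at hs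
  rw [IsLocalization.mk'_mem_map_algebraMap_iff] at hs ⊢
  obtain ⟨n, hn, hnq⟩ := hs
  refine ⟨w * n, mul_mem (Submonoid.mem_powers w) hn, ?_⟩
  rw [mul_assoc]
  exact hw _ (by rwa [Algebra.smul_def, mul_left_comm])

variable {A A' S S' : Type u} [CommRing A] [CommRing A'] [Algebra A A'] [CommRing S] [Algebra A S]
  [CommRing S'] [Algebra A' S'] [Algebra (A' ⊗[A] S) S'] [IsScalarTower A' (A' ⊗[A] S) S']

lemma IsFlatOn.baseChange_away (w : A' ⊗[A] S) [IsLocalization.Away w S'] {J : Ideal A} {c : A}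
    (h : IsFlatOn J c S) :
    IsFlatOn (J.map (algebraMap A A')) (algebraMap A A' c) S' :=
  have : Module.Flat (A' ⊗[A] S) S' := IsLocalization.flat S' (Submonoid.powers w)
  (h.baseChange A').of_flat (S := A' ⊗[A] S)

lemma IsFlatOn.one_baseChange_away [IsNoetherianRing A'] [Algebra.FiniteType A S] (w : A' ⊗[A] S)
    [IsLocalization.Away w S'] {J : Ideal A} {c : A} (hc : IsFlatOn (J ⊔ Ideal.span {c}) 1 S)
    (hc' : IsFlatOn J c S)
    (hw : ∀ s ∈ colonBy (J • ⊤ : Submodule A S) c, w * (1 ⊗ₜ s) ∈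
      colonBy (J.map (algebraMap A A')) (algebraMap A A' c) • (⊤ : Submodule A' (A' ⊗[A] S))) :
    IsFlatOn (J.map (algebraMap A A')) 1 S' := by
  have : IsNoetherianRing (A' ⊗[A] S) := Algebra.FiniteType.isNoetherianRing A' _
  have : IsNoetherianRing S' := IsLocalization.isNoetherianRing (Submonoid.powers w) S' this
  refine IsFlatOn.one_of_colonBy_le ?_ (hc'.baseChange_away w)
    (colonBy_le_of_isLocalization_away w fun q hq =>
      apply_mem_of_colonBy hc (LinearMap.mulLeft A' w) hw hq)
  simpa only [Ideal.map_sup, Ideal.map_span, Set.image_singleton, map_one]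
    using hc.baseChange_away (S' := S') w

end Away

section Descent

open Filter

/-- The finitely generated subalgebras of `A`, a directed set with union `A`. -/
abbrev FGSubalgebra (A₀ A : Type*) [CommRing A₀] [CommRing A] [Algebra A₀ A] :=
  {X : Subalgebra A₀ A // X.FG}

variable {A₀ A : Type*} [CommRing A₀] [CommRing A] [Algebra A₀ A] {J : Ideal A₀} {c : A₀}

namespace FGSubalgebra

instance : Nonempty (FGSubalgebra A₀ A) := ⟨⟨⊥, Subalgebra.fg_bot⟩⟩

instance : IsDirectedOrder (FGSubalgebra A₀ A) :=
  ⟨fun X Y => ⟨⟨X.1 ⊔ Y.1, X.2.sup Y.2⟩, Subtype.mk_le_mk.2 le_sup_left,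
    Subtype.mk_le_mk.2 le_sup_right⟩⟩

lemma eventually_mem (a : A) : ∀ᶠ X : FGSubalgebra A₀ A in atTop, a ∈ X.1 :=
  (eventually_ge_atTop ⟨Algebra.adjoin A₀ {a}, ⟨{a}, by rw [Finset.coe_singleton]⟩⟩).mono
    fun _ h => h (Algebra.self_mem_adjoin_singleton A₀ a)

lemma eventually_exists_mem_map {a : A} (ha : a ∈ J.map (algebraMap A₀ A)) :
    ∀ᶠ X : FGSubalgebra A₀ A in atTop, ∃ x ∈ J.map (algebraMap A₀ X.1), (x : A) = a := by
  induction ha using Submodule.span_induction with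
  | mem x hx =>
    obtain ⟨j, hj, rfl⟩ := hx
    exact .of_forall fun X => ⟨algebraMap A₀ X.1 j, Ideal.mem_map_of_mem _ hj, rfl⟩
  | zero => exact .of_forall fun X => ⟨0, zero_mem _, rfl⟩
  | add x y _ _ hx hy =>
    filter_upwards [hx, hy] with X ⟨x, hx, hx'⟩ ⟨y, hy, hy'⟩
    exact ⟨x + y, add_mem hx hy, by rw [← hx', ← hy']; rfl⟩
  | smul r x _ hx =>
    filter_upwards [hx, eventually_mem r] with X ⟨x, hx, hx'⟩ hr
    exact ⟨⟨r, hr⟩ * x, Ideal.mul_mem_left _ _ hx, by rw [← hx']; rfl⟩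

lemma eventually_exists_mem_colonBy {a : A}
    (ha : a ∈ colonBy (J.map (algebraMap A₀ A)) (algebraMap A₀ A c)) :
    ∀ᶠ X : FGSubalgebra A₀ A in atTop,
      ∃ x ∈ colonBy (J.map (algebraMap A₀ X.1)) (algebraMap A₀ X.1 c), (x : A) = a := by
  filter_upwards [eventually_mem a, eventually_exists_mem_map (mem_colonBy.1 ha)]
    with X ha ⟨y, hy, hya⟩
  refine ⟨⟨a, ha⟩, ?_, rfl⟩
  rwa [mem_colonBy, show algebraMap A₀ X.1 c • (⟨a, ha⟩ : X.1) = y from Subtype.ext hya.symm]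

end FGSubalgebra

open FGSubalgebra

variable (S : Type*) [CommRing S] [Algebra A₀ S]

/-- The map `X ⊗ S → A ⊗ S` induced by the inclusion of a subalgebra `X` into `A`. -/
noncomputable abbrev tensorVal (X : Subalgebra A₀ A) : X ⊗[A₀] S →ₐ[A₀] A ⊗[A₀] S :=
  Algebra.TensorProduct.map X.val (AlgHom.id A₀ S)

/-- The map `X ⊗ S → Y ⊗ S` induced by an inclusion `X ≤ Y` of subalgebras. -/
noncomputable abbrev tensorInclusion {X Y : Subalgebra A₀ A} (h : X ≤ Y) :
    X ⊗[A₀] S →ₐ[A₀] Y ⊗[A₀] S :=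
  Algebra.TensorProduct.map (Subalgebra.inclusion h) (AlgHom.id A₀ S)

variable {S}

lemma tensorVal_tensorInclusion {X Y : Subalgebra A₀ A} (h : X ≤ Y) (x : X ⊗[A₀] S) :
    tensorVal S Y (tensorInclusion S h x) = tensorVal S X x :=
  DFunLike.congr_fun (show (tensorVal S Y).comp (tensorInclusion S h) = tensorVal S X by
    ext <;> simp) x

lemma tensorInclusion_tensorInclusion {X Y Z : Subalgebra A₀ A} (h : X ≤ Y) (h' : Y ≤ Z)
    (x : X ⊗[A₀] S) :
    tensorInclusion S h' (tensorInclusion S h x) = tensorInclusion S (h.trans h') x :=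
  DFunLike.congr_fun (show (tensorInclusion S h').comp (tensorInclusion S h) =
    tensorInclusion S (h.trans h') by ext <;> simp) x

lemma cancelBaseChange_one_tmul {X : Subalgebra A₀ A} (x : X ⊗[A₀] S) :
    Algebra.TensorProduct.cancelBaseChange A₀ X A A S (1 ⊗ₜ x) = tensorVal S X x := by
  induction x with
  | zero => rw [tmul_zero, map_zero, map_zero]
  | add x y hx hy => rw [tmul_add, map_add, map_add, hx, hy]
  | tmul a s => simp [Algebra.smul_def]

lemma eventually_exists_tensorVal_eq (r : A ⊗[A₀] S) :
    ∀ᶠ X : FGSubalgebra A₀ A in atTop, ∃ x, tensorVal S X.1 x = r := by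
  induction r with
  | zero => exact .of_forall fun X => ⟨0, map_zero _⟩
  | add x y hx hy =>
    filter_upwards [hx, hy] with X ⟨x, hx⟩ ⟨y, hy⟩
    exact ⟨x + y, by rw [map_add, hx, hy]⟩
  | tmul a s => exact (eventually_mem a).mono fun X h => ⟨⟨a, h⟩ ⊗ₜ s, by simp⟩

variable (S J c) in
/-- The ideal `(J X : c)(X ⊗ S)` of `X ⊗ S`. -/
def colonTensor (X : Type*) [CommRing X] [Algebra A₀ X] : Ideal (X ⊗[A₀] S) :=
  Ideal.map (algebraMap X (X ⊗[A₀] S)) (colonBy (J.map (algebraMap A₀ X)) (algebraMap A₀ X c))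

lemma colonTensor_map_le {X Y : Type*} [CommRing X] [CommRing Y] [Algebra A₀ X] [Algebra A₀ Y]
    (f : X →ₐ[A₀] Y) : (colonTensor J c S X).map
      (Algebra.TensorProduct.map f (AlgHom.id A₀ S)) ≤ colonTensor J c S Y := by
  rw [colonTensor, Ideal.map_le_iff_le_comap, Ideal.map_le_iff_le_comap]
  intro x hx
  have hfx : f x ∈ colonBy (J.map (algebraMap A₀ Y)) (algebraMap A₀ Y c) := by
    have hmem := Ideal.mem_map_of_mem (f : X →+* Y) (mem_colonBy.1 hx)
    rw [Ideal.map_map, f.comp_algebraMap, algebraMap_smul] at hmem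
    rw [mem_colonBy, algebraMap_smul, ← map_smul]
    exact hmem
  rw [Ideal.mem_comap, Ideal.mem_comap, Algebra.TensorProduct.algebraMap_apply,
    Algebra.TensorProduct.map_tmul, map_one]
  exact Ideal.mem_map_of_mem (algebraMap Y (Y ⊗[A₀] S)) hfx

lemma eventually_exists_mem_colonTensor {r : A ⊗[A₀] S} (hr : r ∈ colonTensor J c S A) :
    ∀ᶠ X : FGSubalgebra A₀ A in atTop, ∃ x ∈ colonTensor J c S X.1, tensorVal S X.1 x = r := by
  induction hr using Submodule.span_induction with
  | mem x hx =>
    obtain ⟨a, ha, rfl⟩ := hx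
    filter_upwards [eventually_exists_mem_colonBy ha] with X ⟨x, hx, hxa⟩
    exact ⟨_, Ideal.mem_map_of_mem _ hx, by simp [hxa]⟩
  | zero => exact .of_forall fun X => ⟨0, zero_mem _, map_zero _⟩
  | add x y _ _ hx hy =>
    filter_upwards [hx, hy] with X ⟨x, hx, hxr⟩ ⟨y, hy, hyr⟩
    exact ⟨x + y, add_mem hx hy, by rw [map_add, hxr, hyr]⟩
  | smul r x _ hx =>
    filter_upwards [hx, eventually_exists_tensorVal_eq r] with X ⟨x, hx, hxr⟩ ⟨r, hr⟩
    exact ⟨r * x, Ideal.mul_mem_left _ _ hx, by rw [map_mul, hxr, hr, smul_eq_mul]⟩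

lemma eventually_tensorInclusion_mem_colonTensor {X : FGSubalgebra A₀ A} {x : X.1 ⊗[A₀] S}
    (hx : tensorVal S X.1 x ∈ colonTensor J c S A) :
    ∀ᶠ Y : FGSubalgebra A₀ A in atTop,
      ∀ h : X.1 ≤ Y.1, tensorInclusion S h x ∈ colonTensor J c S Y.1 := by
  obtain ⟨Z, ⟨y, hy, hyx⟩, hXZ⟩ :=
    ((eventually_exists_mem_colonTensor hx).and (eventually_ge_atTop X)).exists
  have heq : tensorVal S Z.1 y = tensorVal S Z.1 (tensorInclusion S hXZ x) := by
    rw [hyx, tensorVal_tensorInclusion]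
  obtain ⟨W, hZW, hW, hyW⟩ := TensorProduct.Algebra.eq_of_fg_of_subtype_eq Z.2 heq
  have hyW : tensorInclusion S hZW y = tensorInclusion S hZW (tensorInclusion S hXZ x) := hyW
  filter_upwards [eventually_ge_atTop ⟨W, hW⟩] with Y hWY h
  have hxy : tensorInclusion S h x = tensorInclusion S (hZW.trans hWY) y := by
    rw [← tensorInclusion_tensorInclusion hZW hWY, hyW, tensorInclusion_tensorInclusion,
      tensorInclusion_tensorInclusion]
  rw [hxy]
  exact colonTensor_map_le _ (Ideal.mem_map_of_mem _ hy)

theorem exists_fg_subalgebra_mul_mem_colonTensor {w : A ⊗[A₀] S} {s : Finset S}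
    (hw : ∀ t ∈ s, w * 1 ⊗ₜ t ∈ colonTensor J c S A) :
    ∃ X : Subalgebra A₀ A, X.FG ∧ ∃ w' : X ⊗[A₀] S, tensorVal S X w' = w ∧
      ∀ t ∈ s, w' * 1 ⊗ₜ t ∈ colonTensor J c S X := by
  obtain ⟨X, w', rfl⟩ := (eventually_exists_tensorVal_eq w).exists
  have hmem : ∀ t ∈ s, ∀ᶠ Y : FGSubalgebra A₀ A in atTop, ∀ h : X.1 ≤ Y.1,
      tensorInclusion S h (w' * 1 ⊗ₜ t) ∈ colonTensor J c S Y.1 := fun t ht =>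
    eventually_tensorInclusion_mem_colonTensor (by simpa using hw t ht)
  obtain ⟨Y, hY, hXY⟩ :=
    (((eventually_all_finset s).2 hmem).and (eventually_ge_atTop X)).exists
  exact ⟨Y.1, Y.2, tensorInclusion S hXY w', tensorVal_tensorInclusion _ _,
    fun t ht => by simpa using hY t ht hXY⟩

end Descent

section ColonFlat

lemma colonBy_smul_top_le_of_flat {A M : Type*} [CommRing A] [AddCommGroup M] [Module A M]
    [Module.Flat A M] (J : Ideal A) (c : A) :
    colonBy (J • ⊤ : Submodule A M) c ≤ colonBy J c • ⊤ := by
  intro m hm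
  let f : A →ₗ[A] A ⧸ J := J.mkQ ∘ₗ LinearMap.lsmul A A c
  have exact_f : Function.Exact (colonBy J c).subtype f := by
    rw [LinearMap.exact_iff, LinearMap.ker_comp, Submodule.ker_mkQ, Submodule.range_subtype,
      colonBy]
  have hfm : f.rTensor M (1 ⊗ₜ m) = 0 := by
    have hf1 : f 1 = c • 1 := by
      rw [← map_one (Ideal.Quotient.mk J)]
      rfl
    rw [LinearMap.rTensor_tmul, hf1, ← TensorProduct.smul_tmul', ← TensorProduct.tmul_smul]
    exact quotient_one_tmul_eq_zero_iff.2 hm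
  obtain ⟨y, hy⟩ := (Module.Flat.rTensor_exact M exact_f _).1 hfm
  rw [← Ideal.subtype_rTensor_range]
  exact ⟨y, by rw [LinearMap.comp_apply, hy, LinearEquiv.coe_coe, TensorProduct.lid_tmul, one_smul]⟩

variable {A R : Type*} [CommRing A] [CommRing R] [Algebra A R] {T : Submonoid R} {J : Ideal A}
  {c : A}

lemma exists_mul_mem_of_flat_localization [Module.Flat A (Localization T)] {r : R}
    (hr : r ∈ colonBy (J • ⊤ : Submodule A R) c) :
    ∃ w ∈ T, w * r ∈ Ideal.map (algebraMap A R) (colonBy J c) := by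
  have hr' : algebraMap R (Localization T) r ∈
      colonBy (J • ⊤ : Submodule A (Localization T)) c := by
    rw [mem_colonBy, Ideal.smul_top_eq_map, Submodule.restrictScalars_mem] at hr ⊢
    rw [IsScalarTower.algebraMap_eq A R, ← Ideal.map_map]
    exact map_smul (IsScalarTower.toAlgHom A R (Localization T)) c r ▸ Ideal.mem_map_of_mem _ hr
  have hmem := colonBy_smul_top_le_of_flat J c hr'
  rwa [Ideal.smul_top_eq_map, Submodule.restrictScalars_mem, IsScalarTower.algebraMap_eq A R,
    ← Ideal.map_map, IsLocalization.algebraMap_mem_map_algebraMap_iff T] at hmem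

lemma exists_forall_mul_mem_of_flat_localization [Module.Flat A (Localization T)] {s : Finset R}
    (hs : ∀ r ∈ s, r ∈ colonBy (J • ⊤ : Submodule A R) c) :
    ∃ w ∈ T, ∀ r ∈ s, w * r ∈ Ideal.map (algebraMap A R) (colonBy J c) := by
  choose w hwT hw using fun r : s => exists_mul_mem_of_flat_localization (T := T) (hs r r.2)
  refine ⟨∏ r, w r, prod_mem fun r _ => hwT r, fun r hr => ?_⟩
  obtain ⟨d, hd⟩ := Finset.dvd_prod_of_mem w (Finset.mem_univ (⟨r, hr⟩ : s))
  rw [hd, mul_right_comm]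
  exact Ideal.mul_mem_right _ _ (hw ⟨r, hr⟩)

end ColonFlat

section HfpModel

variable {A B R R' : Type u} [CommRing A] [CommRing B] [CommRing R] [CommRing R'] [Algebra A B]
  [Algebra A R] [Algebra A R'] {I : Ideal A}

/-- `R` is a finitely presented `A`-algebra that has the `A`-algebra `B` as the Henselization of
`(R, I R)`. -/
def IsHfpModel (I : Ideal A) (B : Type u) [CommRing B] [Algebra A B] (R : Type u) [CommRing R]
    [Algebra A R] : Prop :=
  Algebra.FinitePresentation A R ∧ ∃ ρ : R →+* B, ρ.comp (algebraMap A R) = algebraMap A B ∧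
    IsHenselization (I.map (algebraMap A R)) ρ

lemma mem_oneAddSubmonoid_of_algEquiv (e : R ≃ₐ[A] R') {w : R}
    (hw : e w ∈ oneAddSubmonoid (I.map (algebraMap A R'))) :
    w ∈ oneAddSubmonoid (I.map (algebraMap A R)) := by
  rw [mem_oneAddSubmonoid] at hw ⊢
  have hmem := Ideal.mem_map_of_mem (e.symm : R' →+* R) hw
  rwa [Ideal.map_map, show (e.symm : R' →+* R).comp (algebraMap A R') = algebraMap A R from
    e.symm.toAlgHom.comp_algebraMap, ← map_one e, ← map_sub, RingHom.coe_coe,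
    e.symm_apply_apply] at hmem

namespace IsHfpModel

lemma away [Algebra R R'] [IsScalarTower A R R'] (h : IsHfpModel I B R) {w : R}
    (hw : w ∈ oneAddSubmonoid (I.map (algebraMap A R))) [IsLocalization.Away w R'] :
    IsHfpModel I B R' := by
  obtain ⟨_, ρ, hρ, hB⟩ := h
  let _ : Algebra R B := ρ.toAlgebra
  have := hB.1
  let ρ' : R' →+* B := IsLocalization.Away.lift w (isUnit_algebraMap_of_mem_oneAddSubmonoid hw)
  have hρ' : ρ'.comp (algebraMap R R') = ρ := IsLocalization.Away.lift_comp w _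
  let _ : Algebra R' B := ρ'.toAlgebra
  have : IsScalarTower R R' B := .of_algebraMap_eq' hρ'.symm
  have : Algebra.FinitePresentation R R' := IsLocalization.Away.finitePresentation w
  refine ⟨Algebra.FinitePresentation.trans A R R', ρ', ?_, ?_⟩
  · rw [IsScalarTower.algebraMap_eq A R R', ← RingHom.comp_assoc, hρ', hρ]
  · rw [IsScalarTower.algebraMap_eq A R R', ← Ideal.map_map]
    exact isHenselization_of_isLocalization hB (Submonoid.powers w) R'

lemma of_algEquiv (h : IsHfpModel I B R) (e : R ≃ₐ[A] R') : IsHfpModel I B R' := by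
  let _ : Algebra R R' := (e : R →+* R').toAlgebra
  have : IsScalarTower A R R' := .of_algebraMap_eq fun a => (e.commutes a).symm
  have := IsLocalization.away_of_isUnit_of_bijective R' (isUnit_one (M := R)) e.bijective
  exact h.away (one_mem (oneAddSubmonoid _))

lemma exists_forall_mul_mem [Module.Flat A B] (h : IsHfpModel I B R) {J : Ideal A} {c : A}
    {s : Finset R} (hs : ∀ r ∈ s, r ∈ colonBy (J • ⊤ : Submodule A R) c) :
    ∃ w ∈ oneAddSubmonoid (I.map (algebraMap A R)),
      ∀ r ∈ s, w * r ∈ Ideal.map (algebraMap A R) (colonBy J c) := by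
  obtain ⟨_, ρ, hρ, hB⟩ := h
  let _ : Algebra R B := ρ.toAlgebra
  have : IsScalarTower A R B := .of_algebraMap_eq' hρ.symm
  have := flat_localization_oneAddSubmonoid_of_isHenselization A hB
  exact exists_forall_mul_mem_of_flat_localization hs

lemma tensorProduct_away {A₀ S S' : Type u} [CommRing A₀] [CommRing S] [CommRing S'] [Algebra A₀ A]
    [Algebra A₀ S] (h : IsHfpModel I B (A ⊗[A₀] S)) {X : Subalgebra A₀ A} {w : X ⊗[A₀] S}
    (hw : tensorVal S X w ∈ oneAddSubmonoid (I.map (algebraMap A (A ⊗[A₀] S))))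
    [Algebra X S'] [Algebra (X ⊗[A₀] S) S'] [IsScalarTower X (X ⊗[A₀] S) S']
    [IsLocalization.Away w S'] : IsHfpModel I B (A ⊗[X] S') := by
  rw [← cancelBaseChange_one_tmul] at hw
  have h' : IsHfpModel I B (Localization.Away (1 ⊗ₜ w : A ⊗[X] (X ⊗[A₀] S))) :=
    (h.of_algEquiv (Algebra.TensorProduct.cancelBaseChange A₀ X A A S).symm).away
      (mem_oneAddSubmonoid_of_algEquiv _ hw)
  exact h'.of_algEquiv (IsLocalization.Away.tensorProductEquivTMulRight X A w S').symm

end IsHfpModel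

end HfpModel

lemma one_tmul_mem_colonBy {A A' M : Type*} [CommRing A] [CommRing A'] [Algebra A A']
    [AddCommGroup M] [Module A M] {J : Ideal A} {c : A} {m : M}
    (hm : m ∈ colonBy (J • ⊤ : Submodule A M) c) :
    (1 : A') ⊗ₜ[A] m ∈ colonBy
      (J.map (algebraMap A A') • ⊤ : Submodule A' (A' ⊗[A] M)) (algebraMap A A' c) := by
  rw [mem_colonBy, algebraMap_smul, ← TensorProduct.tmul_smul]
  refine Submodule.smul_induction_on (mem_colonBy.1 hm) (fun j hj m _ => ?_) fun x y hx hy => ?_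
  · rw [TensorProduct.tmul_smul, ← algebraMap_smul A' j (1 ⊗ₜ[A] m : A' ⊗[A] M)]
    exact Submodule.smul_mem_smul (Ideal.mem_map_of_mem _ hj) Submodule.mem_top
  · rw [TensorProduct.tmul_add]
    exact add_mem hx hy

section NoetherianModel

variable {A B : Type u} [CommRing A] [CommRing B] [Algebra A B] {I : Ideal A}

/-- A noetherian ring `base` mapping to `A` and a finite type algebra `ring` over it whose base
change to `A` has `B` as its Henselization along `I`. -/
structure NoetherianModel (I : Ideal A) (B : Type u) [CommRing B] [Algebra A B] where
  base : Type u
  ring : Type u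
  [commRingBase : CommRing base]
  [commRingRing : CommRing ring]
  [isNoetherianRing : IsNoetherianRing base]
  [algebra : Algebra base ring]
  [finiteType : Algebra.FiniteType base ring]
  [algebraBase : Algebra base A]
  isHfpModel : IsHfpModel I B (A ⊗[base] ring)

namespace NoetherianModel

attribute [instance] commRingBase commRingRing isNoetherianRing algebra finiteType algebraBase

/-- A change of noetherian models along which the relative flatness conditions persist. -/
def TransfersFlatness (M N : NoetherianModel I B) (φ : M.base →+* N.base) : Prop :=
  ∀ J c, IsFlatOn J c M.ring → IsFlatOn (J.map φ) (φ c) N.ring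

/-- Replacing the base by a finitely generated subalgebra `X` of `A` and inverting an element of
`X ⊗ ring` whose image in `A ⊗ ring` is congruent to `1` modulo `I`. -/
noncomputable def away (M : NoetherianModel I B) {X : Subalgebra M.base A} (hX : X.FG)
    (w : X ⊗[M.base] M.ring) (hw : tensorVal M.ring X w ∈
      oneAddSubmonoid (I.map (algebraMap A (A ⊗[M.base] M.ring)))) : NoetherianModel I B :=
  have : Algebra.FiniteType M.base X := X.fg_iff_finiteType.1 hX
  have : Algebra.FinitePresentation (X ⊗[M.base] M.ring) (Localization.Away w) :=
    IsLocalization.Away.finitePresentation w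
  { base := X
    ring := Localization.Away w
    isNoetherianRing := Algebra.FiniteType.isNoetherianRing M.base X
    finiteType := Algebra.FiniteType.trans (S := X ⊗[M.base] M.ring) inferInstance inferInstance
    isHfpModel := M.isHfpModel.tensorProduct_away hw }

lemma exists_fg_subalgebra_forall_mul_mem [Module.Flat A B] (M : NoetherianModel I B)
    (J : Ideal M.base) (c : M.base) :
    ∃ X : Subalgebra M.base A, X.FG ∧ ∃ w : X ⊗[M.base] M.ring,
      tensorVal M.ring X w ∈ oneAddSubmonoid (I.map (algebraMap A (A ⊗[M.base] M.ring))) ∧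
        ∀ t ∈ colonBy (J • ⊤ : Submodule M.base M.ring) c,
          w * 1 ⊗ₜ t ∈ colonTensor J c M.ring X := by
  classical
  have : IsNoetherianRing M.ring := Algebra.FiniteType.isNoetherianRing M.base M.ring
  let K : Ideal M.ring := colonBy (J.map (algebraMap M.base M.ring)) (algebraMap M.base M.ring c)
  have mem_K {t : M.ring} : t ∈ K ↔ t ∈ colonBy (J • ⊤ : Submodule M.base M.ring) c := by
    rw [mem_colonBy, mem_colonBy, Ideal.smul_top_eq_map, algebraMap_smul,
      Submodule.restrictScalars_mem]
  obtain ⟨s, hs⟩ := IsNoetherian.noetherian K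
  obtain ⟨w, hw, hws⟩ := M.isHfpModel.exists_forall_mul_mem
    (s := s.image (1 ⊗ₜ[M.base] · : M.ring → A ⊗[M.base] M.ring)) <|
      Finset.forall_mem_image.2 fun t ht =>
        one_tmul_mem_colonBy (mem_K.1 (hs ▸ Submodule.subset_span ht))
  obtain ⟨X, hX, w', rfl, hw's⟩ :=
    exists_fg_subalgebra_mul_mem_colonTensor fun t ht => hws _ (Finset.mem_image_of_mem _ ht)
  have hle : K ≤ Ideal.comap
      (Algebra.TensorProduct.includeRight : M.ring →ₐ[M.base] X ⊗[M.base] M.ring)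
      (colonBy (colonTensor J c M.ring X) w') := by
    rw [← hs]
    exact Submodule.span_le.2 hw's
  exact ⟨X, hX, w', hw, fun t ht => hle (mem_K.2 ht)⟩

lemma exists_transfersFlatness_isFlatOn_one [Module.Flat A B] (M : NoetherianModel I B)
    {J : Ideal M.base} {c : M.base} (hc : IsFlatOn (J ⊔ Ideal.span {c}) 1 M.ring)
    (hc' : IsFlatOn J c M.ring) :
    ∃ (N : NoetherianModel I B) (φ : M.base →+* N.base), TransfersFlatness M N φ ∧
      IsFlatOn (J.map φ) 1 N.ring := by
  obtain ⟨X, hX, w, hw, hwJ⟩ := M.exists_fg_subalgebra_forall_mul_mem J c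
  have : IsNoetherianRing X := (M.away hX w hw).isNoetherianRing
  refine ⟨M.away hX w hw, algebraMap M.base X,
    fun J' c' h => h.baseChange_away (S' := Localization.Away w) w,
    hc.one_baseChange_away (S' := Localization.Away w) w hc' fun t ht => ?_⟩
  rw [Ideal.smul_top_eq_map]
  exact hwJ t ht

theorem exists_transfersFlatness_isFlatOn_map_one [Module.Flat A B] (M : NoetherianModel I B)
    (J : Ideal M.base) : ∃ (N : NoetherianModel I B) (φ : M.base →+* N.base),
      TransfersFlatness M N φ ∧ IsFlatOn (J.map φ) 1 N.ring := by
  induction J using WellFoundedGT.induction with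
  | ind J ih =>
    rcases eq_or_ne J ⊤ with rfl | hJ
    · refine ⟨M, RingHom.id _, fun J' c' h => ?_, ?_⟩
      · rwa [Ideal.map_id]
      · rw [Ideal.map_id]
        exact .top _ _
    obtain ⟨c, hcJ, hc⟩ := exists_notMem_isFlatOn (R := M.ring) hJ
    have hlt : J < J ⊔ Ideal.span {c} :=
      left_lt_sup.2 fun h => hcJ (h (Ideal.mem_span_singleton_self c))
    obtain ⟨N, φ, hφ, hN⟩ := ih _ hlt
    rw [Ideal.map_sup, Ideal.map_span, Set.image_singleton] at hN
    obtain ⟨N', φ', hφ', hN'⟩ := N.exists_transfersFlatness_isFlatOn_one hN (hφ J c hc)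
    refine ⟨N', φ'.comp φ, fun J' c' h => ?_, ?_⟩
    · rw [← Ideal.map_map]
      exact hφ' _ _ (hφ _ _ h)
    · rwa [← Ideal.map_map]

lemma nonempty_of_isHfpModel {R : Type u} [CommRing R] [Algebra A R] (h : IsHfpModel I B R) :
    Nonempty (NoetherianModel I B) := by
  have := h.1
  let P := Algebra.Presentation.ofFinitePresentation A R
  have : Algebra.FiniteType ℤ P.Core := (Subalgebra.fg_iff_finiteType _).1
    ⟨P.finite_coeffs.toFinset, by rw [Set.Finite.coe_toFinset]; rfl⟩
  exact ⟨{
    base := P.Core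
    ring := P.ModelOfHasCoeffs P.Core
    isNoetherianRing := Algebra.FiniteType.isNoetherianRing ℤ P.Core
    isHfpModel := h.of_algEquiv (P.tensorModelOfHasCoeffsEquiv P.Core).symm }⟩

end NoetherianModel

end NoetherianModel

theorem exists_flat_finitePresentation_of_isHfp_flat_general
    {A B : Type u} [CommRing A] [CommRing B] [Algebra A B] (I : Ideal A)
    (hhfp : IsHfp (algebraMap A B) I) (hflat : Module.Flat A B) :
    ∃ (S : Type u) (_ : CommRing S) (_ : Algebra A S) (ρ : S →+* B),
      Algebra.FinitePresentation A S ∧ Module.Flat A S ∧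
      ρ.comp (algebraMap A S) = algebraMap A B ∧
      IsHenselization (I.map (algebraMap A S)) ρ := by
  obtain ⟨R, _, ψ, ρ, hψ, hρ, hB⟩ := hhfp
  let _ : Algebra A R := ψ.toAlgebra
  obtain ⟨M⟩ := NoetherianModel.nonempty_of_isHfpModel (R := R) ⟨hψ, ρ, hρ, hB⟩
  obtain ⟨N, φ, -, hN⟩ := M.exists_transfersFlatness_isFlatOn_map_one ⊥
  rw [Ideal.map_bot] at hN
  have : Module.Flat N.base N.ring := hN.flat
  obtain ⟨hS, σ, hσ, hσB⟩ := N.isHfpModel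
  exact ⟨A ⊗[N.base] N.ring, inferInstance, inferInstance, σ, hS, inferInstance, hσ, hσB⟩

/-- An hfp and flat algebra over a Henselian pair `(A, I)` is the Henselization of a flat,
finitely presented `A`-algebra. -/
theorem exists_flat_finitePresentation_of_isHfp_flat
    {A B : Type u} [CommRing A] [CommRing B] [Algebra A B]
    (I : Ideal A) [HenselianRing A I]
    (hhfp : IsHfp (algebraMap A B) I)
    (hflat : Module.Flat A B) :
    ∃ (S : Type u) (_ : CommRing S) (_ : Algebra A S) (ρ : S →+* B),
      Algebra.FinitePresentation A S ∧ Module.Flat A S ∧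
      ρ.comp (algebraMap A S) = algebraMap A B ∧
      IsHenselization (I.map (algebraMap A S)) ρ :=
  exists_flat_finitePresentation_of_isHfp_flat_general I hhfp hflat
end

section
/- Full faithfulness of reduction modulo I for h-étale algebras: let (A, I) be a Henselian pair and let B and B′ be A-algebras, each h-étale over A (i.e. each is a Henselization of the pair (R, I·R) for some étale A-algebra R). Then the natural reduction map from the set of A-algebra homomorphisms B → B′ to the set of A/I-algebra homomorphisms B/(I·B) → B′/(I·B′) is bijective. -/
universe u

/-!
The universal property of Henselizations reduces the theorem to lifting homomorphisms `R → C ⧸ J` to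
`R → C` for `R` étale over `A` and a Henselian pair `(C, J)`; base change to `C` reduces further to
`A = C`, i.e. to lifting a point `σ : R → A ⧸ J` of an étale `A`-algebra `R` to a section `R → A`.

Uniqueness: the diagonal idempotent of `R ⊗ R` gives an element that equalizes two lifts and is a
unit, because it is `1` modulo `J`.

Existence: modulo `J` the point `σ` is cut out by an element `e` of `R`. By Zariski's main theorem
`R` agrees near `σ` with a finite subalgebra `S`, so a multiple `b ∈ S` of `e` plays the same role
for `S`. By Cayley–Hamilton, `b` is a root of a monic polynomial that reduces to `(X - 1) * X ^ n`
modulo `J`. Hensel's lemma splits off the simple root, which turns `b` into an idempotent, and by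
Nakayama's lemma this idempotent generates a quotient of `A`. That quotient is an étale localization
of `R` whose kernel lies in `J`, hence it is `A` itself.
-/

lemma isUnit_of_quotientMk_eq_one {A : Type*} [CommRing A] {J : Ideal A}
    (hJ : J ≤ Ideal.jacobson ⊥) {a : A} (ha : Ideal.Quotient.mk J a = 1) : IsUnit a := by
  have := isLocalHom_of_le_jacobson_bot J hJ
  exact IsUnit.of_map (Ideal.Quotient.mk J) a (ha ▸ isUnit_one)

lemma map_algebraMap_le_ker {A R : Type*} [CommRing A] [CommRing R] [Algebra A R] {J : Ideal A}
    (σ : R →ₐ[A] A ⧸ J) : J.map (algebraMap A R) ≤ RingHom.ker σ :=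
  Ideal.map_le_iff_le_comap.mpr fun a ha ↦ by
    simpa using Ideal.Quotient.eq_zero_iff_mem.mpr ha

section CayleyHamilton

open Polynomial

variable {A M ι : Type*} [CommRing A] [AddCommGroup M] [Module A M] [Fintype ι] {v : ι → M}

lemma aeval_charpoly_eq_zero_of_represents [DecidableEq ι] {N : Matrix ι ι A} {φ : Module.End A M}
    (hv : Submodule.span A (Set.range v) = ⊤) (hN : N.Represents v φ) :
    aeval φ N.charpoly = 0 := by
  let N' : Matrix.isRepresentation A v := ⟨N, φ, hN⟩
  have hN' : aeval N' N.charpoly = 0 := by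
    ext1
    rw [aeval_subalgebra_coe, Matrix.aeval_self_charpoly, Subalgebra.coe_zero]
  rw [← Matrix.isRepresentation.eq_toEnd_of_represents A v hv N' hN, aeval_algHom_apply, hN',
    map_zero]

lemma exists_monic_aeval_eq_zero_of_sub_smul_mem (J : Ideal A) {φ : Module.End A M}
    (hv : Submodule.span A (Set.range v) = ⊤) (d : ι → A)
    (hφ : ∀ i, φ (v i) - d i • v i ∈ J • (⊤ : Submodule A M)) :
    ∃ f : A[X], f.Monic ∧ aeval φ f = 0 ∧
      f.map (Ideal.Quotient.mk J) = ∏ i, (X - C (Ideal.Quotient.mk J (d i))) := by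
  classical
  have hφ' : ∀ j, ∃ a : ι → A, (∀ i, a i ∈ J) ∧ ∑ i, a i • v i = φ (v j) - d j • v j := by
    intro j
    have hj := hφ j
    rw [← hv, Submodule.mem_ideal_smul_span_iff_exists_sum] at hj
    obtain ⟨a, haJ, ha⟩ := hj
    exact ⟨a, haJ, by rw [← ha, Finsupp.sum_fintype _ _ (by simp)]⟩
  choose a haJ ha using hφ'
  let N : Matrix ι ι A := Matrix.diagonal d + Matrix.of fun i j ↦ a j i
  have hN : N.Represents v φ := by
    rw [Matrix.represents_iff']
    intro j
    simp [N, add_smul, Finset.sum_add_distrib, ha, Matrix.diagonal_apply]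
  have hNJ : N.map (Ideal.Quotient.mk J) = Matrix.diagonal fun i ↦ Ideal.Quotient.mk J (d i) := by
    ext i j
    simp [N, Matrix.diagonal_apply, Ideal.Quotient.eq_zero_iff_mem.mpr (haJ j i),
      apply_ite (Ideal.Quotient.mk J)]
  exact ⟨N.charpoly, N.charpoly_monic, aeval_charpoly_eq_zero_of_represents hv hN, by
    rw [← Matrix.charpoly_map, hNJ, Matrix.charpoly_diagonal]⟩

end CayleyHamilton

section RankOneIdempotent

open Polynomial

variable {A S : Type*} [CommRing A] [CommRing S] [Algebra A S] {J : Ideal A}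

lemma exists_monic_aeval_eq_zero_of_mul_mem_map [Module.Finite A S] (σ : S →ₐ[A] A ⧸ J) {b : S}
    (hσb : σ b = 1) (hb : ∀ x, σ x = 0 → b * x ∈ J.map (algebraMap A S)) :
    ∃ (n : ℕ) (f : A[X]), f.Monic ∧ aeval b f = 0 ∧
      f.map (Ideal.Quotient.mk J) = (X - 1) * X ^ n := by
  obtain ⟨n, y, hy⟩ := Module.Finite.exists_fin (R := A) (M := S)
  choose c hc using fun i ↦ Ideal.Quotient.mk_surjective (σ (y i))
  have hyc : ∀ i, σ (y i - c i • b) = 0 := fun i ↦ by simp [hσb, hc, Algebra.smul_def]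
  let v : Option (Fin n) → S := fun o ↦ o.elim b fun i ↦ y i - c i • b
  have hv : Submodule.span A (Set.range v) = ⊤ := by
    rw [eq_top_iff, ← hy, Submodule.span_le]
    rintro _ ⟨i, rfl⟩
    rw [← sub_add_cancel (y i) (c i • b)]
    exact add_mem (Submodule.subset_span ⟨some i, rfl⟩)
      (Submodule.smul_mem _ _ (Submodule.subset_span ⟨none, rfl⟩))
  obtain ⟨f, hf, hfb, hfJ⟩ := exists_monic_aeval_eq_zero_of_sub_smul_mem J
    (φ := Algebra.lmul A S b) hv (fun o ↦ o.elim 1 0) (by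
      rw [Ideal.smul_top_eq_map]
      rintro (_ | i)
      · simpa [v, mul_sub] using hb (b - 1) (by simp [hσb])
      · simpa [v] using hb _ (hyc i))
  refine ⟨n, f, hf, ?_, by simpa [Fintype.prod_option] using hfJ⟩
  rw [aeval_algHom_apply] at hfb
  simpa using LinearMap.congr_fun hfb 1

lemma exists_eq_X_sub_C_mul_of_map_eq [HenselianRing A J] {f : A[X]} (hf : f.Monic) {a₀ : A}
    {g : (A ⧸ J)[X]} (hfJ : f.map (Ideal.Quotient.mk J) = (X - C (Ideal.Quotient.mk J a₀)) * g)
    (hg : IsUnit (g.eval (Ideal.Quotient.mk J a₀))) :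
    ∃ (a : A) (k : A[X]), Ideal.Quotient.mk J a = Ideal.Quotient.mk J a₀ ∧ f = (X - C a) * k ∧
      k.map (Ideal.Quotient.mk J) = g := by
  obtain ⟨a, hfa, haJ⟩ := HenselianRing.is_henselian (I := J) f hf a₀
    (by rw [← Ideal.Quotient.eq_zero_iff_mem, ← eval_map_apply, hfJ]; simp)
    (by rw [← eval_map_apply, ← derivative_map, hfJ]; simpa using hg)
  have ha : Ideal.Quotient.mk J a = Ideal.Quotient.mk J a₀ := Ideal.Quotient.eq.mpr haJ
  obtain ⟨k, rfl⟩ := dvd_iff_isRoot.mpr hfa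
  refine ⟨a, k, ha, rfl, (monic_X_sub_C (Ideal.Quotient.mk J a₀)).isRegular.left ?_⟩
  simpa [ha] using hfJ

lemma aeval_mul_eq_eval_smul {b s : S} {a : A} (h : b * s = a • s) (p : A[X]) :
    aeval b p * s = p.eval a • s := by
  induction p using Polynomial.induction_on' with
  | add p q hp hq => simp [add_mul, add_smul, hp, hq]
  | monomial n c =>
    have hpow : b ^ n * s = a ^ n • s := by
      induction n with
      | zero => simp
      | succ n ih => rw [pow_succ, mul_assoc, h, mul_smul_comm, ih, smul_smul, ← pow_succ']
    simp [aeval_monomial, hpow, ← Algebra.smul_def, smul_smul]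

lemma exists_isIdempotentElem_of_mul_mem_map [HenselianRing A J] [Module.Finite A S]
    (σ : S →ₐ[A] A ⧸ J) {b : S} (hσb : σ b = 1)
    (hb : ∀ x, σ x = 0 → b * x ∈ J.map (algebraMap A S)) :
    ∃ (e : S) (a : A), IsIdempotentElem e ∧ σ e = 1 ∧ Ideal.Quotient.mk J a = 1 ∧
      b * e = a • e := by
  obtain ⟨n, f, hf, hfb, hfJ⟩ := exists_monic_aeval_eq_zero_of_mul_mem_map σ hσb hb
  obtain ⟨a, k, ha, rfl, hk⟩ :=
    exists_eq_X_sub_C_mul_of_map_eq (a₀ := 1) hf (by simpa using hfJ) (by simp)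
  rw [map_one] at ha
  have hka : Ideal.Quotient.mk J (k.eval a) = 1 := by rw [← eval_map_apply, hk, ha]; simp
  have hbk : b * aeval b k = a • aeval b k := by
    simpa [sub_mul, sub_eq_zero, Algebra.smul_def] using hfb
  have hσk : σ (aeval b k) = 1 := by
    rw [← aeval_algHom_apply, hσb, ← aeval_map_algebraMap (A ⧸ J), Ideal.Quotient.algebraMap_eq, hk]
    simp
  obtain ⟨u, hu⟩ := (isUnit_of_quotientMk_eq_one HenselianRing.jac hka).exists_left_inv
  have hσu : Ideal.Quotient.mk J u = 1 := by
    simpa [hka] using congrArg (Ideal.Quotient.mk J) hu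
  refine ⟨u • aeval b k, a, ?_, ?_, ha, ?_⟩
  · rw [IsIdempotentElem, smul_mul_smul_comm, aeval_mul_eq_eval_smul hbk, smul_smul, mul_assoc, hu,
      mul_one]
  · simp [hσk, hσu, Algebra.smul_def]
  · rw [mul_smul_comm, hbk, smul_comm]

lemma mul_mem_span_singleton_of_mul_mem_map [Module.Finite A S] (hJ : J ≤ Ideal.jacobson ⊥)
    (σ : S →ₐ[A] A ⧸ J) {b e : S} {a : A}
    (hb : ∀ x, σ x = 0 → b * x ∈ J.map (algebraMap A S)) (ha : IsUnit a) (hbe : b * e = a • e)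
    (x : S) : e * x ∈ Submodule.span A {e} := by
  let eS : Submodule A S := (⊤ : Submodule A S).map (LinearMap.mulLeft A e)
  suffices eS ≤ Submodule.span A {e} from this ⟨x, trivial, rfl⟩
  refine Submodule.le_of_le_smul_of_le_jacobson_bot (Module.Finite.fg_top.map _) hJ ?_
  rintro _ ⟨y, -, rfl⟩
  obtain ⟨c, hc⟩ := Ideal.Quotient.mk_surjective (σ y)
  obtain ⟨a', ha'⟩ := ha.exists_left_inv
  have hbyc : e * (b * (y - algebraMap A S c)) ∈ J • eS := by
    rw [← Submodule.map_smul'', Ideal.smul_top_eq_map]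
    exact ⟨_, hb (y - algebraMap A S c) (by simp [hc]), rfl⟩
  have hey : e * y = c • e + a' • (e * (b * (y - algebraMap A S c))) := by
    rw [mul_left_comm, ← mul_assoc b e, hbe, smul_mul_assoc, smul_smul, ha', one_smul,
      Algebra.smul_def]
    ring
  rw [LinearMap.mulLeft_apply, hey]
  exact Submodule.add_mem_sup (Submodule.smul_mem _ _ (Submodule.mem_span_singleton_self e))
    (Submodule.smul_mem _ _ hbyc)

end RankOneIdempotent

lemma eventually_pow_mul_mem {M T : Type*} [Monoid M] [SetLike T M] [SubmonoidClass T M] {S : T}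
    {r x : M} {k : ℕ} (hr : r ∈ S) (hk : r ^ k * x ∈ S) : ∀ᶠ m in Filter.atTop, r ^ m * x ∈ S := by
  filter_upwards [Filter.eventually_ge_atTop k] with m hm
  rw [← Nat.sub_add_cancel hm, pow_add, mul_assoc]
  exact mul_mem (pow_mem hr _) hk

section ZariskiMain

variable {A R D : Type*} [CommRing A] [CommRing R] [CommRing D] [Algebra A R] [Algebra A D]
  (κ : R →ₐ[A] D)

lemma exists_isIntegral_forall_isIntegral_mul [Algebra.FiniteType A R] [Algebra.QuasiFinite A R]
    (hD : Function.Surjective (algebraMap A D)) (s : Finset R) :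
    ∃ r, IsIntegral A r ∧ κ r = 1 ∧ ∀ x ∈ s, IsIntegral A (r * x) := by
  let 𝔞 : Ideal (integralClosure A R) := (1 : Submodule (integralClosure A R) R).colon s
  have mem_𝔞 (t) : t ∈ 𝔞 ↔ ∀ x ∈ s, IsIntegral A (t * x) := by
    simp [𝔞, Submodule.mem_colon, Submodule.mem_one, Subalgebra.smul_def, mem_integralClosure_iff]
  let κ' : integralClosure A R →ₐ[A] D := κ.comp (integralClosure A R).val
  have hκ' : Function.Surjective κ' := fun z ↦
    (hD z).elim fun a ha ↦ ⟨algebraMap A _ a, by rw [← ha, κ'.commutes]⟩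
  suffices 𝔞.map κ' = ⊤ by
    obtain ⟨t, ht, ht1⟩ := (Ideal.mem_map_iff_of_surjective κ' hκ').mp
      ((Ideal.eq_top_iff_one _).mp this)
    exact ⟨t, t.2, ht1, (mem_𝔞 t).mp ht⟩
  by_contra hne
  obtain ⟨m, hm, h𝔞m⟩ := Ideal.exists_le_maximal _ hne
  have := hm.isPrime
  obtain ⟨r, hrm, hr, hrx⟩ := Algebra.zariskisMainProperty_iff.mp
    (Algebra.ZariskisMainProperty.of_finiteType (R := A) (m.comap κ))
  have hrs : ∀ᶠ k in Filter.atTop, ∀ x ∈ s, IsIntegral A (r ^ k * x) :=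
    (Filter.eventually_all_finset s).mpr fun x _ ↦ (hrx x).elim fun k hk ↦
      eventually_pow_mul_mem (S := integralClosure A R) hr hk
  obtain ⟨k, hk⟩ := hrs.exists
  have hrk : κ r ^ k ∈ m := by
    rw [← map_pow]
    exact h𝔞m (Ideal.mem_map_of_mem κ' ((mem_𝔞 ⟨r ^ k, hr.pow k⟩).mpr hk))
  exact hrm (this.mem_of_pow_mem k hrk)

lemma exists_subalgebra_finite_forall_pow_mul_mem [Algebra.FiniteType A R]
    [Algebra.QuasiFinite A R] (hD : Function.Surjective (algebraMap A D)) :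
    ∃ (S : Subalgebra A R) (r : R), Module.Finite A S ∧ r ∈ S ∧ κ r = 1 ∧
      ∀ x, ∃ k : ℕ, r ^ k * x ∈ S := by
  obtain ⟨s, hs⟩ := Algebra.FiniteType.out (R := A) (A := R)
  obtain ⟨r, hr, hκr, hrs⟩ := exists_isIntegral_forall_isIntegral_mul κ hD s
  let S := Algebra.adjoin A (insert r ((r * ·) '' s))
  have hrS : r ∈ S := Algebra.subset_adjoin (Set.mem_insert r _)
  refine ⟨S, r, Module.Finite.iff_fg.mpr <|
    fg_adjoin_of_finite ((s.finite_toSet.image _).insert r) ?_, hrS, hκr, ?_⟩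
  · rintro _ (rfl | ⟨x, hx, rfl⟩)
    exacts [hr, hrs x hx]
  · have hsat : S.saturation (.powers r) (Submonoid.powers_le.mpr hrS) = ⊤ := by
      rw [eq_top_iff, ← hs, Algebra.adjoin_le_iff]
      exact fun x hx ↦ ⟨r, Submonoid.mem_powers r, Algebra.subset_adjoin (.inr ⟨x, hx, rfl⟩)⟩
    intro x
    obtain ⟨_, ⟨k, rfl⟩, hk⟩ := hsat.ge (Algebra.mem_top (x := x))
    exact ⟨k, hk⟩

end ZariskiMain

section Diagonal

variable {A B R : Type*} [CommRing A] [CommRing B] [CommRing R] [Algebra A B] [Algebra A R]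
  [Algebra.FormallyUnramified A R] [Algebra.EssFiniteType A R]

lemma exists_sub_one_mem_span_forall_mul_eq (f g : R →ₐ[A] B) :
    ∃ u : B, u - 1 ∈ Ideal.span (Set.range fun x ↦ f x - g x) ∧ ∀ x, f x * u = g x * u := by
  obtain ⟨t, ht, ht1⟩ := Algebra.FormallyUnramified.iff_exists_tensorProduct.mp
    (inferInstance : Algebra.FormallyUnramified A R)
  let F := Algebra.TensorProduct.lift f g fun _ _ ↦ Commute.all _ _
  refine ⟨F t, ?_, fun x ↦ ?_⟩
  · let π := Ideal.Quotient.mkₐ A (Ideal.span (Set.range fun x ↦ f x - g x))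
    have hπ : π.comp f = π.comp g := AlgHom.ext fun x ↦
      Ideal.Quotient.eq.mpr (Ideal.subset_span (Set.mem_range_self x))
    have hF : π.comp F = (π.comp f).comp (Algebra.TensorProduct.lmul' A) := by
      ext x
      · simp [F]
      · simpa [F] using (DFunLike.congr_fun hπ x).symm
    exact Ideal.Quotient.eq.mp (by simpa [π, ht1] using DFunLike.congr_fun hF t)
  · have hx := congrArg F (ht x)
    simp only [map_mul, map_sub, map_zero, F, Algebra.TensorProduct.lift_tmul, map_one, one_mul,
      mul_one] at hx
    linear_combination -hx

lemma algHom_ext_of_sub_mem_jacobson {f g : R →ₐ[A] B}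
    (h : ∀ x, f x - g x ∈ Ideal.jacobson (⊥ : Ideal B)) : f = g := by
  obtain ⟨u, hu, hfg⟩ := exists_sub_one_mem_span_forall_mul_eq f g
  have hu' : u - 1 ∈ Ideal.jacobson (⊥ : Ideal B) :=
    (Ideal.span_le.mpr (Set.range_subset_iff.mpr h)) hu
  have hunit : IsUnit u := by simpa using Ideal.mem_jacobson_bot.mp hu' 1
  exact AlgHom.ext fun x ↦ hunit.mul_right_cancel (hfg x)

variable {J : Ideal A} (σ : R →ₐ[A] A ⧸ J)

lemma exists_map_eq_one_forall_mul_mem_map :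
    ∃ e, σ e = 1 ∧ ∀ x, σ x = 0 → e * x ∈ J.map (algebraMap A R) := by
  let π := Ideal.Quotient.mkₐ A (J.map (algebraMap A R))
  let ι : A ⧸ J →ₐ[A] R ⧸ J.map (algebraMap A R) :=
    Ideal.quotientMapₐ _ (Algebra.ofId A R) Ideal.le_comap_map
  let σ' : R ⧸ J.map (algebraMap A R) →ₐ[A] A ⧸ J :=
    Ideal.Quotient.liftₐ _ σ (map_algebraMap_le_ker σ)
  have hσ' : ∀ z, σ' (ι z) = z := fun z ↦ by
    obtain ⟨a, rfl⟩ := Ideal.Quotient.mk_surjective z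
    exact σ.commutes a
  obtain ⟨u, hu, hπι⟩ := exists_sub_one_mem_span_forall_mul_eq π (ι.comp σ)
  obtain ⟨e, rfl⟩ := Ideal.Quotient.mk_surjective u
  refine ⟨e, ?_, fun x hx ↦ ?_⟩
  · have hker : Ideal.span (Set.range fun x ↦ π x - ι.comp σ x) ≤ RingHom.ker σ' := by
      rw [Ideal.span_le]
      rintro _ ⟨x, rfl⟩
      simp only [SetLike.mem_coe, RingHom.mem_ker, map_sub, AlgHom.comp_apply, hσ', sub_eq_zero]
      rfl
    have hσu := hker hu
    rwa [RingHom.mem_ker, map_sub, map_one, sub_eq_zero] at hσu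
  · rw [← Ideal.Quotient.eq_zero_iff_mem, map_mul, mul_comm]
    refine (hπι x).trans ?_
    rw [AlgHom.comp_apply, hx, map_zero, zero_mul]

end Diagonal

section Descent

variable {A R : Type*} [CommRing A] [CommRing R] [Algebra A R] {J : Ideal A} {S : Subalgebra A R}
  {r : R}

lemma eventually_pow_mul_mem_image_map (hr : r ∈ S) (hS : ∀ x, ∃ k : ℕ, r ^ k * x ∈ S) {z : R}
    (hz : z ∈ J.map (algebraMap A R)) :
    ∀ᶠ m in Filter.atTop, r ^ m * z ∈ S.val '' J.map (algebraMap A S) := by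
  rw [← Submodule.restrictScalars_mem A, ← Ideal.smul_top_eq_map] at hz
  induction hz using Submodule.smul_induction_on' with
  | smul a ha x _ =>
    obtain ⟨k, hk⟩ := hS x
    filter_upwards [eventually_pow_mul_mem hr hk] with m hm
    exact ⟨algebraMap A S a * ⟨r ^ m * x, hm⟩, Ideal.mul_mem_right _ _ (Ideal.mem_map_of_mem _ ha),
      by simp [Algebra.smul_def, mul_left_comm]⟩
  | add x _ y _ hx hy =>
    filter_upwards [hx, hy] with m ⟨x', hx', hxx'⟩ ⟨y', hy', hyy'⟩
    exact ⟨x' + y', add_mem hx' hy', by rw [map_add, hxx', hyy', mul_add]⟩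

lemma mul_mem_map_of_span_eq_top {S ι : Type*} [CommRing S] [Algebra A S] (σ : S →ₐ[A] A ⧸ J)
    {y : ι → S} (hy : Submodule.span A (Set.range y) = ⊤) {b : S} (hσb : σ b = 1) {c : ι → A}
    (hb : ∀ i, b * (y i - algebraMap A S (c i)) ∈ J.map (algebraMap A S)) {x : S} (hx : σ x = 0) :
    b * x ∈ J.map (algebraMap A S) := by
  let N : Submodule A S :=
    ((J.map (algebraMap A S)).restrictScalars A).comap (LinearMap.mulLeft A b)
  have hN : N ⊔ 1 = ⊤ := by
    rw [eq_top_iff, ← hy, Submodule.span_le]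
    rintro _ ⟨i, rfl⟩
    exact Submodule.mem_sup.mpr ⟨_, hb i, _, Submodule.algebraMap_mem (c i), sub_add_cancel _ _⟩
  obtain ⟨n, hn, _, ha, rfl⟩ := Submodule.mem_sup.mp (hN.ge (Submodule.mem_top (x := x)))
  obtain ⟨a, rfl⟩ := Submodule.mem_one.mp ha
  have hσn : σ n = 0 := by
    simpa [hσb] using map_algebraMap_le_ker σ hn
  have haJ : a ∈ J := by
    rw [← Ideal.Quotient.eq_zero_iff_mem]
    simpa [hσn] using hx
  rw [mul_add]
  exact add_mem hn (Ideal.mul_mem_left _ _ (Ideal.mem_map_of_mem _ haJ))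

lemma exists_mem_subalgebra_forall_mul_mem_map [Algebra.FormallyUnramified A R]
    [Algebra.EssFiniteType A R] (σ : R →ₐ[A] A ⧸ J) [Module.Finite A S] (hr : r ∈ S)
    (hσr : σ r = 1) (hS : ∀ x, ∃ k : ℕ, r ^ k * x ∈ S) :
    ∃ b : S, σ b = 1 ∧ ∀ x : S, σ x = 0 → b * x ∈ J.map (algebraMap A S) := by
  obtain ⟨e, hσe, he⟩ := exists_map_eq_one_forall_mul_mem_map σ
  obtain ⟨n, y, hy⟩ := Module.Finite.exists_fin (R := A) (M := S)
  choose c hc using fun i ↦ Ideal.Quotient.mk_surjective (σ (y i))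
  have hyc : ∀ i, e * (y i - algebraMap A R (c i)) ∈ J.map (algebraMap A R) := fun i ↦
    he _ (by simp [hc])
  obtain ⟨k, hk⟩ := hS e
  obtain ⟨m, hme, hmy⟩ := ((eventually_pow_mul_mem hr hk).and
    (Filter.eventually_all.mpr fun i ↦ eventually_pow_mul_mem_image_map hr hS (hyc i))).exists
  let b : S := ⟨r ^ m * e, hme⟩
  have hσb : σ b = 1 := by simp [b, hσr, hσe]
  have hb : ∀ i, b * (y i - algebraMap A S (c i)) ∈ J.map (algebraMap A S) := fun i ↦ by
    obtain ⟨w, hw, hwy⟩ := hmy i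
    have hbw : b * (y i - algebraMap A S (c i)) = w :=
      Subtype.ext (by simpa [b, mul_assoc] using hwy.symm)
    rwa [hbw]
  exact ⟨b, hσb, fun x hx ↦ mul_mem_map_of_span_eq_top (σ.comp S.val) hy hσb hb hx⟩

end Descent

section EtaleLift

variable {A R : Type*} [CommRing A] [CommRing R] [Algebra A R] {J : Ideal A}

lemma algebraMap_bijective_of_etale_of_surjective [Algebra.Etale A R]
    (hsurj : Function.Surjective (algebraMap A R))
    (hker : RingHom.ker (algebraMap A R) ≤ Ideal.jacobson ⊥) :
    Function.Bijective (algebraMap A R) := by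
  have hidem : IsIdempotentElem (RingHom.ker (algebraMap A R)) :=
    (Algebra.FormallyEtale.iff_of_surjective hsurj).mp inferInstance
  have hfg : (RingHom.ker (algebraMap A R)).FG :=
    Algebra.FinitePresentation.ker_fG_of_surjective (Algebra.ofId A R) hsurj
  have hbot : RingHom.ker (algebraMap A R) = ⊥ :=
    Submodule.eq_bot_of_le_smul_of_le_jacobson_bot _ _ hfg (by rw [smul_eq_mul, hidem]) hker
  exact ⟨(RingHom.injective_iff_ker_eq_bot _).mpr hbot, hsurj⟩

lemma algebraMap_localizationAway_surjective {e : R} (he : IsIdempotentElem e)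
    (heR : ∀ x, e * x ∈ Submodule.span A {e}) :
    Function.Surjective (algebraMap A (Localization.Away e)) := by
  intro z
  obtain ⟨x, rfl⟩ := IsLocalization.Away.algebraMap_surjective_of_isIdempotentElem e he z
  obtain ⟨a, ha⟩ := Submodule.mem_span_singleton.mp (heR x)
  have hunit : IsUnit (algebraMap R (Localization.Away e) e) :=
    IsLocalization.Away.algebraMap_isUnit e
  refine ⟨a, hunit.mul_left_cancel ?_⟩
  rw [← map_mul, ← ha, Algebra.smul_def, map_mul, mul_comm, ← IsScalarTower.algebraMap_apply]

lemma forall_mul_mem_span_singleton_of_subalgebra (σ : R →ₐ[A] A ⧸ J) (hJ : J ≤ Ideal.jacobson ⊥)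
    {S : Subalgebra A R} {r : R} (hr : r ∈ S) (hσr : σ r = 1) (hS : ∀ x, ∃ k : ℕ, r ^ k * x ∈ S)
    {e : S} (hσe : σ e = 1) (heS : ∀ x, e * x ∈ Submodule.span A {e}) (x : R) :
    (e : R) * x ∈ Submodule.span A {(e : R)} := by
  have heS' : ∀ y ∈ S, ∃ a : A, a • (e : R) = e * y := fun y hy ↦ by
    obtain ⟨a, ha⟩ := Submodule.mem_span_singleton.mp (heS ⟨y, hy⟩)
    exact ⟨a, congrArg Subtype.val ha⟩
  obtain ⟨k, hk⟩ := hS x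
  obtain ⟨a, ha⟩ := heS' _ (pow_mem hr k)
  obtain ⟨c, hc⟩ := heS' _ hk
  have hσa : Ideal.Quotient.mk J a = 1 := by
    simpa [Algebra.smul_def, hσe, hσr] using congrArg σ ha
  have hunit : IsUnit a := isUnit_of_quotientMk_eq_one hJ hσa
  rw [← Submodule.smul_mem_iff_of_isUnit _ hunit, ← smul_mul_assoc, ha, mul_assoc, ← hc]
  exact Submodule.smul_mem _ _ (Submodule.mem_span_singleton_self _)

variable [Algebra.Etale A R] [HenselianRing A J] (σ : R →ₐ[A] A ⧸ J)

lemma exists_isIdempotentElem_forall_mul_mem_span :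
    ∃ e : R, IsIdempotentElem e ∧ σ e = 1 ∧ ∀ x, e * x ∈ Submodule.span A {e} := by
  have hJ : J ≤ Ideal.jacobson ⊥ := HenselianRing.jac
  obtain ⟨S, r, _, hr, hσr, hS⟩ :=
    exists_subalgebra_finite_forall_pow_mul_mem σ Ideal.Quotient.mk_surjective
  obtain ⟨b, hσb, hb⟩ := exists_mem_subalgebra_forall_mul_mem_map σ hr hσr hS
  obtain ⟨e, a, he, hσe, ha, hbe⟩ := exists_isIdempotentElem_of_mul_mem_map (σ.comp S.val) hσb hb
  have hunit : IsUnit a := isUnit_of_quotientMk_eq_one hJ ha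
  exact ⟨e, he.map S.val, hσe, forall_mul_mem_span_singleton_of_subalgebra σ hJ hr hσr hS hσe
    (mul_mem_span_singleton_of_mul_mem_map hJ (σ.comp S.val) hb hunit hbe)⟩

lemma exists_mkₐ_comp_eq_of_etale : ∃ τ : R →ₐ[A] A, (Ideal.Quotient.mkₐ A J).comp τ = σ := by
  obtain ⟨e, he, hσe, heR⟩ := exists_isIdempotentElem_forall_mul_mem_span σ
  have : Algebra.Etale R (Localization.Away e) := Algebra.Etale.of_isLocalizationAway e
  have : Algebra.Etale A (Localization.Away e) := Algebra.Etale.comp A R _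
  let σe : Localization.Away e →ₐ[A] A ⧸ J :=
    IsLocalization.liftAlgHom (M := .powers e) (f := σ) (by rintro ⟨_, k, rfl⟩; simp [hσe])
  have hσe_apply : ∀ x, σe (algebraMap R _ x) = σ x := fun x ↦ IsLocalization.lift_eq _ x
  have hker : RingHom.ker (algebraMap A (Localization.Away e)) ≤ J := fun a ha ↦ by
    rw [← Ideal.Quotient.eq_zero_iff_mem, ← Ideal.Quotient.algebraMap_eq, ← σe.commutes,
      RingHom.mem_ker.mp ha, map_zero]
  let E : A ≃ₐ[A] Localization.Away e := AlgEquiv.ofBijective (Algebra.ofId A _)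
    (algebraMap_bijective_of_etale_of_surjective (algebraMap_localizationAway_surjective he heR)
      (hker.trans HenselianRing.jac))
  have hE : ∀ z, Ideal.Quotient.mk J (E.symm z) = σe z := fun z ↦ by
    obtain ⟨a, rfl⟩ := E.surjective z
    rw [E.symm_apply_apply]
    exact (σe.commutes a).symm
  exact ⟨E.symm.toAlgHom.comp (IsScalarTower.toAlgHom A R _), AlgHom.ext fun x ↦
    (hE _).trans (hσe_apply x)⟩

end EtaleLift

theorem etale_mkₐ_comp_bijective {A C R : Type*} [CommRing A] [CommRing C] [CommRing R]
    [Algebra A C] [Algebra A R] [Algebra.Etale A R] (J : Ideal C) [HenselianRing C J] :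
    Function.Bijective
      ((Ideal.Quotient.mkₐ A J).comp : (R →ₐ[A] C) → (R →ₐ[A] C ⧸ J)) := by
  refine ⟨fun f g hfg ↦ ?_, fun σ ↦ ?_⟩
  · exact algHom_ext_of_sub_mem_jacobson fun x ↦
      HenselianRing.jac (Ideal.Quotient.eq.mp (DFunLike.congr_fun hfg x))
  · obtain ⟨τ, hτ⟩ := exists_mkₐ_comp_eq_of_etale (R := TensorProduct A C R)
      (Algebra.TensorProduct.lift (Algebra.ofId C (C ⧸ J)) σ fun _ _ ↦ Commute.all _ _)
    refine ⟨(τ.restrictScalars A).comp Algebra.TensorProduct.includeRight, AlgHom.ext fun x ↦ ?_⟩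
    simpa using DFunLike.congr_fun hτ (1 ⊗ₜ[A] x)

namespace IsHenselization

variable {A : Type*} {R H C : Type u} [CommRing A] [CommRing R] [CommRing H] [CommRing C]
  [Algebra A R] [Algebra A H] [Algebra A C] {I : Ideal A} {ρ : R →ₐ[A] H} {J : Ideal C}
  [HenselianRing C J]

theorem comp_bijective (hρ : IsHenselization (I.map (algebraMap A R)) (ρ : R →+* H))
    (hIJ : I.map (algebraMap A C) ≤ J) :
    Function.Bijective fun g : H →ₐ[A] C ↦ g.comp ρ := by
  refine (Function.bijective_iff_existsUnique _).mpr fun f ↦ ?_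
  have hf : (I.map (algebraMap A R)).map (f : R →+* C) ≤ J := by
    rwa [Ideal.map_map, f.comp_algebraMap]
  obtain ⟨g, hg, huniq⟩ := hρ.2 C J inferInstance f hf
  let g' : H →ₐ[A] C :=
    { g with
      commutes' := fun a ↦ by
        rw [← ρ.commutes, ← f.commutes]
        exact DFunLike.congr_fun hg (algebraMap A R a) }
  refine ⟨g', AlgHom.ext fun x ↦ DFunLike.congr_fun hg x, fun g'' hg'' ↦ AlgHom.ext fun x ↦ ?_⟩
  exact DFunLike.congr_fun (huniq (g'' : H →+* C) (congrArg AlgHom.toRingHom hg'')) x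

end IsHenselization

namespace IsHEtale

variable {A B C : Type u} [CommRing A] [CommRing B] [CommRing C] [Algebra A B] [Algebra A C]
  {I : Ideal A}

lemma henselianRing (hB : IsHEtale (algebraMap A B) I) :
    HenselianRing B (I.map (algebraMap A B)) := by
  obtain ⟨R, _, _, ρ, _, hρ, hB⟩ := hB
  have hBI := hB.1
  rwa [Ideal.map_map, hρ] at hBI

theorem mkₐ_comp_bijective (hB : IsHEtale (algebraMap A B) I) (J : Ideal C) [HenselianRing C J]
    (hIJ : I.map (algebraMap A C) ≤ J) :
    Function.Bijective
      ((Ideal.Quotient.mkₐ A J).comp : (B →ₐ[A] C) → (B →ₐ[A] C ⧸ J)) := by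
  obtain ⟨R, _, _, ρ, _, hρ, hB⟩ := hB
  let ρ' : R →ₐ[A] B := { ρ with commutes' := DFunLike.congr_fun hρ }
  replace hB : IsHenselization (I.map (algebraMap A R)) (ρ' : R →+* B) := hB
  have hIJ' : I.map (algebraMap A (C ⧸ J)) ≤ ⊥ := by
    rw [← (Ideal.Quotient.mkₐ A J).comp_algebraMap, ← Ideal.map_map, ← Ideal.map_quotient_self J]
    exact Ideal.map_mono hIJ
  refine ((hB.comp_bijective hIJ').of_comp_iff' _).mp ?_
  exact (etale_mkₐ_comp_bijective J).comp (hB.comp_bijective hIJ)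

end IsHEtale

theorem reduction_bijective_of_isHEtale_general {A B B' : Type u} [CommRing A] [CommRing B]
    [CommRing B'] [Algebra A B] [Algebra A B'] (I : Ideal A) (J : Ideal B') [HenselianRing B' J]
    (hIJ : I.map (algebraMap A B') ≤ J) (hB : IsHEtale (algebraMap A B) I)
    (q : (B ⧸ I.map (algebraMap A B)) →+* B' ⧸ J)
    (hq : q.comp ((Ideal.Quotient.mk (I.map (algebraMap A B))).comp (algebraMap A B)) =
      (Ideal.Quotient.mk J).comp (algebraMap A B')) :
    ∃! g : B →ₐ[A] B', (Ideal.Quotient.mk J).comp g.toRingHom =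
      q.comp (Ideal.Quotient.mk (I.map (algebraMap A B))) := by
  let σ : B →ₐ[A] B' ⧸ J :=
    { q.comp (Ideal.Quotient.mk (I.map (algebraMap A B))) with
      commutes' := DFunLike.congr_fun hq }
  obtain ⟨g, hg, huniq⟩ := (hB.mkₐ_comp_bijective J hIJ).existsUnique σ
  exact ⟨g, congrArg AlgHom.toRingHom hg, fun g' hg' ↦ huniq g' (AlgHom.coe_ringHom_injective hg')⟩

/-- Full faithfulness of reduction mod `I` for h-étale algebras over a Henselian pair:
every `A/I`-algebra homomorphism `B/IB → B'/IB'` lifts uniquely to an `A`-algebra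
homomorphism `B → B'`. -/
theorem reduction_bijective_of_isHEtale
    {A B B' : Type u} [CommRing A] [CommRing B] [CommRing B']
    [Algebra A B] [Algebra A B']
    (I : Ideal A) [HenselianRing A I]
    (hB : IsHEtale (algebraMap A B) I)
    (hB' : IsHEtale (algebraMap A B') I) :
    ∀ q : (B ⧸ I.map (algebraMap A B)) →+* B' ⧸ I.map (algebraMap A B'),
      q.comp ((Ideal.Quotient.mk (I.map (algebraMap A B))).comp (algebraMap A B)) =
        (Ideal.Quotient.mk (I.map (algebraMap A B'))).comp (algebraMap A B') →
      ∃! g : B →ₐ[A] B',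
        (Ideal.Quotient.mk (I.map (algebraMap A B'))).comp g.toRingHom =
          q.comp (Ideal.Quotient.mk (I.map (algebraMap A B))) := by
  have := hB'.henselianRing
  exact reduction_bijective_of_isHEtale_general I _ le_rfl hB
end

section
/- Henselized polynomial rings in iterated variables: let (A, I) be a Henselian pair, let n, m be natural numbers, let P = A[X₁, …, Xₙ] be the polynomial ring in n variables, and let ρ : P → B exhibit B as a Henselization of the pair (P, I·P). Let Q = B[Y₁, …, Yₘ] be the polynomial ring in m variables over B and let σ : Q → C exhibit C as a Henselization of the pair (Q, I·Q). Then the composite ring homomorphism A[X₁, …, Xₙ, Y₁, …, Yₘ] → B[Y₁, …, Yₘ] → C (applying ρ to coefficients and then σ) exhibits C as a Henselization of the pair (A[X₁, …, Xₙ, Y₁, …, Yₘ], I·A[X₁, …, Xₙ, Y₁, …, Yₘ]). -/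
universe u

/-!
The universal property of a Henselization asks that every map to a Henselian pair extend uniquely.
Ring homomorphisms with this extension property include the isomorphisms and are stable under
composition and cobase change. The map `A[X, Y] → C` is the isomorphism `A[X, Y] ≃ A[X][Y]`,
followed by the base change `A[X][Y] → B[Y]` of the Henselization `A[X] → B`, followed by the
Henselization `B[Y] → C`, and its target is Henselian because that of the last map is.
-/

universe v w

/-- `φ` is orthogonal to Henselian pairs relative to `K`: every ring homomorphism from `(R, K)` to
a Henselian pair extends uniquely along `φ`. This is the universal property of a Henselization,
without the condition that the target be Henselian. -/
def IsHenselianOrthogonal {R S : Type u} [CommRing R] [CommRing S]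
    (K : Ideal R) (φ : R →+* S) : Prop :=
  ∀ (D : Type u) [CommRing D] (J : Ideal D), HenselianRing D J →
    ∀ f : R →+* D, K.map f ≤ J → ∃! g : S →+* D, g.comp φ = f

namespace IsHenselianOrthogonal

variable {R S T : Type u} [CommRing R] [CommRing S] [CommRing T] {K : Ideal R}

theorem of_ringEquiv (K : Ideal R) (e : R ≃+* S) : IsHenselianOrthogonal K (e : R →+* S) := by
  intro D _ J _ f _
  refine ⟨f.comp e.symm, by ext; simp, ?_⟩
  rintro g rfl
  ext; simp

theorem comp {φ : R →+* S} {ψ : S →+* T} (hφ : IsHenselianOrthogonal K φ)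
    (hψ : IsHenselianOrthogonal (K.map φ) ψ) : IsHenselianOrthogonal K (ψ.comp φ) := by
  intro D _ J hJ f hf
  obtain ⟨g, rfl, g_unique⟩ := hφ D J hJ f hf
  obtain ⟨h, rfl, h_unique⟩ := hψ D J hJ g (by rwa [Ideal.map_map])
  exact ⟨h, rfl, fun h' hh' ↦ h_unique h' (g_unique _ hh')⟩

theorem comp_isHenselization {φ : R →+* S} {ρ : S →+* T} (hφ : IsHenselianOrthogonal K φ)
    (hρ : IsHenselization (K.map φ) ρ) : IsHenselization K (ρ.comp φ) := by
  obtain ⟨henselian, ρ_orthogonal⟩ := hρ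
  rw [Ideal.map_map] at henselian
  exact ⟨henselian, hφ.comp ρ_orthogonal⟩

end IsHenselianOrthogonal

section Pushout

open CategoryTheory CommRingCat

variable {R S R' S' : Type u} [CommRing R] [CommRing S] [CommRing R'] [CommRing S']
  {φ : R →+* S} {α : R →+* R'} {β : S →+* S'} {φ' : R' →+* S'}

theorem existsUnique_ringHom_of_isPushout
    (sq : IsPushout (ofHom φ) (ofHom α) (ofHom β) (ofHom φ'))
    {D : Type u} [CommRing D] {g : S →+* D} {f : R' →+* D} (comm : g.comp φ = f.comp α) :
    ∃! d : S' →+* D, d.comp β = g ∧ d.comp φ' = f := by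
  have comm' : ofHom φ ≫ ofHom g = ofHom α ≫ ofHom f := by
    rw [← ofHom_comp, ← ofHom_comp, comm]
  refine ⟨(sq.desc _ _ comm').hom, ⟨congrArg Hom.hom (sq.inl_desc _ _ comm'),
    congrArg Hom.hom (sq.inr_desc _ _ comm')⟩, ?_⟩
  rintro d ⟨rfl, rfl⟩
  refine congrArg Hom.hom (sq.hom_ext (W := of D) (k := ofHom d) ?_ ?_)
  · rw [sq.inl_desc, ofHom_comp]
  · rw [sq.inr_desc, ofHom_comp]

theorem IsHenselianOrthogonal.of_isPushout {K : Ideal R} {L : Ideal R'}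
    (hφ : IsHenselianOrthogonal K φ)
    (sq : IsPushout (ofHom φ) (ofHom α) (ofHom β) (ofHom φ')) (hKL : K.map α ≤ L) :
    IsHenselianOrthogonal L φ' := by
  intro D _ J hJ f hf
  have hfα : K.map (f.comp α) ≤ J := by
    rw [← Ideal.map_map]
    exact (Ideal.map_mono hKL).trans hf
  obtain ⟨g, hg, g_unique⟩ := hφ D J hJ (f.comp α) hfα
  obtain ⟨d, ⟨-, hd⟩, d_unique⟩ := existsUnique_ringHom_of_isPushout sq hg
  refine ⟨d, hd, fun d' hd' ↦ d_unique d' ⟨g_unique _ ?_, hd'⟩⟩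
  calc (d'.comp β).comp φ = d'.comp (φ'.comp α) := congrArg d'.comp (congrArg Hom.hom sq.w)
    _ = f.comp α := congrArg (·.comp α) hd'

theorem isPushout_mvPolynomial_map {R S : Type (max u v)} [CommRing R] [CommRing S]
    (ι : Type v) (φ : R →+* S) :
    IsPushout (ofHom φ) (ofHom (MvPolynomial.C : R →+* MvPolynomial ι R))
      (ofHom (MvPolynomial.C : S →+* MvPolynomial ι S)) (ofHom (MvPolynomial.map φ)) := by
  let := φ.toAlgebra
  let : Algebra (MvPolynomial ι R) (MvPolynomial ι S) := MvPolynomial.algebraMvPolynomial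
  exact isPushout_of_isPushout R S (MvPolynomial ι R) (MvPolynomial ι S)

theorem IsHenselianOrthogonal.mvPolynomial_map {R S : Type (max u v)} [CommRing R] [CommRing S]
    {K : Ideal R} {φ : R →+* S} (hφ : IsHenselianOrthogonal K φ) (ι : Type v) :
    IsHenselianOrthogonal (K.map (MvPolynomial.C : R →+* MvPolynomial ι R))
      (MvPolynomial.map φ) :=
  hφ.of_isPushout (isPushout_mvPolynomial_map ι φ) le_rfl

end Pushout

/-- The isomorphism `A[X, Y] ≃ A[X][Y]`. Mathlib's `MvPolynomial.sumRingEquiv` takes the left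
summand as the outer variables, whereas here the right summand is outer, hence the swap. -/
noncomputable def iteratedPolynomialEquiv (A : Type*) [CommSemiring A] (ι κ : Type*) :
    MvPolynomial (ι ⊕ κ) A ≃+* MvPolynomial κ (MvPolynomial ι A) :=
  (MvPolynomial.renameEquiv A (Equiv.sumComm ι κ)).toRingEquiv.trans
    (MvPolynomial.sumRingEquiv A κ ι)

theorem iteratedPolynomialEquiv_comp_C (A : Type*) [CommSemiring A] (ι κ : Type*) :
    (iteratedPolynomialEquiv A ι κ).toRingHom.comp MvPolynomial.C =
      MvPolynomial.C.comp MvPolynomial.C := by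
  ext a
  simp [iteratedPolynomialEquiv]

theorem iteratedPolynomialEquiv_toRingHom (A : Type*) [CommSemiring A] (ι κ : Type*) :
    (iteratedPolynomialEquiv A ι κ).toRingHom =
      (MvPolynomial.sumToIter A κ ι).comp
        (MvPolynomial.rename (Sum.swap : ι ⊕ κ → κ ⊕ ι)).toRingHom := by
  refine MvPolynomial.ringHom_ext (fun a ↦ ?_) ?_
  · simp [iteratedPolynomialEquiv, MvPolynomial.sumToIter]
  · rintro (i | j) <;> simp [iteratedPolynomialEquiv, MvPolynomial.sumToIter]

theorem isHenselization_iterated_polynomial_general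
    {A B C : Type (max u v w)} [CommRing A] [CommRing B] [CommRing C]
    (I : Ideal A) (ι : Type v) (κ : Type w)
    (ρ : MvPolynomial ι A →+* B)
    (hρ : IsHenselization (I.map (MvPolynomial.C : A →+* MvPolynomial ι A)) ρ)
    (σ : MvPolynomial κ B →+* C)
    (hσ : IsHenselization
      (I.map (((MvPolynomial.C : B →+* MvPolynomial κ B).comp ρ).comp
        (MvPolynomial.C : A →+* MvPolynomial ι A))) σ) :
    IsHenselization
      (I.map (MvPolynomial.C : A →+* MvPolynomial (ι ⊕ κ) A))
      (σ.comp ((MvPolynomial.map ρ).comp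
        (iteratedPolynomialEquiv A ι κ).toRingHom)) := by
  set e : MvPolynomial (ι ⊕ κ) A →+* MvPolynomial κ (MvPolynomial ι A) :=
    (iteratedPolynomialEquiv A ι κ).toRingHom
  have map_e : (I.map MvPolynomial.C).map e = (I.map MvPolynomial.C).map MvPolynomial.C := by
    simp only [Ideal.map_map, e, iteratedPolynomialEquiv_comp_C]
  have map_ρ_C : (MvPolynomial.map ρ).comp (MvPolynomial.C (σ := κ)) = MvPolynomial.C.comp ρ :=
    RingHom.ext (MvPolynomial.map_C ρ)
  have e_orthogonal : IsHenselianOrthogonal (I.map MvPolynomial.C) e :=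
    .of_ringEquiv _ (iteratedPolynomialEquiv A ι κ)
  have ρ_orthogonal : IsHenselianOrthogonal ((I.map MvPolynomial.C).map e) (MvPolynomial.map ρ) :=
    map_e ▸ IsHenselianOrthogonal.mvPolynomial_map hρ.2 κ
  refine (e_orthogonal.comp ρ_orthogonal).comp_isHenselization ?_
  rwa [← Ideal.map_map, map_e, Ideal.map_map, map_ρ_C, Ideal.map_map]

/-- Henselized polynomial rings in iterated variables: if `B` is a Henselization of
`(A[X₁,…,Xₙ], I·A[X₁,…,Xₙ])` and `C` is a Henselization of `(B[Y₁,…,Yₘ], I·B[Y₁,…,Yₘ])`, then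
the composite `A[X₁,…,Xₙ,Y₁,…,Yₘ] → B[Y₁,…,Yₘ] → C` exhibits `C` as a Henselization of
`(A[X₁,…,Xₙ,Y₁,…,Yₘ], I·A[X₁,…,Xₙ,Y₁,…,Yₘ])`. -/
theorem isHenselization_iterated_polynomial
    {A B C : Type u} [CommRing A] [CommRing B] [CommRing C]
    (I : Ideal A) [HenselianRing A I] (n m : ℕ)
    (ρ : MvPolynomial (Fin n) A →+* B)
    (hρ : IsHenselization (I.map (MvPolynomial.C : A →+* MvPolynomial (Fin n) A)) ρ)
    (σ : MvPolynomial (Fin m) B →+* C)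
    (hσ : IsHenselization
      (I.map (((MvPolynomial.C : B →+* MvPolynomial (Fin m) B).comp ρ).comp
        (MvPolynomial.C : A →+* MvPolynomial (Fin n) A))) σ) :
    IsHenselization
      (I.map (MvPolynomial.C : A →+* MvPolynomial (Fin n ⊕ Fin m) A))
      (σ.comp ((MvPolynomial.map ρ).comp
        ((MvPolynomial.sumToIter A (Fin m) (Fin n)).comp
          (MvPolynomial.rename (Sum.swap : Fin n ⊕ Fin m → Fin m ⊕ Fin n)).toRingHom))) := by
  rw [← iteratedPolynomialEquiv_toRingHom]
  exact isHenselization_iterated_polynomial_general.{u, 0, 0} I (Fin n) (Fin m) ρ hρ σ hσ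
end
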